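/- For every k ∈ ℕ and every p ∈ [p_k, 1/2), the critical value q_c(p) of anisotropic bond percolation on the slab S^k is strictly positive. -/

import Mathlib

open MeasureTheory Set
open scoped ENNReal

namespace AnisoSlab

/-! ### A concrete construction of countable products of Bernoulli measures

The product Bernoulli measure on `ι → Bool` (each coordinate `i` open with
probability `P i`, independently) is realized as the pushforward of Lebesgue
measure on `[0,1)`: the binary digits of a uniform sample are i.i.d. fair
coins; regrouping them along a pairing function yields countably many
independent uniform samples, and comparing the `i`-th sample with `P i`
yields the desired independent Bernoulli coordinates. -/

/-- The `n`-th binary digit of `x` (digits after the binary point). -/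
noncomputable def binDigit (n : ℕ) (x : ℝ) : Bool :=
  decide (⌊x * 2 ^ (n + 1)⌋ % 2 = 1)

/-- Countably many independent uniform-`[0,1]` samples extracted from a single
uniform sample `x` on `[0,1)`, by regrouping its binary digits. -/
noncomputable def unifSample (i : ℕ) (x : ℝ) : ℝ :=
  ∑' n : ℕ, if binDigit (Nat.pair i n) x then ((2 : ℝ) ^ (n + 1))⁻¹ else 0

/-- The product Bernoulli measure on `ι → Bool`, coordinate `i` being `true`
with probability `P i`, independently over `i`. -/
noncomputable def bernoulliProduct {ι : Type*} [Encodable ι] (P : ι → ℝ) :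
    Measure (ι → Bool) :=
  Measure.map (fun x i => decide (unifSample (Encodable.encode i) x < P i))
    (volume.restrict (Set.Ico (0 : ℝ) 1))

/-! ### The slab `S^k` and anisotropic bond percolation on it -/

/-- Ambient vertices: `ℤ³`; the slab `S^k` uses those with third coordinate in `{0, …, k}`. -/
abbrev Vtx : Type := ℤ × ℤ × ℤ

/-- The three unit coordinate vectors. -/
def dvec : Fin 3 → Vtx
  | 0 => (1, 0, 0)
  | 1 => (0, 1, 0)
  | 2 => (0, 0, 1)

/-- A bond is indexed by its lower endpoint `v` and a direction `i`; it joins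
`v` to `v + dvec i`. Directions `0, 1` give radial (horizontal) bonds, and
direction `2` gives axial (vertical) bonds. -/
abbrev EdgeIdx : Type := Vtx × Fin 3

/-- A percolation configuration: each bond is open (`true`) or closed (`false`). -/
abbrev Config : Type := EdgeIdx → Bool

/-- `v` is a vertex of the slab `S^k`. -/
def InSlab (k : ℕ) (v : Vtx) : Prop := 0 ≤ v.2.2 ∧ v.2.2 ≤ k

/-- `(v, i)` is a bond of the slab `S^k` (both endpoints lie in the slab). -/
def IsEdge (k : ℕ) (e : EdgeIdx) : Prop := InSlab k e.1 ∧ InSlab k (e.1 + dvec e.2)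

/-- The measure `P_{p,q}` on configurations of `S^k`: each radial (horizontal)
bond is open with probability `p` and each axial (vertical) bond is open with
probability `q`, independently. -/
noncomputable def slabMeasure (k : ℕ) (p q : ℝ) : Measure Config :=
  bernoulliProduct (fun e => if e.2 = 2 then q else p)

/-- `x` and `y` are joined by an open bond of `S^k` in the configuration `ω`. -/
def OpenAdj (k : ℕ) (ω : Config) (x y : Vtx) : Prop :=
  ∃ i : Fin 3,
    (y = x + dvec i ∧ IsEdge k (x, i) ∧ ω (x, i) = true) ∨
    (x = y + dvec i ∧ IsEdge k (y, i) ∧ ω (y, i) = true)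

/-- The open cluster of the vertex `x` in the configuration `ω`. -/
def cluster (k : ℕ) (ω : Config) (x : Vtx) : Set Vtx :=
  {y | Relation.ReflTransGen (OpenAdj k ω) x y}

/-- The percolation function `θ(p,q) = P_{p,q}(0 ↔ ∞)`. -/
noncomputable def theta (k : ℕ) (p q : ℝ) : ℝ≥0∞ :=
  slabMeasure k p q {ω | (cluster k ω 0).Infinite}

/-- `p_k = 1 - (1/2)^{1/(k+1)}`, the horizontal critical value at `q = 1`. -/
noncomputable def pCrit (k : ℕ) : ℝ := 1 - (1 / 2 : ℝ) ^ ((1 : ℝ) / (k + 1))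

/-- The critical curve `q_c(p) = sup {q ∈ [0,1] : θ(p,q) = 0}`. -/
noncomputable def qc (k : ℕ) (p : ℝ) : ℝ :=
  sSup {q : ℝ | q ∈ Set.Icc (0 : ℝ) 1 ∧ theta k p q = 0}

/-- The critical curve `p_c(q) = sup {p ∈ [0,1] : θ(p,q) = 0}`. -/
noncomputable def pc (k : ℕ) (q : ℝ) : ℝ :=
  sSup {p : ℝ | p ∈ Set.Icc (0 : ℝ) 1 ∧ theta k p q = 0}


section PartA

/-! ### Finite product expectations -/
section Expect
set_option linter.unusedSectionVars false
variable {α β : Type*} [DecidableEq α] [DecidableEq β]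

/-- Expectation of `f` over a random subset of `F`, where `e` is kept with probability `P e`. -/
noncomputable def Ex (P : α → ℝ) (F : Finset α) (f : Finset α → ℝ) : ℝ :=
  ∑ A ∈ F.powerset, ((∏ e ∈ A, P e) * ∏ e ∈ F \ A, (1 - P e)) * f A

open Classical in
/-- Indicator of a proposition. -/
noncomputable def ind (q : Prop) : ℝ := if q then 1 else 0

lemma ind_true {q : Prop} (h : q) : ind q = 1 := by simp [ind, h]
lemma ind_false {q : Prop} (h : ¬ q) : ind q = 0 := by simp [ind, h]
lemma ind_nonneg (q : Prop) : 0 ≤ ind q := by unfold ind; split_ifs <;> norm_num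
lemma ind_le_one (q : Prop) : ind q ≤ 1 := by unfold ind; split_ifs <;> norm_num
lemma ind_mono {q r : Prop} (h : q → r) : ind q ≤ ind r := by
  by_cases hq : q
  · rw [ind_true hq, ind_true (h hq)]
  · rw [ind_false hq]; exact ind_nonneg _
lemma ind_and (q r : Prop) : ind (q ∧ r) = ind q * ind r := by
  by_cases hq : q <;> by_cases hr : r <;> simp [ind, hq, hr]
lemma ind_not (q : Prop) : ind (¬ q) = 1 - ind q := by
  by_cases hq : q <;> simp [ind, hq]
lemma ind_congr {q r : Prop} (h : q ↔ r) : ind q = ind r := by rw [propext h]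

/-- `f` depends only on the coordinates in `s`. -/
def Dep (f : Finset α → ℝ) (s : Set α) : Prop :=
  ∀ A B : Finset α, (∀ e ∈ s, e ∈ A ↔ e ∈ B) → f A = f B

lemma Ex_empty (P : α → ℝ) (f : Finset α → ℝ) : Ex P ∅ f = f ∅ := by simp [Ex]

lemma Ex_insert (P : α → ℝ) {a : α} {F : Finset α} (ha : a ∉ F) (f : Finset α → ℝ) :
    Ex P (insert a F) f = P a * Ex P F (fun A => f (insert a A)) + (1 - P a) * Ex P F f := by
  unfold Ex
  rw [Finset.sum_powerset_insert ha, Finset.mul_sum, Finset.mul_sum, add_comm]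
  congr 1
  · refine Finset.sum_congr rfl fun A hA => ?_
    have hAF := Finset.mem_powerset.1 hA
    have haA : a ∉ A := fun h => ha (hAF h)
    rw [Finset.prod_insert haA]
    have : insert a F \ insert a A = F \ A := by
      ext x; simp only [Finset.mem_sdiff, Finset.mem_insert]; grind
    rw [this]; ring
  · refine Finset.sum_congr rfl fun A hA => ?_
    have hAF := Finset.mem_powerset.1 hA
    have haA : a ∉ A := fun h => ha (hAF h)
    have : insert a F \ A = insert a (F \ A) := by
      ext x; simp only [Finset.mem_sdiff, Finset.mem_insert]; grind
    rw [this, Finset.prod_insert (by simp [ha])]; ring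

lemma Ex_congr (P : α → ℝ) {F : Finset α} {f g : Finset α → ℝ} (h : ∀ A ⊆ F, f A = g A) :
    Ex P F f = Ex P F g := by
  unfold Ex
  exact Finset.sum_congr rfl fun A hA => by rw [h A (Finset.mem_powerset.1 hA)]

lemma Ex_congr_P {P Q : α → ℝ} {F : Finset α} (f : Finset α → ℝ) (h : ∀ e ∈ F, P e = Q e) :
    Ex P F f = Ex Q F f := by
  unfold Ex
  refine Finset.sum_congr rfl fun A hA => ?_
  have hA := Finset.mem_powerset.1 hA
  have h1 : ∏ e ∈ A, P e = ∏ e ∈ A, Q e := Finset.prod_congr rfl fun e he => h e (hA he)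
  have h2 : ∏ e ∈ F \ A, (1 - P e) = ∏ e ∈ F \ A, (1 - Q e) :=
    Finset.prod_congr rfl fun e he => by rw [h e (Finset.mem_sdiff.1 he).1]
  rw [h1, h2]

lemma Ex_add (P : α → ℝ) (F : Finset α) (f g : Finset α → ℝ) :
    Ex P F (fun A => f A + g A) = Ex P F f + Ex P F g := by
  unfold Ex; rw [← Finset.sum_add_distrib]; exact Finset.sum_congr rfl fun _ _ => by ring

lemma Ex_sub (P : α → ℝ) (F : Finset α) (f g : Finset α → ℝ) :
    Ex P F (fun A => f A - g A) = Ex P F f - Ex P F g := by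
  unfold Ex; rw [← Finset.sum_sub_distrib]; exact Finset.sum_congr rfl fun _ _ => by ring

lemma Ex_mul_left (P : α → ℝ) (F : Finset α) (c : ℝ) (f : Finset α → ℝ) :
    Ex P F (fun A => c * f A) = c * Ex P F f := by
  unfold Ex; rw [Finset.mul_sum]; exact Finset.sum_congr rfl fun _ _ => by ring

lemma Ex_sum {ι : Type*} (P : α → ℝ) (F : Finset α) (s : Finset ι) (f : ι → Finset α → ℝ) :
    Ex P F (fun A => ∑ i ∈ s, f i A) = ∑ i ∈ s, Ex P F (f i) := by
  unfold Ex; rw [Finset.sum_comm]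
  exact Finset.sum_congr rfl fun _ _ => by rw [Finset.mul_sum]

lemma Ex_const (P : α → ℝ) (F : Finset α) (c : ℝ) : Ex P F (fun _ => c) = c := by
  induction F using Finset.induction_on with
  | empty => rw [Ex_empty]
  | insert a F ha ih => rw [Ex_insert P ha, ih]; ring

lemma Ex_nonneg {P : α → ℝ} (hP : ∀ e, P e ∈ Icc (0:ℝ) 1) {F : Finset α} {f : Finset α → ℝ}
    (hf : ∀ A ⊆ F, 0 ≤ f A) : 0 ≤ Ex P F f := by
  unfold Ex
  refine Finset.sum_nonneg fun A hA => mul_nonneg (mul_nonneg ?_ ?_)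
    (hf A (Finset.mem_powerset.1 hA))
  · exact Finset.prod_nonneg fun e _ => (hP e).1
  · exact Finset.prod_nonneg fun e _ => by linarith [(hP e).2]

lemma Ex_mono {P : α → ℝ} (hP : ∀ e, P e ∈ Icc (0:ℝ) 1) {F : Finset α} {f g : Finset α → ℝ}
    (h : ∀ A ⊆ F, f A ≤ g A) : Ex P F f ≤ Ex P F g := by
  have := Ex_nonneg hP (F := F) (f := fun A => g A - f A) (fun A hA => by linarith [h A hA])
  rw [Ex_sub] at this; linarith

lemma Ex_ind_le_one {P : α → ℝ} (hP : ∀ e, P e ∈ Icc (0:ℝ) 1) (F : Finset α)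
    (q : Finset α → Prop) : Ex P F (fun A => ind (q A)) ≤ 1 := by
  calc _ ≤ Ex P F (fun _ => 1) := Ex_mono hP fun A _ => ind_le_one _
    _ = 1 := Ex_const _ _ _

lemma Ex_ind_nonneg {P : α → ℝ} (hP : ∀ e, P e ∈ Icc (0:ℝ) 1) (F : Finset α)
    (q : Finset α → Prop) : 0 ≤ Ex P F (fun A => ind (q A)) :=
  Ex_nonneg hP fun _ _ => ind_nonneg _

lemma Ex_ind_not {P : α → ℝ} (F : Finset α) (q : Finset α → Prop) :
    Ex P F (fun A => ind (¬ q A)) = 1 - Ex P F (fun A => ind (q A)) := by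
  simp only [ind_not]; rw [Ex_sub, Ex_const]

lemma Dep.insert_eq {f : Finset α → ℝ} {s : Set α} (hf : Dep f s) {a : α} (ha : a ∉ s)
    (A : Finset α) : f (insert a A) = f A := by
  refine hf _ _ fun e he => ?_
  have : e ≠ a := fun h => ha (h ▸ he)
  simp [this]

lemma Dep.comp_insert {f : Finset α → ℝ} {s : Set α} (hf : Dep f s) (a : α) :
    Dep (fun A => f (insert a A)) s := by
  intro A B h
  refine hf _ _ fun e he => ?_
  simp [h e he]

lemma Dep.mono {f : Finset α → ℝ} {s t : Set α} (hf : Dep f s) (h : s ⊆ t) : Dep f t :=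
  fun A B hAB => hf A B fun e he => hAB e (h he)

lemma Dep.mul {f g : Finset α → ℝ} {s t : Set α} (hf : Dep f s) (hg : Dep g t) :
    Dep (fun A => f A * g A) (s ∪ t) := fun A B h => by
  have h1 := hf A B fun e he => h e (Or.inl he)
  have h2 := hg A B fun e he => h e (Or.inr he)
  simp only [h1, h2]

lemma dep_ind {q : Finset α → Prop} {s : Set α}
    (h : ∀ A B : Finset α, (∀ e ∈ s, e ∈ A ↔ e ∈ B) → q A → q B) : Dep (fun A => ind (q A)) s := by
  intro A B hAB
  exact ind_congr ⟨h A B hAB, h B A fun e he => (hAB e he).symm⟩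

lemma Ex_marg (P : α → ℝ) {F F' : Finset α} (hF : F ⊆ F') {f : Finset α → ℝ} {s : Set α}
    (hf : Dep f s) (hs : ∀ e ∈ F', e ∈ s → e ∈ F) : Ex P F' f = Ex P F f := by
  have key : ∀ G : Finset α, (∀ e ∈ G, e ∉ s ∧ e ∉ F) → Ex P (G ∪ F) f = Ex P F f := by
    intro G
    induction G using Finset.induction_on with
    | empty => simp
    | insert a G ha ih =>
      intro h
      have haF : a ∉ G ∪ F := by
        simp [ha, (h a (by simp)).2]
      rw [Finset.insert_union, Ex_insert P haF]
      have : (fun A => f (insert a A)) = f := by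
        funext A; exact hf.insert_eq (h a (by simp)).1 A
      rw [this, ih fun e he => h e (by simp [he])]; ring
  have h1 := key (F' \ F) (fun e he => by
    rw [Finset.mem_sdiff] at he
    exact ⟨fun hes => he.2 (hs e he.1 hes), he.2⟩)
  rwa [Finset.sdiff_union_of_subset hF] at h1

lemma Ex_indep (P : α → ℝ) (F : Finset α) {s t : Set α} (hst : Disjoint s t) :
    ∀ {f g : Finset α → ℝ}, Dep f s → Dep g t →
    Ex P F (fun A => f A * g A) = Ex P F f * Ex P F g := by
  induction F using Finset.induction_on with
  | empty => intro f g _ _; simp [Ex_empty]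
  | insert a F ha ih =>
    intro f g hf hg
    rw [Ex_insert P ha, Ex_insert P ha f, Ex_insert P ha g,
      ih (hf.comp_insert a) (hg.comp_insert a), ih hf hg]
    by_cases hs : a ∈ s
    · have ht : a ∉ t := fun h => Set.disjoint_left.1 hst hs h
      have : (fun A => g (insert a A)) = g := by
        funext A; exact hg.insert_eq ht A
      rw [this]; ring
    · have : (fun A => f (insert a A)) = f := by
        funext A; exact hf.insert_eq hs A
      rw [this]; ring

lemma Ex_mem (P : α → ℝ) {F : Finset α} {a : α} (ha : a ∈ F) :
    Ex P F (fun A => ind (a ∈ A)) = P a := by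
  have hd : Dep (fun A : Finset α => ind (a ∈ A)) {a} := dep_ind fun A B h hA => (h a rfl).1 hA
  rw [Ex_marg P (F := {a}) (by simpa using ha) hd (by simp),
    show ({a} : Finset α) = insert a ∅ from rfl, Ex_insert P (by simp), Ex_empty, Ex_empty]
  simp [ind]

lemma Ex_fkg {P : α → ℝ} (hP : ∀ e, P e ∈ Icc (0:ℝ) 1) (F : Finset α) :
    ∀ {f g : Finset α → ℝ}, Antitone f → Antitone g →
    Ex P F f * Ex P F g ≤ Ex P F (fun A => f A * g A) := by
  induction F using Finset.induction_on with
  | empty => intro f g _ _; simp [Ex_empty]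
  | insert a F ha ih =>
    intro f g hf hg
    have hf' : Antitone (fun A => f (insert a A)) :=
      fun A B h => hf (Finset.insert_subset_insert a h)
    have hg' : Antitone (fun A => g (insert a A)) :=
      fun A B h => hg (Finset.insert_subset_insert a h)
    rw [Ex_insert P ha f, Ex_insert P ha g, Ex_insert P ha]
    have h1 := ih hf' hg'
    have h0 := ih hf hg
    have hfl : Ex P F (fun A => f (insert a A)) ≤ Ex P F f :=
      Ex_mono hP fun A _ => hf (Finset.subset_insert a A)
    have hgl : Ex P F (fun A => g (insert a A)) ≤ Ex P F g :=
      Ex_mono hP fun A _ => hg (Finset.subset_insert a A)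
    obtain ⟨hp0, hp1⟩ := hP a
    generalize Ex P F (fun A => f (insert a A)) = f1 at *
    generalize Ex P F (fun A => g (insert a A)) = g1 at *
    generalize Ex P F f = f0 at *
    generalize Ex P F g = g0 at *
    have e1 := mul_le_mul_of_nonneg_left h1 hp0
    have e0 := mul_le_mul_of_nonneg_left h0 (sub_nonneg.2 hp1)
    have : 0 ≤ P a * (1 - P a) * ((f0 - f1) * (g0 - g1)) :=
      mul_nonneg (mul_nonneg hp0 (sub_nonneg.2 hp1))
        (mul_nonneg (sub_nonneg.2 hfl) (sub_nonneg.2 hgl))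
    nlinarith

lemma Ex_mono_P {P Q : α → ℝ} (hP : ∀ e, P e ∈ Icc (0:ℝ) 1) (hQ : ∀ e, Q e ∈ Icc (0:ℝ) 1)
    (hPQ : ∀ e, P e ≤ Q e) (F : Finset α) :
    ∀ {f : Finset α → ℝ}, Monotone f → Ex P F f ≤ Ex Q F f := by
  induction F using Finset.induction_on with
  | empty => intro f _; simp [Ex_empty]
  | insert a F ha ih =>
    intro f hf
    have hf' : Monotone (fun A => f (insert a A)) :=
      fun A B h => hf (Finset.insert_subset_insert a h)
    rw [Ex_insert P ha, Ex_insert Q ha]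
    have h1 := ih hf'
    have h0 := ih hf
    have hfl : Ex P F f ≤ Ex P F (fun A => f (insert a A)) :=
      Ex_mono hP fun A _ => hf (Finset.subset_insert a A)
    have e1 := mul_le_mul_of_nonneg_left h1 (hQ a).1
    have e0 := mul_le_mul_of_nonneg_left h0 (sub_nonneg.2 (hQ a).2)
    have e2 := mul_le_mul_of_nonneg_left hfl (sub_nonneg.2 (hPQ a))
    nlinarith

lemma Ex_insert_tol {P : α → ℝ} (hP : ∀ e, P e ∈ Icc (0:ℝ) 1) {F : Finset α} {a : α} (ha : a ∈ F)
    {f : Finset α → ℝ} (hf : ∀ A, 0 ≤ f A) :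
    P a * Ex P F (fun A => f (insert a A)) ≤ Ex P F f := by
  obtain ⟨G, haG, rfl⟩ : ∃ G, a ∉ G ∧ F = insert a G :=
    ⟨F.erase a, Finset.notMem_erase a F, (Finset.insert_erase ha).symm⟩
  rw [Ex_insert P haG, Ex_insert P haG]
  simp only [Finset.insert_idem]
  have := Ex_nonneg hP (F := G) (f := f) fun A _ => hf A
  have h2 := mul_nonneg (sub_nonneg.2 (hP a).2) this
  linarith

lemma Ex_union_tol {p : ℝ} (hp : p ∈ Icc (0:ℝ) 1) {F : Finset α} (D : Finset α) (hD : D ⊆ F) :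
    ∀ {f : Finset α → ℝ}, (∀ A, 0 ≤ f A) →
    p ^ D.card * Ex (fun _ => p) F (fun A => f (A ∪ D)) ≤ Ex (fun _ => p) F f := by
  induction D using Finset.induction_on with
  | empty => intro f _; simp
  | insert a D ha ih =>
    intro f hf
    have h1 := ih (fun e he => hD (by simp [he])) (f := fun A => f (insert a A)) (fun A => hf _)
    have h2 := Ex_insert_tol (P := fun _ => p) (fun _ => hp) (hD (Finset.mem_insert_self a D)) hf
    rw [Finset.card_insert_of_notMem ha, pow_succ]
    have h3 : Ex (fun _ => p) F (fun A => f (A ∪ insert a D)) =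
      Ex (fun _ => p) F (fun A => f (insert a (A ∪ D))) := by
      simp only [Finset.union_insert]
    rw [h3]
    have := mul_le_mul_of_nonneg_left h1 hp.1
    nlinarith

lemma Ex_map (P : β → ℝ) (σ : α ↪ β) (F : Finset α) :
    ∀ f : Finset β → ℝ, Ex P (F.map σ) f = Ex (fun a => P (σ a)) F (fun A => f (A.map σ)) := by
  induction F using Finset.induction_on with
  | empty => intro f; simp [Ex_empty]
  | insert a F ha ih =>
    intro f
    rw [Finset.map_insert, Ex_insert _ (by simpa using ha), Ex_insert _ ha, ih, ih]
    simp only [Finset.map_insert]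

lemma Ex_compl (P : α → ℝ) (F : Finset α) :
    ∀ f : Finset α → ℝ, Ex P F (fun A => f (F \ A)) = Ex (fun a => 1 - P a) F f := by
  induction F using Finset.induction_on with
  | empty => intro f; simp [Ex_empty]
  | insert a F ha ih =>
    intro f
    rw [Ex_insert _ ha, Ex_insert _ ha, ← ih, ← ih]
    have h1 : Ex P F (fun A => f (insert a F \ insert a A)) = Ex P F (fun A => f (F \ A)) := by
      refine Ex_congr P fun A hA => ?_
      congr 1; ext x; simp only [Finset.mem_sdiff, Finset.mem_insert]; grind
    have h2 : Ex P F (fun A => f (insert a F \ A)) = Ex P F (fun A => f (insert a (F \ A))) := by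
      refine Ex_congr P fun A hA => ?_
      congr 1; ext x; simp only [Finset.mem_sdiff, Finset.mem_insert]; grind
    rw [h1, h2]; ring

lemma Ex_zero {P : α → ℝ} {F F' : Finset α} (hF : F ⊆ F') (h0 : ∀ e ∈ F' \ F, P e = 0)
    (f : Finset α → ℝ) : Ex P F' f = Ex P F f := by
  have key : ∀ G : Finset α, (∀ e ∈ G, P e = 0 ∧ e ∉ F) → Ex P (G ∪ F) f = Ex P F f := by
    intro G
    induction G using Finset.induction_on with
    | empty => simp
    | insert a G ha ih =>
      intro h
      have haF : a ∉ G ∪ F := by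
        simp [ha, (h a (by simp)).2]
      rw [Finset.insert_union, Ex_insert P haF, (h a (by simp)).1,
        ih fun e he => h e (by simp [he])]; ring
  have h1 := key (F' \ F) (fun e he => ⟨h0 e he, (Finset.mem_sdiff.1 he).2⟩)
  rwa [Finset.sdiff_union_of_subset hF] at h1

lemma Ex_continuous {P : ℝ → α → ℝ} (hP : ∀ e, Continuous fun q => P q e) (F : Finset α)
    (f : Finset α → ℝ) : Continuous fun q => Ex (P q) F f := by
  unfold Ex
  refine continuous_finsetSum _ fun A _ => ?_
  refine Continuous.mul (Continuous.mul ?_ ?_) continuous_const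
  · exact continuous_finsetProd _ fun e _ => hP e
  · exact continuous_finsetProd _ fun e _ => continuous_const.sub (hP e)

lemma Ex_russo (p : ℝ) (F : Finset α) : ∀ f : Finset α → ℝ,
    HasDerivAt (fun p => Ex (fun _ => p) F f)
      (∑ e ∈ F, Ex (fun _ => p) F (fun A => f (insert e A) - f (A.erase e))) p := by
  induction F using Finset.induction_on with
  | empty => intro f; simp only [Ex_empty, Finset.sum_empty]; exact hasDerivAt_const _ _
  | insert a F ha ih =>
    intro f
    have h1 := ih (fun A => f (insert a A))
    have h0 := ih f
    have h := ((hasDerivAt_id p).mul h1).add (((hasDerivAt_id p).const_sub 1).mul h0)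
    have hfun : (fun p => Ex (fun _ => p) (insert a F) f) =
        ((fun p => id p * Ex (fun _ => p) F (fun A => f (insert a A))) +
          fun p => (1 - id p) * Ex (fun _ => p) F f) := by
      funext q; simp only [Pi.add_apply, id]; rw [Ex_insert _ ha]
    rw [hfun]
    refine h.congr_deriv ?_
    rw [Finset.sum_insert ha, Ex_insert _ ha]
    have e1 : Ex (fun _ => p) F (fun A => f (insert a (insert a A)) - f ((insert a A).erase a)) =
        Ex (fun _ => p) F (fun A => f (insert a A)) - Ex (fun _ => p) F f := by
      rw [← Ex_sub]; refine Ex_congr _ fun A hA => ?_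
      rw [Finset.insert_idem, Finset.erase_insert fun h => ha (hA h)]
    have e2 : Ex (fun _ => p) F (fun A => f (insert a A) - f (A.erase a)) =
        Ex (fun _ => p) F (fun A => f (insert a A)) - Ex (fun _ => p) F f := by
      rw [← Ex_sub]; refine Ex_congr _ fun A hA => ?_
      rw [Finset.erase_eq_of_notMem fun h => ha (hA h)]
    have e3 : ∑ e ∈ F, Ex (fun _ => p) (insert a F) (fun A => f (insert e A) - f (A.erase e)) =
        p * ∑ e ∈ F, Ex (fun _ => p) F
            (fun A => f (insert a (insert e A)) - f (insert a (A.erase e))) +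
        (1 - p) * ∑ e ∈ F, Ex (fun _ => p) F (fun A => f (insert e A) - f (A.erase e)) := by
      rw [Finset.mul_sum, Finset.mul_sum, ← Finset.sum_add_distrib]
      refine Finset.sum_congr rfl fun e he => ?_
      rw [Ex_insert _ ha]
      have hne : e ≠ a := fun h => ha (h ▸ he)
      congr 2
      refine Ex_congr _ fun A hA => ?_
      rw [Finset.insert_comm, Finset.erase_insert_of_ne hne.symm]
    rw [e1, e2, e3]
    simp only [id]
    ring

end Expect

end PartA

section PartB

/-! ### Connectivity in finite edge configurations -/
section Connectivity
set_option linter.unusedSectionVars false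
variable {V : Type*} [DecidableEq V]

/-- `x` and `y` are joined by a path of edges of `ω`. -/
def Conn (ω : Finset (Sym2 V)) (x y : V) : Prop :=
  Relation.ReflTransGen (fun a b => s(a, b) ∈ ω) x y

/-- `x` is joined to the set `T`. -/
def Reach (ω : Finset (Sym2 V)) (T : Set V) (x : V) : Prop := ∃ t ∈ T, Conn ω x t

open Classical in
/-- Edges of `ω` with both endpoints in `S`. -/
noncomputable def res (ω : Finset (Sym2 V)) (S : Set V) : Finset (Sym2 V) :=
  ω.filter (fun e => ∀ v ∈ e, v ∈ S)

lemma mem_res {ω : Finset (Sym2 V)} {S : Set V} {e : Sym2 V} :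
    e ∈ res ω S ↔ e ∈ ω ∧ ∀ v ∈ e, v ∈ S := by simp [res]

lemma mk_mem_res {ω : Finset (Sym2 V)} {S : Set V} {x y : V} :
    s(x, y) ∈ res ω S ↔ s(x, y) ∈ ω ∧ x ∈ S ∧ y ∈ S := by simp [res]

lemma res_subset (ω : Finset (Sym2 V)) (S : Set V) : res ω S ⊆ ω := fun _ h => (mem_res.1 h).1

lemma res_mono {ω ω' : Finset (Sym2 V)} (h : ω ⊆ ω') (S : Set V) : res ω S ⊆ res ω' S :=
  fun e he => mem_res.2 ⟨h (mem_res.1 he).1, (mem_res.1 he).2⟩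

lemma Conn.refl (ω : Finset (Sym2 V)) (x : V) : Conn ω x x := Relation.ReflTransGen.refl

lemma Conn.trans {ω : Finset (Sym2 V)} {x y z : V} (h : Conn ω x y) (h' : Conn ω y z) :
    Conn ω x z := Relation.ReflTransGen.trans h h'

lemma Conn.symm {ω : Finset (Sym2 V)} {x y : V} (h : Conn ω x y) : Conn ω y x := by
  induction h with
  | refl => exact Conn.refl _ _
  | tail _ hbc ih => exact Relation.ReflTransGen.head (by rw [Sym2.eq_swap]; exact hbc) ih

lemma Conn.mono {ω ω' : Finset (Sym2 V)} (h : ω ⊆ ω') {x y : V} (hc : Conn ω x y) :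
    Conn ω' x y := Relation.ReflTransGen.mono (fun _ _ hab => h hab) _ _ hc

lemma Conn.single {ω : Finset (Sym2 V)} {x y : V} (h : s(x, y) ∈ ω) : Conn ω x y :=
  Relation.ReflTransGen.single h

lemma Reach.mono {ω ω' : Finset (Sym2 V)} (h : ω ⊆ ω') {T : Set V} {x : V} (hc : Reach ω T x) :
    Reach ω' T x := by
  obtain ⟨t, ht, h'⟩ := hc; exact ⟨t, ht, h'.mono h⟩

lemma Conn.mem_of_res {ω : Finset (Sym2 V)} {S : Set V} {x y : V} (h : Conn (res ω S) x y)
    (hx : x ∈ S) : y ∈ S := by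
  induction h with
  | refl => exact hx
  | tail _ hbc _ => exact (mk_mem_res.1 hbc).2.2

/-- Last exit decomposition. -/
lemma Conn.exit {ω : Finset (Sym2 V)} {C : Set V} {o t : V} (h : Conn ω o t) (ho : o ∈ C)
    (ht : t ∉ C) : ∃ x ∈ C, ∃ y, y ∉ C ∧ s(x, y) ∈ ω ∧ Conn (res ω Cᶜ) y t := by
  have key : (Conn (res ω Cᶜ) o t ∧ o ∉ C) ∨
      ∃ x ∈ C, ∃ y, y ∉ C ∧ s(x, y) ∈ ω ∧ Conn (res ω Cᶜ) y t := by
    refine Relation.ReflTransGen.head_induction_on (motive := fun z _ =>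
      (Conn (res ω Cᶜ) z t ∧ z ∉ C) ∨
      ∃ x ∈ C, ∃ y, y ∉ C ∧ s(x, y) ∈ ω ∧ Conn (res ω Cᶜ) y t) h ?_ ?_
    · exact Or.inl ⟨Conn.refl _ _, ht⟩
    · intro a b hab _ ih
      rcases ih with ⟨h1, h2⟩ | h1
      · by_cases ha : a ∈ C
        · exact Or.inr ⟨a, ha, b, h2, hab, h1⟩
        · exact Or.inl ⟨Relation.ReflTransGen.head (mk_mem_res.2 ⟨hab, ha, h2⟩) h1, ha⟩
      · exact Or.inr h1
  rcases key with ⟨_, h2⟩ | h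
  · exact absurd ho h2
  · exact h

open Classical in
/-- The cluster of `o` inside `S`. -/
noncomputable def Cl (S : Finset V) (o : V) (ω : Finset (Sym2 V)) : Finset V :=
  S.filter (fun x => Conn (res ω S) o x)

lemma mem_Cl {S : Finset V} {o x : V} {ω : Finset (Sym2 V)} :
    x ∈ Cl S o ω ↔ x ∈ S ∧ Conn (res ω S) o x := by simp [Cl]

lemma Cl_subset (S : Finset V) (o : V) (ω : Finset (Sym2 V)) : Cl S o ω ⊆ S :=
  fun _ h => (mem_Cl.1 h).1

lemma dep_Cl (S : Finset V) (o : V) (ho : o ∈ S) (C : Finset V) :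
    Dep (fun ω => ind (Cl S o ω = C))
      {e : Sym2 V | (∀ v ∈ e, v ∈ S) ∧ ∃ v ∈ e, v ∈ C} := by
  refine dep_ind fun A B hAB hA => ?_
  have hoC : o ∈ C := hA ▸ mem_Cl.2 ⟨ho, Conn.refl _ _⟩
  have h1 : ∀ x, Conn (res A S) o x → Conn (res B S) o x ∧ Conn (res A S) o x := by
    intro x hx
    induction hx with
    | refl => exact ⟨Conn.refl _ _, Conn.refl _ _⟩
    | @tail b c hb hbc ih =>
      have hb' := mk_mem_res.1 hbc
      have hbC : b ∈ C := hA ▸ mem_Cl.2 ⟨hb'.2.1, hb⟩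
      refine ⟨ih.1.trans (Conn.single (mk_mem_res.2 ⟨(hAB _ ⟨?_, b, by simp, hbC⟩).1 hb'.1,
        hb'.2⟩)), ih.2.trans (Conn.single hbc)⟩
      intro v hv
      rcases Sym2.mem_iff.1 hv with rfl | rfl
      · exact hb'.2.1
      · exact hb'.2.2
  have h2 : ∀ x, Conn (res B S) o x → x ∈ C := by
    intro x hx
    induction hx with
    | refl => exact hoC
    | @tail b c hb hbc ih =>
      have hb' := mk_mem_res.1 hbc
      have hcA : Conn (res A S) o b := (mem_Cl.1 (hA ▸ ih : b ∈ Cl S o A)).2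
      rw [← hA]
      refine mem_Cl.2 ⟨hb'.2.2, hcA.trans (Conn.single (mk_mem_res.2
        ⟨(hAB _ ⟨?_, b, by simp, ih⟩).2 hb'.1, hb'.2⟩))⟩
      intro v hv
      rcases Sym2.mem_iff.1 hv with rfl | rfl
      · exact hb'.2.1
      · exact hb'.2.2
  ext x
  constructor
  · intro hx; exact h2 x (mem_Cl.1 hx).2
  · intro hx
    rw [← hA] at hx
    exact mem_Cl.2 ⟨(mem_Cl.1 hx).1, (h1 x (mem_Cl.1 hx).2).1⟩

lemma res_congr {A B : Finset (Sym2 V)} {S : Set V} {s : Set (Sym2 V)}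
    (h : ∀ e ∈ s, e ∈ A ↔ e ∈ B) (hs : ∀ e : Sym2 V, (∀ v ∈ e, v ∈ S) → e ∈ s) :
    res A S = res B S := by
  ext e
  rw [mem_res, mem_res]
  constructor
  · rintro ⟨h1, h2⟩; exact ⟨(h e (hs e h2)).1 h1, h2⟩
  · rintro ⟨h1, h2⟩; exact ⟨(h e (hs e h2)).2 h1, h2⟩

/-- Anything which is a function of `res ω S` depends only on edges inside `S`. -/
lemma dep_res (S : Set V) (f : Finset (Sym2 V) → ℝ) :
    Dep (fun ω => f (res ω S)) {e : Sym2 V | ∀ v ∈ e, v ∈ S} := by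
  intro A B h
  have : res A S = res B S := res_congr h fun e he => he
  simp only [this]

lemma simon_lieb {P : Sym2 V → ℝ} (hP : ∀ e, P e ∈ Icc (0:ℝ) 1) (F : Finset (Sym2 V))
    (S : Finset V) (o : V) (ho : o ∈ S) (T : Set V) (hT : ∀ t ∈ T, t ∉ S) (B : Finset (V × V))
    (hB : ∀ x ∈ S, ∀ y, y ∉ S → s(x, y) ∈ F → (x, y) ∈ B)
    (hB' : ∀ z ∈ B, z.1 ∈ S ∧ z.2 ∉ S) :
    Ex P F (fun ω => ind (Reach ω T o)) ≤
      ∑ z ∈ B, P s(z.1, z.2) * Ex P F (fun ω => ind (Conn (res ω S) o z.1)) *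
        Ex P F (fun ω => ind (Reach ω T z.2)) := by
  have hpt : ∀ ω ⊆ F, ind (Reach ω T o) ≤ ∑ z ∈ B, ∑ C ∈ S.powerset,
      ind (z.1 ∈ C) * (ind (Cl S o ω = C) * (ind (s(z.1, z.2) ∈ ω) *
        ind (Reach (res ω (C : Set V)ᶜ) T z.2))) := by
    intro ω hω
    have hnn : ∀ z ∈ B, ∀ C ∈ S.powerset, 0 ≤
      ind (z.1 ∈ C) * (ind (Cl S o ω = C) * (ind (s(z.1, z.2) ∈ ω) *
        ind (Reach (res ω (C : Set V)ᶜ) T z.2))) := fun z _ C _ =>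
      mul_nonneg (ind_nonneg _) (mul_nonneg (ind_nonneg _) (mul_nonneg (ind_nonneg _)
        (ind_nonneg _)))
    by_cases hr : Reach ω T o
    · obtain ⟨t, ht, hot⟩ := hr
      obtain ⟨x, hx, y, hy, hxy, hyt⟩ := hot.exit (C := (Cl S o ω : Set V))
        (by simpa using mem_Cl.2 ⟨ho, Conn.refl _ _⟩)
        (by intro h; exact hT t ht (mem_Cl.1 (by simpa using h)).1)
      have hx' : x ∈ Cl S o ω := by simpa using hx
      have hyS : y ∉ S := by
        intro hyS
        apply hy
        simp only [Finset.mem_coe]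
        refine mem_Cl.2 ⟨hyS, (mem_Cl.1 hx').2.trans (Conn.single (mk_mem_res.2
          ⟨hxy, (mem_Cl.1 hx').1, hyS⟩))⟩
      have hmem := hB x (mem_Cl.1 hx').1 y hyS (hω hxy)
      have hCS : Cl S o ω ∈ S.powerset := Finset.mem_powerset.2 (Cl_subset _ _ _)
      refine le_trans ?_ (Finset.single_le_sum (f := fun z : V × V => ∑ C ∈ S.powerset,
        ind (z.1 ∈ C) * (ind (Cl S o ω = C) * (ind (s(z.1, z.2) ∈ ω) *
        ind (Reach (res ω (C : Set V)ᶜ) T z.2))))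
        (fun z hz => Finset.sum_nonneg (hnn z hz)) hmem)
      refine le_trans ?_ (Finset.single_le_sum (hnn (x, y) hmem) hCS)
      have hyR : Reach (res ω (Cl S o ω : Set V)ᶜ) T (x, y).2 := ⟨t, ht, hyt⟩
      rw [ind_true hx', ind_true rfl, ind_true hxy, ind_true hyR]
      simpa using ind_le_one _
    · rw [ind_false hr]
      exact Finset.sum_nonneg fun z hz => Finset.sum_nonneg (hnn z hz)
  refine (Ex_mono hP hpt).trans ?_
  rw [Ex_sum]
  refine Finset.sum_le_sum fun z hz => ?_
  rw [Ex_sum]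
  obtain ⟨hzS, hzS'⟩ := hB' z hz
  have hterm : ∀ C ∈ S.powerset, Ex P F (fun ω => ind (z.1 ∈ C) * (ind (Cl S o ω = C) *
      (ind (s(z.1, z.2) ∈ ω) * ind (Reach (res ω (C : Set V)ᶜ) T z.2)))) ≤
      (P s(z.1, z.2) * Ex P F (fun ω => ind (Reach ω T z.2))) *
        Ex P F (fun ω => ind (z.1 ∈ C) * ind (Cl S o ω = C)) := by
    intro C _
    rw [Ex_mul_left, Ex_mul_left]
    by_cases hzC : z.1 ∈ C
    · have d3 : Dep (fun ω => ind (Reach (res ω (C : Set V)ᶜ) T z.2))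
          {e : Sym2 V | ∀ v ∈ e, v ∈ (C : Set V)ᶜ} :=
        dep_res (C : Set V)ᶜ (fun ω => ind (Reach ω T z.2))
      have d2 : Dep (fun ω : Finset (Sym2 V) => ind (s(z.1, z.2) ∈ ω)) {s(z.1, z.2)} :=
        dep_ind fun A B h hA => (h _ rfl).1 hA
      have d1 := dep_Cl S o ho C
      rw [Ex_indep P F ?_ d1 (d2.mul d3), Ex_indep P F ?_ d2 d3]
      · have h1 : Ex P F (fun ω => ind (s(z.1, z.2) ∈ ω)) ≤ P s(z.1, z.2) := by
          by_cases hzF : s(z.1, z.2) ∈ F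
          · exact (Ex_mem P hzF).le
          · have : Ex P F (fun ω => ind (s(z.1, z.2) ∈ ω)) = Ex P F (fun ω => 0) :=
              Ex_congr P fun A hA => ind_false fun h => hzF (hA h)
            rw [this, Ex_const]; exact (hP _).1
        have h2 : Ex P F (fun ω => ind (Reach (res ω (C : Set V)ᶜ) T z.2)) ≤
            Ex P F (fun ω => ind (Reach ω T z.2)) :=
          Ex_mono hP fun ω _ => ind_mono fun h => h.mono (res_subset _ _)
        have h3 := mul_le_mul h1 h2 (Ex_ind_nonneg hP F _) (hP _).1
        have h4 := mul_le_mul_of_nonneg_left h3 (Ex_ind_nonneg hP F (fun ω => Cl S o ω = C))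
        rw [ind_true hzC]
        linarith
      · rw [Set.disjoint_left]
        rintro e rfl he
        exact he z.1 (by simp) hzC
      · rw [Set.disjoint_left]
        rintro e ⟨he1, v, hve, hvC⟩ (rfl | he)
        · exact hzS' (he1 z.2 (by simp))
        · exact he v hve hvC
    · rw [ind_false hzC]; simp
  refine (Finset.sum_le_sum hterm).trans ?_
  rw [← Finset.mul_sum, ← Ex_sum]
  have : Ex P F (fun ω => ∑ C ∈ S.powerset, ind (z.1 ∈ C) * ind (Cl S o ω = C)) ≤
      Ex P F (fun ω => ind (Conn (res ω S) o z.1)) := by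
    refine Ex_mono hP fun ω _ => ?_
    rw [Finset.sum_eq_single (Cl S o ω)]
    · rw [ind_true (rfl : Cl S o ω = Cl S o ω), mul_one]
      exact ind_mono fun h => (mem_Cl.1 h).2
    · intro C _ hne
      rw [ind_false (fun h => hne h.symm : ¬ (Cl S o ω = C)), mul_zero]
    · intro h; exact absurd (Finset.mem_powerset.2 (Cl_subset _ _ _)) h
  have h5 := mul_le_mul_of_nonneg_left this (mul_nonneg (hP s(z.1, z.2)).1
    (Ex_ind_nonneg hP F (fun ω => Reach ω T z.2)))
  linarith

open Classical in
/-- The vertices of `W` not connected to `T`. -/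
noncomputable def Un (W : Finset V) (T : Set V) (ω : Finset (Sym2 V)) : Finset V :=
  W.filter (fun x => ¬ Reach ω T x)

lemma mem_Un {W : Finset V} {T : Set V} {ω : Finset (Sym2 V)} {x : V} :
    x ∈ Un W T ω ↔ x ∈ W ∧ ¬ Reach ω T x := by simp [Un]

lemma dep_Un (W : Finset V) (T : Set V) (S : Finset V) :
    Dep (fun ω => ind (Un W T ω = S)) {e : Sym2 V | ∃ v ∈ e, v ∉ S} := by
  refine dep_ind fun A B hAB hA => ?_
  have hn : ∀ b, Reach A T b → b ∉ S := fun b hb hbS => by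
    rw [← hA] at hbS; exact (mem_Un.1 hbS).2 hb
  have h1 : ∀ z, Reach A T z → Reach B T z := by
    rintro z ⟨t, ht, hz⟩
    refine (?_ : Reach A T z ∧ Reach B T z).2
    refine Relation.ReflTransGen.head_induction_on (motive := fun z _ =>
      Reach A T z ∧ Reach B T z) hz ⟨⟨t, ht, Conn.refl _ _⟩, ⟨t, ht, Conn.refl _ _⟩⟩ ?_
    rintro a b hab _ ⟨⟨t1, ht1, h1⟩, ⟨t2, ht2, h2⟩⟩
    refine ⟨⟨t1, ht1, (Conn.single hab).trans h1⟩, ⟨t2, ht2, (Conn.single ?_).trans h2⟩⟩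
    exact (hAB _ ⟨b, by simp, hn b ⟨t1, ht1, h1⟩⟩).1 hab
  have h2 : ∀ z, Reach B T z → Reach A T z := by
    rintro z ⟨t, ht, hz⟩
    refine Relation.ReflTransGen.head_induction_on (motive := fun z _ =>
      Reach A T z) hz ⟨t, ht, Conn.refl _ _⟩ ?_
    rintro a b hab _ ⟨t1, ht1, h1⟩
    refine ⟨t1, ht1, (Conn.single ?_).trans h1⟩
    exact (hAB _ ⟨b, by simp, hn b ⟨t1, ht1, h1⟩⟩).2 hab
  rw [← hA]
  ext x
  rw [mem_Un, mem_Un]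
  exact and_congr_right fun _ => not_congr ⟨h2 x, h1 x⟩

lemma dct_ineq {p : ℝ} (hp : p ∈ Icc (0:ℝ) 1) (F : Finset (Sym2 V)) (W : Finset V) (T : Set V)
    (o : V) (ho : o ∈ W) (hF : ∀ x y, s(x, y) ∈ F → y ∈ W ∨ y ∈ T)
    (B : Finset V → Finset (V × V))
    (hB : ∀ S ⊆ W, o ∈ S → ∀ z ∈ B S, z.1 ∈ S ∧ z.2 ∉ S ∧ s(z.1, z.2) ∈ F)
    (hφ : ∀ S ⊆ W, o ∈ S →
      1 ≤ ∑ z ∈ B S, Ex (fun _ => p) F (fun ω => ind (Conn (res ω S) o z.1))) :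
    1 - Ex (fun _ => p) F (fun ω => ind (Reach ω T o)) ≤
      ∑ e ∈ F, Ex (fun _ => p) F
        (fun ω => ind (Reach (insert e ω) T o) - ind (Reach (ω.erase e) T o)) := by
  have hP : ∀ e : Sym2 V, (fun _ : Sym2 V => p) e ∈ Icc (0:ℝ) 1 := fun _ => hp
  classical
  set 𝒮 := W.powerset.filter (fun S => o ∈ S) with h𝒮
  have hpt : ∀ ω ⊆ F, ∑ S ∈ 𝒮, ∑ z ∈ B S, ind (Un W T ω = S) * ind (Conn (res ω S) o z.1) ≤
      ∑ e ∈ F, (ind (Reach (insert e ω) T o) - ind (Reach (ω.erase e) T o)) := by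
    intro ω hω
    have hnn : ∀ e ∈ F, 0 ≤ ind (Reach (insert e ω) T o) - ind (Reach (ω.erase e) T o) :=
      fun e _ => sub_nonneg.2 (ind_mono fun h => h.mono
        ((Finset.erase_subset _ _).trans (Finset.subset_insert _ _)))
    by_cases hoU : o ∈ Un W T ω
    · have hUW : Un W T ω ⊆ W := Finset.filter_subset _ _
      have hmem : Un W T ω ∈ 𝒮 := by
        simp only [h𝒮, Finset.mem_filter, Finset.mem_powerset]; exact ⟨hUW, hoU⟩
      rw [Finset.sum_eq_single_of_mem _ hmem]
      swap
      · intro S _ hne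
        refine Finset.sum_eq_zero fun z _ => ?_
        rw [ind_false (fun h => hne h.symm : ¬ (Un W T ω = S)), zero_mul]
      set S := Un W T ω with hS
      have hinj : Set.InjOn (fun z : V × V => s(z.1, z.2)) (B S) := by
        intro z hz z' hz' h
        have h1 := hB S hUW hoU z hz
        have h2 := hB S hUW hoU z' hz'
        rcases Sym2.eq_iff.1 h with ⟨h3, h4⟩ | ⟨h3, h4⟩
        · exact Prod.ext h3 h4
        · rw [h3] at h1; exact absurd h1.1 h2.2.1
      have himg : (B S).image (fun z : V × V => s(z.1, z.2)) ⊆ F := by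
        intro e he
        obtain ⟨z, hz, rfl⟩ := Finset.mem_image.1 he
        exact (hB S hUW hoU z hz).2.2
      refine le_trans ?_ (Finset.sum_le_sum_of_subset_of_nonneg himg fun e he _ => hnn e he)
      rw [Finset.sum_image hinj]
      refine Finset.sum_le_sum fun z hz => ?_
      obtain ⟨hz1, hz2, hzF⟩ := hB S hUW hoU z hz
      rw [ind_true rfl, one_mul]
      by_cases hc : Conn (res ω S) o z.1
      · have hzR : Reach ω T z.2 := by
          rcases hF _ _ hzF with h | h
          · by_contra hcon; exact hz2 (mem_Un.2 ⟨h, hcon⟩)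
          · exact ⟨z.2, h, Conn.refl _ _⟩
        have h1 : Reach (insert s(z.1, z.2) ω) T o := by
          obtain ⟨t, ht, h2⟩ := hzR
          have hsub : ω ⊆ insert s(z.1, z.2) ω := Finset.subset_insert _ _
          exact ⟨t, ht, (hc.mono ((res_subset _ _).trans hsub)).trans
            ((Conn.single (Finset.mem_insert_self _ _)).trans (h2.mono hsub))⟩
        have h2 : ¬ Reach (ω.erase s(z.1, z.2)) T o := fun h =>
          (mem_Un.1 hoU).2 (h.mono (Finset.erase_subset _ _))
        rw [ind_true hc, ind_true h1, ind_false h2]; norm_num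
      · rw [ind_false hc]; exact hnn _ hzF
    · have : ∑ S ∈ 𝒮, ∑ z ∈ B S, ind (Un W T ω = S) * ind (Conn (res ω S) o z.1) = 0 := by
        refine Finset.sum_eq_zero fun S hS => Finset.sum_eq_zero fun z _ => ?_
        have hoS : o ∈ S := (Finset.mem_filter.1 hS).2
        rw [ind_false (fun h => hoU (h ▸ hoS) : ¬ (Un W T ω = S)), zero_mul]
      rw [this]; exact Finset.sum_nonneg hnn
  have h1 := Ex_mono hP hpt
  rw [Ex_sum, Ex_sum] at h1
  refine le_trans ?_ h1
  have hS : ∀ S ∈ 𝒮, Ex (fun _ => p) F (fun ω => ind (Un W T ω = S)) ≤ Ex (fun _ => p) F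
      (fun ω => ∑ z ∈ B S, ind (Un W T ω = S) * ind (Conn (res ω S) o z.1)) := by
    intro S hS
    simp only [h𝒮, Finset.mem_filter, Finset.mem_powerset] at hS
    rw [Ex_sum]
    have : ∀ z ∈ B S, Ex (fun _ => p) F
        (fun ω => ind (Un W T ω = S) * ind (Conn (res ω S) o z.1)) =
        Ex (fun _ => p) F (fun ω => ind (Un W T ω = S)) *
        Ex (fun _ => p) F (fun ω => ind (Conn (res ω S) o z.1)) := by
      intro z _
      refine Ex_indep _ F ?_ (dep_Un W T S) (dep_res (S : Set V) (fun ω => ind (Conn ω o z.1)))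
      rw [Set.disjoint_left]
      rintro e ⟨v, hv, hvS⟩ he
      exact hvS (he v hv)
    rw [Finset.sum_congr rfl this, ← Finset.mul_sum]
    exact le_mul_of_one_le_right (Ex_ind_nonneg hP F _) (hφ S hS.1 hS.2)
  refine le_trans ?_ (Finset.sum_le_sum hS)
  rw [← Ex_sum, ← Ex_ind_not]
  refine Ex_mono hP fun ω _ => ?_
  by_cases hr : Reach ω T o
  · rw [ind_false (not_not.2 hr)]
    exact Finset.sum_nonneg fun _ _ => ind_nonneg _
  · have hmem : Un W T ω ∈ 𝒮 := by
      simp only [h𝒮, Finset.mem_filter, Finset.mem_powerset]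
      exact ⟨Finset.filter_subset _ _, mem_Un.2 ⟨ho, hr⟩⟩
    refine le_trans ?_ (Finset.single_le_sum (fun _ _ => ind_nonneg _) hmem)
    rw [ind_true rfl]; exact ind_le_one _

end Connectivity

end PartB

section PartC

section Graphs
set_option linter.unusedSectionVars false
variable {V V' : Type*} [DecidableEq V] [DecidableEq V']

open Classical in
/-- The edges of `G` with both endpoints in `S`. -/
noncomputable def edges (G : SimpleGraph V) (S : Finset V) : Finset (Sym2 V) :=
  S.sym2.filter (fun e => e ∈ G.edgeSet)

lemma mk_mem_edges {G : SimpleGraph V} {S : Finset V} {x y : V} :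
    s(x, y) ∈ edges G S ↔ (x ∈ S ∧ y ∈ S) ∧ G.Adj x y := by
  simp [edges]

lemma mem_edges {G : SimpleGraph V} {S : Finset V} {e : Sym2 V} :
    e ∈ edges G S ↔ (∀ v ∈ e, v ∈ S) ∧ e ∈ G.edgeSet := by
  simp [edges]

lemma edges_mono (G : SimpleGraph V) {S W : Finset V} (h : S ⊆ W) : edges G S ⊆ edges G W :=
  fun _ he => mem_edges.2 ⟨fun v hv => h ((mem_edges.1 he).1 v hv), (mem_edges.1 he).2⟩

lemma res_eq_self {G : SimpleGraph V} {S : Finset V} {ω : Finset (Sym2 V)} (h : ω ⊆ edges G S) :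
    res ω (S : Set V) = ω := by
  ext e
  rw [mem_res]
  exact ⟨fun h => h.1, fun he => ⟨he, fun v hv => (mem_edges.1 (h he)).1 v hv⟩⟩

lemma res_sub_edges {G : SimpleGraph V} {S W : Finset V} {ω : Finset (Sym2 V)}
    (h : ω ⊆ edges G W) : res ω (S : Set V) ⊆ edges G S := by
  intro e he
  rw [mem_res] at he
  exact mem_edges.2 ⟨he.2, (mem_edges.1 (h he.1)).2⟩

lemma Ex_res (G : SimpleGraph V) (P : Sym2 V → ℝ) {S W : Finset V} (h : S ⊆ W)
    (f : Finset (Sym2 V) → ℝ) :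
    Ex P (edges G W) (fun ω => f (res ω S)) = Ex P (edges G S) f := by
  rw [Ex_marg P (edges_mono G h) (dep_res (S : Set V) f)]
  · exact Ex_congr P fun A hA => by rw [res_eq_self hA]
  · intro e he hes
    exact mem_edges.2 ⟨hes, (mem_edges.1 he).2⟩

lemma edges_map {G : SimpleGraph V} {G' : SimpleGraph V'} (ψ : V ↪ V')
    (hψ : ∀ x y, G'.Adj (ψ x) (ψ y) ↔ G.Adj x y) (S : Finset V) :
    edges G' (S.map ψ) = (edges G S).map ψ.sym2Map := by
  ext e
  constructor
  · refine Sym2.inductionOn e fun a b => ?_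
    rw [mk_mem_edges]
    rintro ⟨⟨ha, hb⟩, hab⟩
    obtain ⟨x, hx, rfl⟩ := Finset.mem_map.1 ha
    obtain ⟨y, hy, rfl⟩ := Finset.mem_map.1 hb
    exact Finset.mem_map.2 ⟨s(x, y), mk_mem_edges.2 ⟨⟨hx, hy⟩, (hψ x y).1 hab⟩, rfl⟩
  · intro he
    obtain ⟨e', he', rfl⟩ := Finset.mem_map.1 he
    revert he'
    refine Sym2.inductionOn e' fun x y => ?_
    rw [mk_mem_edges]
    rintro ⟨⟨ha, hb⟩, hab⟩
    change s(ψ x, ψ y) ∈ _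
    rw [mk_mem_edges]
    exact ⟨⟨Finset.mem_map_of_mem _ ha, Finset.mem_map_of_mem _ hb⟩, (hψ x y).2 hab⟩

lemma mk_mem_map {ψ : V ↪ V'} {ω : Finset (Sym2 V)} {x y : V} :
    s(ψ x, ψ y) ∈ ω.map ψ.sym2Map ↔ s(x, y) ∈ ω := by
  have : s(ψ x, ψ y) = ψ.sym2Map s(x, y) := rfl
  rw [this, Finset.mem_map']

lemma Conn_map {ψ : V ↪ V'} {ω : Finset (Sym2 V)} {x y : V} :
    Conn (ω.map ψ.sym2Map) (ψ x) (ψ y) ↔ Conn ω x y := by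
  constructor
  · have key : ∀ b, Conn (ω.map ψ.sym2Map) (ψ x) b → ∃ y, b = ψ y ∧ Conn ω x y := by
      intro b hb
      induction hb with
      | refl => exact ⟨x, rfl, Conn.refl _ _⟩
      | @tail b c _ hbc ih =>
        obtain ⟨y, rfl, hy⟩ := ih
        obtain ⟨e, he, hec⟩ := Finset.mem_map.1 hbc
        have : ψ y ∈ ψ.sym2Map e := by rw [hec]; simp
        obtain ⟨z, hz⟩ : ∃ z, c = ψ z := by
          have hc : c ∈ ψ.sym2Map e := by rw [hec]; simp
          obtain ⟨z, _, hz⟩ := Sym2.mem_map.1 hc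
          exact ⟨z, hz.symm⟩
        subst hz
        exact ⟨z, rfl, hy.trans (Conn.single (mk_mem_map.1 hbc))⟩
    intro h
    obtain ⟨y', hy', h'⟩ := key _ h
    rw [ψ.injective hy']; exact h'
  · intro h
    induction h with
    | refl => exact Conn.refl _ _
    | tail _ hbc ih => exact ih.trans (Conn.single (mk_mem_map.2 hbc))

lemma Ex_edges_map {G : SimpleGraph V} {G' : SimpleGraph V'} (ψ : V ↪ V')
    (hψ : ∀ x y, G'.Adj (ψ x) (ψ y) ↔ G.Adj x y) (P : Sym2 V' → ℝ) (S : Finset V)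
    (f : Finset (Sym2 V') → ℝ) :
    Ex P (edges G' (S.map ψ)) f =
      Ex (fun e => P (ψ.sym2Map e)) (edges G S) (fun ω => f (ω.map ψ.sym2Map)) := by
  rw [edges_map ψ hψ, Ex_map]

open Classical in
/-- Ordered boundary edges of `S`; `nb x` must contain all neighbours of `x`. -/
noncomputable def bd (G : SimpleGraph V) (nb : V → Finset V) (S : Finset V) : Finset (V × V) :=
  (S ×ˢ S.biUnion nb).filter (fun z => z.2 ∉ S ∧ G.Adj z.1 z.2)

lemma mem_bd {G : SimpleGraph V} {nb : V → Finset V} (hnb : ∀ x y, G.Adj x y → y ∈ nb x)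
    {S : Finset V} {z : V × V} :
    z ∈ bd G nb S ↔ z.1 ∈ S ∧ z.2 ∉ S ∧ G.Adj z.1 z.2 := by
  simp only [bd, Finset.mem_filter, Finset.mem_product, Finset.mem_biUnion]
  constructor
  · rintro ⟨⟨h1, _⟩, h2⟩; exact ⟨h1, h2⟩
  · rintro ⟨h1, h2⟩; exact ⟨⟨h1, z.1, h1, hnb _ _ h2.2⟩, h2⟩

/-- The Duminil-Copin and Tassion quantity. -/
noncomputable def phi (G : SimpleGraph V) (nb : V → Finset V) (P : Sym2 V → ℝ) (S : Finset V)
    (o : V) : ℝ :=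
  ∑ z ∈ bd G nb S, P s(z.1, z.2) * Ex P (edges G S) (fun ω => ind (Conn ω o z.1))

lemma conn_mem_of_edges {G : SimpleGraph V} {S : Finset V} {ω : Finset (Sym2 V)}
    (h : ω ⊆ edges G S) {x y : V} (hx : x ∈ S) (hc : Conn ω x y) : y ∈ S := by
  rw [← res_eq_self h] at hc
  exact hc.mem_of_res hx

end Graphs

/-! ### The square lattice -/

/-- The square lattice graph. -/
def G2 : SimpleGraph (ℤ × ℤ) where
  Adj x y := (x.1 = y.1 ∧ (y.2 = x.2 + 1 ∨ x.2 = y.2 + 1)) ∨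
    (x.2 = y.2 ∧ (y.1 = x.1 + 1 ∨ x.1 = y.1 + 1))
  symm := ⟨by intro x y h; omega⟩
  loopless := ⟨by intro x h; omega⟩

lemma G2_adj (x y : ℤ × ℤ) : G2.Adj x y ↔ (x.1 = y.1 ∧ (y.2 = x.2 + 1 ∨ x.2 = y.2 + 1)) ∨
    (x.2 = y.2 ∧ (y.1 = x.1 + 1 ∨ x.1 = y.1 + 1)) := Iff.rfl

/-- A finite superset of the neighbours of a vertex. -/
noncomputable def nb2 (x : ℤ × ℤ) : Finset (ℤ × ℤ) :=
  Finset.Icc (x.1 - 1) (x.1 + 1) ×ˢ Finset.Icc (x.2 - 1) (x.2 + 1)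

lemma nb2_spec (x y : ℤ × ℤ) (h : G2.Adj x y) : y ∈ nb2 x := by
  rw [G2_adj] at h
  simp only [nb2, Finset.mem_product, Finset.mem_Icc]
  omega

/-- The rectangle `[a,b] × [c,d]`. -/
noncomputable def rect (a b c d : ℤ) : Finset (ℤ × ℤ) := Finset.Icc a b ×ˢ Finset.Icc c d

lemma mem_rect {a b c d : ℤ} {x : ℤ × ℤ} :
    x ∈ rect a b c d ↔ (a ≤ x.1 ∧ x.1 ≤ b) ∧ (c ≤ x.2 ∧ x.2 ≤ d) := by
  simp [rect, Finset.mem_product, Finset.mem_Icc]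

/-- The box `[-n,n]²`. -/
noncomputable abbrev box (n : ℤ) : Finset (ℤ × ℤ) := rect (-n) n (-n) n

/-- The outside of the open box of radius `n`. -/
def Tn (n : ℤ) : Set (ℤ × ℤ) := {v | v ∉ box (n - 1)}

lemma mem_Tn {n : ℤ} {x : ℤ × ℤ} : x ∈ Tn n ↔ x.1 ≤ -n ∨ n ≤ x.1 ∨ x.2 ≤ -n ∨ n ≤ x.2 := by
  simp only [Tn, Set.mem_ofPred_eq, mem_rect]; omega

lemma reach_monotone {V : Type*} [DecidableEq V] (T : Set V) (x : V) :
    Monotone (fun ω : Finset (Sym2 V) => ind (Reach ω T x)) :=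
  fun _ _ h => ind_mono fun hr => hr.mono h

lemma conn_monotone {V : Type*} [DecidableEq V] (x y : V) :
    Monotone (fun ω : Finset (Sym2 V) => ind (Conn ω x y)) :=
  fun _ _ h => ind_mono fun hr => hr.mono h

lemma dct_planar {p0 p1 : ℝ} (h0 : 0 < p0) (h01 : p0 ≤ p1) (h1 : p1 ≤ 1)
    (hφ : ∀ S : Finset (ℤ × ℤ), 0 ∈ S → 1 ≤ phi G2 nb2 (fun _ => p0) S 0) (n : ℤ) (hn : 1 ≤ n) :
    1 - Real.exp (-(p1 - p0)) ≤
      Ex (fun _ => p1) (edges G2 (box n)) (fun ω => ind (Reach ω (Tn n) 0)) := by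
  set f : ℝ → ℝ := fun p => Ex (fun _ => p) (edges G2 (box n)) (fun ω => ind (Reach ω (Tn n) 0))
    with hf
  have hder : ∀ p : ℝ, HasDerivAt f (∑ e ∈ edges G2 (box n), Ex (fun _ => p) (edges G2 (box n))
      (fun ω => ind (Reach (insert e ω) (Tn n) 0) - ind (Reach (ω.erase e) (Tn n) 0))) p :=
    fun p => Ex_russo p _ _
  have hineq : ∀ p ∈ Icc p0 p1, 1 - f p ≤ ∑ e ∈ edges G2 (box n),
      Ex (fun _ => p) (edges G2 (box n))
      (fun ω => ind (Reach (insert e ω) (Tn n) 0) - ind (Reach (ω.erase e) (Tn n) 0)) := by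
    intro p hp
    have hpI : p ∈ Icc (0:ℝ) 1 := ⟨by linarith [hp.1], by linarith [hp.2]⟩
    refine dct_ineq hpI (edges G2 (box n)) (box (n - 1)) (Tn n) 0 ?_ ?_ (bd G2 nb2) ?_ ?_
    · rw [mem_rect]; simp; omega
    · intro x y _
      by_cases hy : y ∈ box (n - 1)
      · exact Or.inl hy
      · exact Or.inr hy
    · intro S hS _ z hz
      obtain ⟨hz1, hz2, hz3⟩ := (mem_bd nb2_spec).1 hz
      refine ⟨hz1, hz2, mk_mem_edges.2 ⟨⟨?_, ?_⟩, hz3⟩⟩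
      · have := mem_rect.1 (hS hz1); rw [mem_rect]; omega
      · have := mem_rect.1 (hS hz1); rw [mem_rect]; rw [G2_adj] at hz3; omega
    · intro S hS hoS
      refine (hφ S hoS).trans ?_
      unfold phi
      refine Finset.sum_le_sum fun z _ => ?_
      have hSW : S ⊆ box n := hS.trans fun x hx => by
        have := mem_rect.1 hx; rw [mem_rect]; omega
      rw [Ex_res G2 (fun _ => p) hSW (fun ω => ind (Conn ω 0 z.1))]
      have hm := Ex_mono_P (P := fun _ => p0) (Q := fun _ => p)
        (fun _ => ⟨h0.le, by linarith⟩) (fun _ => hpI) (fun _ => hp.1) (edges G2 S)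
        (conn_monotone 0 z.1)
      have hnn := Ex_ind_nonneg (P := fun _ => p0) (fun _ => ⟨h0.le, by linarith⟩)
        (edges G2 S) (fun ω => Conn ω 0 z.1)
      have : p0 ≤ 1 := by linarith
      nlinarith
  set g : ℝ → ℝ := fun p => (1 - f p) * Real.exp p with hg
  have hgd : ∀ p, HasDerivAt g (-(∑ e ∈ edges G2 (box n), Ex (fun _ => p) (edges G2 (box n))
      (fun ω => ind (Reach (insert e ω) (Tn n) 0) - ind (Reach (ω.erase e) (Tn n) 0)))
      * Real.exp p + (1 - f p) * Real.exp p) p :=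
    fun p => ((hder p).const_sub 1).mul (Real.hasDerivAt_exp p)
  have hanti : AntitoneOn g (Icc p0 p1) := by
    refine antitoneOn_of_deriv_nonpos (convex_Icc _ _)
      (fun p _ => (hgd p).continuousAt.continuousWithinAt)
      (fun p _ => (hgd p).differentiableAt.differentiableWithinAt) ?_
    intro p hp
    rw [interior_Icc] at hp
    rw [(hgd p).deriv]
    have := hineq p ⟨hp.1.le, hp.2.le⟩
    have he := Real.exp_pos p
    nlinarith
  have h2 := hanti (left_mem_Icc.2 h01) (right_mem_Icc.2 h01) h01
  simp only [hg] at h2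
  have hf0 : 0 ≤ f p0 := Ex_ind_nonneg (fun _ => ⟨h0.le, by linarith⟩) _ _
  have h3 : (1 - f p1) * Real.exp p1 ≤ Real.exp p0 := by
    refine h2.trans ?_
    have := Real.exp_pos p0
    nlinarith
  have h4 : 1 - f p1 ≤ Real.exp (-(p1 - p0)) := by
    rw [show -(p1 - p0) = p0 - p1 by ring, Real.exp_sub, le_div_iff₀ (Real.exp_pos _)]
    exact h3
  change _ ≤ f p1
  linarith


end PartC

section PartD

lemma Conn.first_exit {V : Type*} [DecidableEq V] {ω : Finset (Sym2 V)} {C : Set V} {o t : V}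
    (h : Conn ω o t) (ho : o ∈ C) (ht : t ∉ C) :
    ∃ x ∈ C, ∃ y, y ∉ C ∧ s(x, y) ∈ ω ∧ Conn (res ω C) o x := by
  obtain ⟨y, hy, x, hx, hxy, hc⟩ := Conn.exit (C := Cᶜ) h.symm ht (by simpa using ho)
  rw [compl_compl] at hc
  exact ⟨x, by simpa using hx, y, hy, by rw [Sym2.eq_swap]; exact hxy, hc.symm⟩

/-- Translation by `x`. -/
def tr (x : ℤ × ℤ) : ℤ × ℤ ↪ ℤ × ℤ := addLeftEmbedding x

lemma tr_apply (x a : ℤ × ℤ) : tr x a = x + a := rfl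

lemma tr_adj (x a b : ℤ × ℤ) : G2.Adj (tr x a) (tr x b) ↔ G2.Adj a b := by
  simp only [tr_apply, G2_adj, Prod.fst_add, Prod.snd_add]; omega

lemma mem_map_tr {x : ℤ × ℤ} {S : Finset (ℤ × ℤ)} {v : ℤ × ℤ} : v ∈ S.map (tr x) ↔ v - x ∈ S := by
  rw [Finset.mem_map]
  constructor
  · rintro ⟨a, ha, rfl⟩; rw [tr_apply]; simpa using ha
  · intro h; exact ⟨v - x, h, by rw [tr_apply]; abel⟩

lemma mem_sbox {x : ℤ × ℤ} {n : ℤ} {v : ℤ × ℤ} : v ∈ (box n).map (tr x) ↔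
    (x.1 - n ≤ v.1 ∧ v.1 ≤ x.1 + n) ∧ (x.2 - n ≤ v.2 ∧ v.2 ≤ x.2 + n) := by
  rw [mem_map_tr, mem_rect]; simp only [Prod.fst_sub, Prod.snd_sub]; omega

/-- Localisation of a connection to a box. -/
lemma reach_local {ω : Finset (Sym2 (ℤ × ℤ))} {W : Finset (ℤ × ℤ)} (hω : ω ⊆ edges G2 W)
    {x a z : ℤ × ℤ} {n : ℤ} (ha : a ∈ (box n).map (tr x)) (hz : z ∉ (box (n - 1)).map (tr x))
    (h : Conn ω a z) : ∃ z' ∈ (box n).map (tr x), z' ∉ (box (n - 1)).map (tr x) ∧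
      Conn (res ω ((box n).map (tr x) : Finset (ℤ × ℤ))) a z' := by
  by_cases ha' : a ∈ (box (n - 1)).map (tr x)
  · obtain ⟨u, hu, y, hy, huy, hc⟩ := h.first_exit
      (C := ((box (n - 1)).map (tr x) : Finset (ℤ × ℤ))) (by exact_mod_cast ha')
      (by exact_mod_cast hz)
    have hu' : u ∈ (box (n - 1)).map (tr x) := by exact_mod_cast hu
    have hy' : y ∉ (box (n - 1)).map (tr x) := by exact_mod_cast hy
    have hadj := (mk_mem_edges.1 (hω huy)).2
    rw [G2_adj] at hadj
    have hyn : y ∈ (box n).map (tr x) := by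
      rw [mem_sbox] at hu' ⊢; omega
    have hun : u ∈ (box n).map (tr x) := by
      rw [mem_sbox] at hu' ⊢; omega
    refine ⟨y, hyn, hy', Conn.trans (y := u) (hc.mono ?_) (Conn.single ?_)⟩
    · intro e he
      rw [mem_res] at he ⊢
      refine ⟨he.1, fun v hv => ?_⟩
      have : v ∈ (box (n - 1)).map (tr x) := by exact_mod_cast he.2 v hv
      have : v ∈ (box n).map (tr x) := by
        rw [mem_sbox] at this ⊢; omega
      exact_mod_cast this
    · exact mk_mem_res.2 ⟨huy, by exact_mod_cast hun, by exact_mod_cast hyn⟩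
  · exact ⟨a, ha, ha', Conn.refl _ _⟩

/-- The local event that no point of `x + A` reaches distance `n` from `x`. -/
def LN (A : Finset (ℤ × ℤ)) (x : ℤ × ℤ) (n : ℤ) (ω : Finset (Sym2 (ℤ × ℤ))) : Prop :=
  ∀ a ∈ A, ∀ z ∈ Tn n, ¬ Conn (res ω ((box n).map (tr x) : Finset (ℤ × ℤ))) (tr x a) (tr x z)

/-- Probability that `A` does not reach distance `n`. -/
noncomputable def dd (p : ℝ) (A : Finset (ℤ × ℤ)) (n : ℤ) : ℝ :=
  Ex (fun _ => p) (edges G2 (box n)) (fun ω => ind (∀ a ∈ A, ¬ Reach ω (Tn n) a))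

lemma prob_LN (p : ℝ) (A : Finset (ℤ × ℤ)) (x : ℤ × ℤ) (n : ℤ) {W : Finset (ℤ × ℤ)}
    (h : (box n).map (tr x) ⊆ W) :
    Ex (fun _ => p) (edges G2 W) (fun ω => ind (LN A x n ω)) = dd p A n := by
  unfold LN
  rw [Ex_res G2 (fun _ => p) h (fun ω => ind (∀ a ∈ A, ∀ z ∈ Tn n, ¬ Conn ω (tr x a) (tr x z))),
    Ex_edges_map (tr x) (fun a b => tr_adj x a b)]
  unfold dd
  refine Ex_congr _ fun ω _ => ind_congr ?_
  simp only [Conn_map, Reach, not_exists, not_and]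

lemma LN_mono {ω : Finset (Sym2 (ℤ × ℤ))} {W : Finset (ℤ × ℤ)} (hω : ω ⊆ edges G2 W)
    {A A' : Finset (ℤ × ℤ)} {x y : ℤ × ℤ} {m n : ℤ} (hA : A ⊆ box m)
    (hxy : (box (m - 1)).map (tr x) ⊆ (box (n - 1)).map (tr y))
    (hAA : ∀ a ∈ A', tr y a - x ∈ A)
    (h : LN A x m ω) : LN A' y n ω := by
  intro a' ha' z hz hc
  have haA := hAA a' ha'
  have hc' : Conn ω (tr y a') (tr y z) := hc.mono (res_subset _ _)
  obtain ⟨z', _, hz'', hcc⟩ := reach_local (x := x) (n := m) hω (mem_map_tr.2 (hA haA))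
    (fun hh => by
      have := hxy hh
      rw [mem_map_tr, tr_apply, add_sub_cancel_left] at this
      exact hz this) hc'
  refine h _ haA (z' - x) ?_ ?_
  · intro hh; exact hz'' (mem_map_tr.2 hh)
  · have e1 : tr x (tr y a' - x) = tr y a' := by rw [tr_apply]; abel
    have e2 : tr x (z' - x) = z' := by rw [tr_apply]; abel
    rw [e1, e2]; exact hcc

lemma dd_mono {p : ℝ} (hp : p ∈ Icc (0:ℝ) 1) {A : Finset (ℤ × ℤ)} {m n : ℤ} (hmn : m ≤ n)
    (hA : A ⊆ box m) : dd p A m ≤ dd p A n := by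
  rw [← prob_LN p A 0 m (W := box n), ← prob_LN p A 0 n (W := box n)]
  · refine Ex_mono (fun _ => hp) fun ω hω => ind_mono fun h => LN_mono hω hA ?_ ?_ h
    · intro v hv; rw [mem_sbox] at hv ⊢; omega
    · intro a ha; rw [tr_apply]; simpa using ha
  · intro v hv; rw [mem_sbox] at hv; rw [mem_rect]; simp at hv; omega
  · intro v hv; rw [mem_sbox] at hv; rw [mem_rect]; simp at hv; omega

lemma dd_anti {p : ℝ} (hp : p ∈ Icc (0:ℝ) 1) {A B : Finset (ℤ × ℤ)} (h : A ⊆ B) (n : ℤ) :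
    dd p B n ≤ dd p A n :=
  Ex_mono (fun _ => hp) fun _ _ => ind_mono fun hB a ha => hB a (h ha)

lemma dd_step {p : ℝ} (hp : p ∈ Icc (0:ℝ) 1) {A : Finset (ℤ × ℤ)} {K : ℤ} (hK : 0 ≤ K)
    (hA : A ⊆ box K) {s η : ℝ} (h1 : s - η ≤ dd p A K) (h2 : ∀ n, K ≤ n → dd p A n ≤ s)
    (n : ℤ) (hn : 4 * K + 4 ≤ n) :
    dd p (A ∪ A.map (tr (2 * K + 1, 0))) n ≤ s ^ 2 + 2 * η := by
  set x : ℤ × ℤ := (2 * K + 1, 0) with hx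
  set m : ℤ := n + 2 * K + 2 with hm
  set W : Finset (ℤ × ℤ) := box (m + 2 * K + 1) with hW
  have hx1 : x.1 = 2 * K + 1 := rfl
  have hx2 : x.2 = 0 := rfl
  have w1 : (box n).map (tr 0) ⊆ W := by
    intro v hv; rw [mem_sbox] at hv; rw [mem_rect]; simp at hv; omega
  have w2 : (box K).map (tr 0) ⊆ W := by
    intro v hv; rw [mem_sbox] at hv; rw [mem_rect]; simp at hv; omega
  have w3 : (box K).map (tr x) ⊆ W := by
    intro v hv; rw [mem_sbox] at hv; rw [mem_rect]; omega
  have w4 : (box m).map (tr x) ⊆ W := by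
    intro v hv; rw [mem_sbox] at hv; rw [mem_rect]; omega
  have e1g := prob_LN p A 0 n w1
  have e1l := prob_LN p A 0 K w2
  have e2l := prob_LN p A x K w3
  have e2m := prob_LN p A x m w4
  have hAx : ∀ a ∈ A.map (tr x), a - x ∈ A := fun a ha => mem_map_tr.1 ha
  have hsub : A.map (tr x) ⊆ box n := by
    intro v hv
    have := mem_rect.1 (hA (mem_map_tr.1 hv))
    simp only [Prod.fst_sub, Prod.snd_sub] at this
    rw [mem_rect]; omega
  have e2gm : Ex (fun _ => p) (edges G2 W) (fun ω => ind (LN (A.map (tr x)) 0 n ω)) ≤ s := by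
    refine le_trans ?_ (h2 m (by omega))
    rw [← e2m]
    refine Ex_mono (fun _ => hp) fun ω hω => ind_mono fun h => LN_mono hω hsub ?_ ?_ h
    · intro v hv; rw [mem_sbox] at hv ⊢; simp only [Prod.fst_zero, Prod.snd_zero] at hv; omega
    · intro a ha; rw [sub_zero]; exact Finset.mem_map_of_mem _ ha
  have htot := prob_LN p (A ∪ A.map (tr x)) 0 n w1
  have key : Ex (fun _ => p) (edges G2 W) (fun ω => ind (LN (A ∪ A.map (tr x)) 0 n ω)) ≤
      Ex (fun _ => p) (edges G2 W) (fun ω => ind (LN A 0 K ω) * ind (LN A x K ω) +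
        ((ind (LN A 0 n ω) - ind (LN A 0 K ω)) +
          (ind (LN (A.map (tr x)) 0 n ω) - ind (LN A x K ω)))) := by
    refine Ex_mono (fun _ => hp) fun ω hω => ?_
    have i1 : LN A 0 K ω → LN A 0 n ω := fun h => LN_mono hω hA
      (by intro v hv; rw [mem_sbox] at hv ⊢; simp only [Prod.fst_zero, Prod.snd_zero] at hv ⊢; omega)
      (by intro a ha; rw [tr_apply]; simpa using ha) h
    have i2 : LN A x K ω → LN (A.map (tr x)) 0 n ω := fun h => LN_mono hω hA
      (by intro v hv; rw [mem_sbox] at hv ⊢; simp only [Prod.fst_zero, Prod.snd_zero] at hv ⊢; omega)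
      (by intro a ha; rw [tr_apply, zero_add]; exact hAx a ha) h
    have j1 : LN (A ∪ A.map (tr x)) 0 n ω → LN A 0 n ω := fun h a ha =>
      h a (Finset.mem_union_left _ ha)
    have j2 : LN (A ∪ A.map (tr x)) 0 n ω → LN (A.map (tr x)) 0 n ω := fun h a ha =>
      h a (Finset.mem_union_right _ ha)
    have k1 := ind_mono i1
    have k2 := ind_mono i2
    have k3 := ind_mono j1
    have k4 := ind_mono j2
    have k5 := ind_le_one (LN A 0 K ω)
    have k6 := ind_le_one (LN A x K ω)
    have k7 := ind_nonneg (LN A x K ω)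
    have k8 := ind_nonneg (LN A 0 K ω)
    by_cases c1 : LN A 0 K ω <;> by_cases c2 : LN A x K ω
    · rw [ind_true c1, ind_true c2, ind_true (i1 c1), ind_true (i2 c2)]
      have := ind_le_one (LN (A ∪ A.map (tr x)) 0 n ω); linarith
    · rw [ind_false c2, ind_true c1] at *; linarith
    · rw [ind_false c1, ind_true c2] at *; linarith
    · rw [ind_false c1, ind_false c2] at *; linarith
  rw [htot, Ex_add, Ex_add, Ex_sub, Ex_sub, e1g, e1l, e2l] at key
  have hind : Ex (fun _ => p) (edges G2 W) (fun ω => ind (LN A 0 K ω) * ind (LN A x K ω)) =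
      dd p A K * dd p A K := by
    have d1 := dep_res (((box K).map (tr 0) : Finset (ℤ × ℤ)) : Set (ℤ × ℤ))
      (fun ω => ind (∀ a ∈ A, ∀ z ∈ Tn K, ¬ Conn ω (tr 0 a) (tr 0 z)))
    have d2 := dep_res (((box K).map (tr x) : Finset (ℤ × ℤ)) : Set (ℤ × ℤ))
      (fun ω => ind (∀ a ∈ A, ∀ z ∈ Tn K, ¬ Conn ω (tr x a) (tr x z)))
    have := Ex_indep (fun _ => p) (edges G2 W) ?_ d1 d2
    · refine this.trans ?_
      exact congrArg₂ (· * ·) e1l e2l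
    · rw [Set.disjoint_left]
      intro e
      refine Sym2.inductionOn e fun u v => ?_
      intro h1 h2
      have g1 := h1 u (by simp)
      have g2 := h2 u (by simp)
      rw [Finset.mem_coe, mem_sbox] at g1 g2
      simp only [Prod.fst_zero, Prod.snd_zero] at g1
      omega
  rw [hind] at key
  have b1 := h2 K le_rfl
  have b2 := h2 n (by omega)
  have b0 : 0 ≤ dd p A K := Ex_ind_nonneg (fun _ => hp) _ _
  nlinarith

lemma exists_radius (A : Finset (ℤ × ℤ)) : ∃ K : ℤ, 0 ≤ K ∧ A ⊆ box K := by
  induction A using Finset.induction_on with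
  | empty => exact ⟨0, le_rfl, by simp⟩
  | insert a A _ ih =>
    obtain ⟨K, hK, hA⟩ := ih
    refine ⟨K + |a.1| + |a.2|, by positivity, ?_⟩
    intro v hv
    rw [mem_rect]
    have h1 := abs_nonneg a.1
    have h2 := abs_nonneg a.2
    have h3 := le_abs_self a.1
    have h4 := le_abs_self a.2
    have h5 := neg_abs_le a.1
    have h6 := neg_abs_le a.2
    rcases Finset.mem_insert.1 hv with rfl | hv
    · omega
    · have := mem_rect.1 (hA hv); omega

/-- If one-arm probabilities are bounded below, large boxes reach far with high probability. -/
lemma whp {p c : ℝ} (hp : p ∈ Icc (0:ℝ) 1) (hc : 0 < c)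
    (h : ∀ n : ℤ, 1 ≤ n → dd p {0} n ≤ 1 - c) {ε : ℝ} (hε : 0 < ε) :
    ∃ N : ℤ, 1 ≤ N ∧ ∀ n, N < n → dd p (box N) n ≤ ε := by
  let Q : ℝ → Prop := fun s => ∃ A : Finset (ℤ × ℤ), ∃ n0 : ℤ, ∀ n, n0 ≤ n → dd p A n ≤ s
  have hc1 : c ≤ 1 := by
    have := h 1 le_rfl
    have : 0 ≤ dd p {0} 1 := Ex_ind_nonneg (fun _ => hp) _ _
    linarith
  have hstep : ∀ s η : ℝ, 0 < η → Q s → Q (s ^ 2 + 2 * η) := by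
    rintro s η hη ⟨A, n0, hA⟩
    obtain ⟨K0, hK0, hAK0⟩ := exists_radius A
    set n1 := max n0 K0 with hn1
    set X : Set ℝ := {r | ∃ n, n1 ≤ n ∧ r = dd p A n} with hX
    have hXne : X.Nonempty := ⟨_, n1, le_rfl, rfl⟩
    have hXb : BddAbove X := ⟨s, by rintro r ⟨n, hn, rfl⟩; exact hA n (by omega)⟩
    have hs : sSup X ≤ s := csSup_le hXne (by rintro r ⟨n, hn, rfl⟩; exact hA n (by omega))
    obtain ⟨r, ⟨K, hK, rfl⟩, hr⟩ := exists_lt_of_lt_csSup hXne (sub_lt_self (sSup X) hη)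
    have hAK : A ⊆ box K := hAK0.trans fun v hv => by
      have := mem_rect.1 hv; rw [mem_rect]; omega
    have hsn : 0 ≤ sSup X := le_trans (Ex_ind_nonneg (fun _ => hp) _ _)
      (le_csSup hXb ⟨n1, le_rfl, rfl⟩)
    refine ⟨_, 4 * K + 4, fun n hn => (dd_step hp (by omega) hAK hr.le
      (fun n hn => le_csSup hXb ⟨n, by omega, rfl⟩) n hn).trans ?_⟩
    nlinarith
  have hQm : ∀ m : ℕ, Q ((1 - c) * (1 - c / 2) ^ m) := by
    intro m
    induction m with
    | zero => exact ⟨{0}, 1, by simpa using h⟩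
    | succ m ih =>
      set s := (1 - c) * (1 - c / 2) ^ m with hs
      have hs0 : 0 ≤ s := mul_nonneg (by linarith) (pow_nonneg (by linarith) _)
      have hs1 : s ≤ 1 - c := by
        have : (1 - c / 2) ^ m ≤ 1 := pow_le_one₀ (by linarith) (by linarith)
        nlinarith
      rcases hs0.eq_or_lt with h0 | h0
      · rw [pow_succ, ← mul_assoc, ← hs, ← h0, zero_mul]; rwa [← h0] at ih
      · obtain ⟨A, n0, hA⟩ := hstep s (s * (1 - s) / 4) (by nlinarith) ih
        refine ⟨A, n0, fun n hn => (hA n hn).trans ?_⟩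
        have hps : (1 - c) * (1 - c / 2) ^ (m + 1) = s * (1 - c / 2) := by rw [hs]; ring
        rw [hps]
        nlinarith
  have hlim : Filter.Tendsto (fun m : ℕ => (1 - c) * (1 - c / 2) ^ m) Filter.atTop (nhds 0) := by
    have := (tendsto_pow_atTop_nhds_zero_of_lt_one (r := 1 - c / 2) (by linarith)
      (by linarith)).const_mul (1 - c)
    simpa using this
  obtain ⟨m, hm⟩ := (hlim.eventually (gt_mem_nhds hε)).exists
  obtain ⟨A, n0, hA⟩ := hQm m
  obtain ⟨K, hK, hAK⟩ := exists_radius A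
  refine ⟨max (K + 1) n0, by omega, fun n hn => ?_⟩
  refine (dd_anti hp (A := A) (hAK.trans fun v hv => ?_) n).trans ((hA n (by omega)).trans hm.le)
  have := mem_rect.1 hv; rw [mem_rect]; omega


end PartD

section PartE

/-- The box `N` is not connected to the image under `ψ` of the left half plane. -/
def SideN (ψ : ℤ × ℤ ↪ ℤ × ℤ) (N n : ℤ) (ω : Finset (Sym2 (ℤ × ℤ))) : Prop :=
  ∀ a ∈ box N, ∀ z : ℤ × ℤ, z.1 ≤ -n → ¬ Conn ω (ψ a) (ψ z)

lemma prob_SideN (p : ℝ) (ψ : ℤ × ℤ ↪ ℤ × ℤ) (hψ : ∀ x y, G2.Adj (ψ x) (ψ y) ↔ G2.Adj x y)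
    (N n : ℤ) (hb : (box n).map ψ = box n) :
    Ex (fun _ => p) (edges G2 (box n)) (fun ω => ind (SideN ψ N n ω)) =
    Ex (fun _ => p) (edges G2 (box n)) (fun ω => ind (SideN (Function.Embedding.refl _) N n ω)) := by
  conv_lhs => rw [← hb, Ex_edges_map ψ hψ]
  refine Ex_congr _ fun ω _ => ind_congr ?_
  simp only [SideN, Conn_map, Function.Embedding.refl_apply]

lemma SideN_anti (ψ : ℤ × ℤ ↪ ℤ × ℤ) (N n : ℤ) :
    Antitone (fun ω => ind (SideN ψ N n ω)) :=
  fun _ _ h => ind_mono fun hs a ha z hz hc => hs a ha z hz (hc.mono h)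

/-- Reflection. -/
def refR : ℤ × ℤ ↪ ℤ × ℤ := ⟨fun x => (-x.1, x.2), fun x y h => by
  simp only [Prod.mk.injEq] at h; exact Prod.ext (by omega) (by omega)⟩
/-- Swap of coordinates. -/
def refS : ℤ × ℤ ↪ ℤ × ℤ := ⟨fun x => (x.2, x.1), fun x y h => by
  simp only [Prod.mk.injEq] at h; exact Prod.ext (by omega) (by omega)⟩
/-- Rotation. -/
def refT : ℤ × ℤ ↪ ℤ × ℤ := ⟨fun x => (x.2, -x.1), fun x y h => by
  simp only [Prod.mk.injEq] at h; exact Prod.ext (by omega) (by omega)⟩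

lemma refR_apply (x : ℤ × ℤ) : refR x = (-x.1, x.2) := rfl
lemma refS_apply (x : ℤ × ℤ) : refS x = (x.2, x.1) := rfl
lemma refT_apply (x : ℤ × ℤ) : refT x = (x.2, -x.1) := rfl

lemma refR_box (n : ℤ) : (box n).map refR = box n := by
  ext v
  rw [Finset.mem_map]
  constructor
  · rintro ⟨a, ha, rfl⟩; rw [mem_rect] at ha ⊢; simp only [refR_apply]; omega
  · intro h; rw [mem_rect] at h
    exact ⟨(-v.1, v.2), by rw [mem_rect]; simp only; omega, by simp [refR_apply]⟩

lemma refS_box (n : ℤ) : (box n).map refS = box n := by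
  ext v
  rw [Finset.mem_map]
  constructor
  · rintro ⟨a, ha, rfl⟩; rw [mem_rect] at ha ⊢; simp only [refS_apply]; omega
  · intro h; rw [mem_rect] at h
    exact ⟨(v.2, v.1), by rw [mem_rect]; simp only; omega, by simp [refS_apply]⟩

lemma refT_box (n : ℤ) : (box n).map refT = box n := by
  ext v
  rw [Finset.mem_map]
  constructor
  · rintro ⟨a, ha, rfl⟩; rw [mem_rect] at ha ⊢; simp only [refT_apply]; omega
  · intro h; rw [mem_rect] at h
    exact ⟨(-v.2, v.1), by rw [mem_rect]; simp only; omega, by simp [refT_apply]⟩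

lemma sqrt_trick {p : ℝ} (hp : p ∈ Icc (0:ℝ) 1) {N n : ℤ}
    (h : dd p (box N) n ≤ 1 / 4096) :
    Ex (fun _ => p) (edges G2 (box n)) (fun ω => ind (SideN (Function.Embedding.refl _) N n ω))
      ≤ 1 / 8 := by
  set t := Ex (fun _ => p) (edges G2 (box n))
    (fun ω => ind (SideN (Function.Embedding.refl _) N n ω)) with ht
  have h1 := prob_SideN p refR (fun x y => by simp only [refR_apply, G2_adj]; omega) N n (refR_box n)
  have h2 := prob_SideN p refS (fun x y => by simp only [refS_apply, G2_adj]; omega) N n (refS_box n)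
  have h3 := prob_SideN p refT (fun x y => by simp only [refT_apply, G2_adj]; omega) N n (refT_box n)
  rw [← ht] at h1 h2 h3
  have ht0 : 0 ≤ t := Ex_ind_nonneg (fun _ => hp) _ _
  have f1 := Ex_fkg (P := fun _ => p) (fun _ => hp) (edges G2 (box n))
    (SideN_anti (Function.Embedding.refl _) N n) (SideN_anti refR N n)
  have f2 := Ex_fkg (P := fun _ => p) (fun _ => hp) (edges G2 (box n))
    (SideN_anti refS N n) (SideN_anti refT N n)
  have am : ∀ ψ φ : ℤ × ℤ ↪ ℤ × ℤ, Antitone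
      (fun ω => ind (SideN ψ N n ω) * ind (SideN φ N n ω)) := fun ψ φ ω ω' hω =>
    mul_le_mul (SideN_anti ψ N n hω) (SideN_anti φ N n hω) (ind_nonneg _) (ind_nonneg _)
  have f3 := Ex_fkg (P := fun _ => p) (fun _ => hp) (edges G2 (box n))
    (am (Function.Embedding.refl _) refR) (am refS refT)
  have f4 : Ex (fun _ => p) (edges G2 (box n)) (fun ω =>
      (ind (SideN (Function.Embedding.refl _) N n ω) * ind (SideN refR N n ω)) *
      (ind (SideN refS N n ω) * ind (SideN refT N n ω))) ≤ dd p (box N) n := by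
    refine Ex_mono (fun _ => hp) fun ω _ => ?_
    simp only [← ind_and]
    refine ind_mono ?_
    rintro ⟨⟨a1, a2⟩, a3, a4⟩ a ha ⟨z, hz, hc⟩
    rw [mem_rect] at ha
    rw [mem_Tn] at hz
    rcases hz with hz | hz | hz | hz
    · exact a1 a (mem_rect.2 ha) z hz hc
    · refine a2 (-a.1, a.2) (mem_rect.2 (by simp only; omega)) (-z.1, z.2) (by simp only; omega) ?_
      simpa [refR_apply] using hc
    · refine a3 (a.2, a.1) (mem_rect.2 (by simp only; omega)) (z.2, z.1) (by simp only; omega) ?_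
      simpa [refS_apply] using hc
    · refine a4 (-a.2, a.1) (mem_rect.2 (by simp only; omega)) (-z.2, z.1) (by simp only; omega) ?_
      simpa [refT_apply] using hc
  rw [h1, ← ht] at f1
  rw [h2, h3] at f2
  have f5 : (t * t) * (t * t) ≤ 1 / 4096 :=
    le_trans (mul_le_mul f1 f2 (by positivity) (le_trans (by positivity) f1))
      (f3.trans (f4.trans h))
  by_contra hlt
  push Not at hlt
  have : (1 / 8 : ℝ) * (1 / 8) < t * t := by nlinarith
  nlinarith

/-- Side connection probability is monotone in `p`. -/
lemma dd_anti_p {p p' : ℝ} (hp : p ∈ Icc (0:ℝ) 1) (hp' : p' ∈ Icc (0:ℝ) 1) (h : p ≤ p')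
    (A : Finset (ℤ × ℤ)) (n : ℤ) : dd p' A n ≤ dd p A n := by
  have := Ex_mono_P (P := fun _ => p) (Q := fun _ => p') (fun _ => hp) (fun _ => hp') (fun _ => h)
    (edges G2 (box n)) (f := fun ω => - ind (∀ a ∈ A, ¬ Reach ω (Tn n) a)) (by
      intro ω ω' hω
      refine neg_le_neg (ind_mono fun hs a ha hr => hs a ha (hr.mono hω)))
  have e : ∀ q : ℝ, Ex (fun _ => q) (edges G2 (box n))
      (fun ω => - ind (∀ a ∈ A, ¬ Reach ω (Tn n) a)) = - dd q A n := by
    intro q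
    have := Ex_mul_left (fun _ => q) (edges G2 (box n)) (-1)
      (fun ω => ind (∀ a ∈ A, ¬ Reach ω (Tn n) a))
    simp only [neg_one_mul] at this
    exact this
  rw [e, e] at this
  linarith


end PartE

section PartDu

/-! ### Planar duality -/

/-- Embedding of directed edge indices. -/
def em : (ℤ × ℤ) × Bool ↪ Sym2 (ℤ × ℤ) where
  toFun e := if e.2 then s(e.1, (e.1.1, e.1.2 + 1)) else s(e.1, (e.1.1 + 1, e.1.2))
  inj' := by
    rintro ⟨⟨a, b⟩, x⟩ ⟨⟨c, d⟩, y⟩ h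
    cases x <;> cases y <;> simp only [if_true, if_false, Bool.false_eq_true, Sym2.eq_iff,
      Prod.mk.injEq, and_true, and_false, reduceCtorEq] at h ⊢ <;> omega

lemma em_false (a b : ℤ) : em ((a, b), false) = s((a, b), (a + 1, b)) := rfl
lemma em_true (a b : ℤ) : em ((a, b), true) = s((a, b), (a, b + 1)) := rfl

/-- Edge indices of `[-n,n+1] × [-n,n]`. -/
noncomputable def EI (n : ℤ) : Finset ((ℤ × ℤ) × Bool) :=
  (rect (-n) n (-n) n ×ˢ {false}) ∪ (rect (-n) (n + 1) (-n) (n - 1) ×ˢ {true})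

lemma mem_EI_false {n a b : ℤ} : ((a, b), false) ∈ EI n ↔ -n ≤ a ∧ a ≤ n ∧ -n ≤ b ∧ b ≤ n := by
  simp [EI, mem_rect]; omega
lemma mem_EI_true {n a b : ℤ} :
    ((a, b), true) ∈ EI n ↔ -n ≤ a ∧ a ≤ n + 1 ∧ -n ≤ b ∧ b ≤ n - 1 := by
  simp [EI, mem_rect]; omega

/-- The rectangle `[-n,n+1] × [-n,n]`. -/
noncomputable abbrev RR (n : ℤ) : Finset (ℤ × ℤ) := rect (-n) (n + 1) (-n) n

lemma edges_RR (n : ℤ) : edges G2 (RR n) = (EI n).map em := by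
  ext e
  constructor
  · refine Sym2.inductionOn e fun x y => ?_
    obtain ⟨a, b⟩ := x
    obtain ⟨c, d⟩ := y
    rw [mk_mem_edges, mem_rect, mem_rect, G2_adj, Finset.mem_map]
    rintro ⟨⟨h1, h2⟩, (⟨h3, h4 | h4⟩ | ⟨h3, h4 | h4⟩)⟩ <;> simp only at h1 h2 h3 h4 <;> subst h3 h4
    · exact ⟨((a, b), true), mem_EI_true.2 (by omega), rfl⟩
    · exact ⟨((a, d), true), mem_EI_true.2 (by omega), by rw [em_true, Sym2.eq_swap]⟩
    · exact ⟨((a, b), false), mem_EI_false.2 (by omega), rfl⟩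
    · exact ⟨((c, b), false), mem_EI_false.2 (by omega), by rw [em_false, Sym2.eq_swap]⟩
  · intro he
    obtain ⟨⟨⟨a, b⟩, x⟩, he', rfl⟩ := Finset.mem_map.1 he
    cases x
    · rw [mem_EI_false] at he'
      rw [em_false, mk_mem_edges, mem_rect, mem_rect, G2_adj]; simp; omega
    · rw [mem_EI_true] at he'
      rw [em_true, mk_mem_edges, mem_rect, mem_rect, G2_adj]; simp; omega

/-- A step in a configuration of indices. -/
lemma em_step {η : Finset ((ℤ × ℤ) × Bool)} {a b c d : ℤ} (h : s((a, b), (c, d)) ∈ η.map em) :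
    (c = a + 1 ∧ d = b ∧ ((a, b), false) ∈ η) ∨ (a = c + 1 ∧ d = b ∧ ((c, d), false) ∈ η) ∨
    (c = a ∧ d = b + 1 ∧ ((a, b), true) ∈ η) ∨ (c = a ∧ b = d + 1 ∧ ((c, d), true) ∈ η) := by
  obtain ⟨⟨⟨u, v⟩, x⟩, he, heq⟩ := Finset.mem_map.1 h
  cases x
  · rw [em_false, Sym2.eq_iff] at heq
    simp only [Prod.mk.injEq] at heq
    rcases heq with ⟨⟨rfl, rfl⟩, h1, h2⟩ | ⟨⟨rfl, rfl⟩, h1, h2⟩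
    · exact Or.inl ⟨h1.symm, h2.symm, he⟩
    · exact Or.inr (Or.inl ⟨h1.symm, h2, he⟩)
  · rw [em_true, Sym2.eq_iff] at heq
    simp only [Prod.mk.injEq] at heq
    rcases heq with ⟨⟨rfl, rfl⟩, h1, h2⟩ | ⟨⟨rfl, rfl⟩, h1, h2⟩
    · exact Or.inr (Or.inr (Or.inl ⟨h1.symm, h2.symm, he⟩))
    · exact Or.inr (Or.inr (Or.inr ⟨h1, h2.symm, he⟩))

/-- A path carries a unit flow. -/
lemma exists_flow {η : Finset ((ℤ × ℤ) × Bool)} {z z' : ℤ × ℤ} (h : Conn (η.map em) z z') :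
    ∃ H V : ℤ → ℤ → ℤ, (∀ a b, H a b ≠ 0 → ((a, b), false) ∈ η) ∧
      (∀ a b, V a b ≠ 0 → ((a, b), true) ∈ η) ∧
      ∀ a b, H a b - H (a - 1) b + V a b - V a (b - 1) =
        (if a = z.1 ∧ b = z.2 then 1 else 0) - (if a = z'.1 ∧ b = z'.2 then 1 else 0) := by
  induction h with
  | refl => exact ⟨fun _ _ => 0, fun _ _ => 0, by simp, by simp, by simp⟩
  | @tail y y' _ hstep ih =>
    obtain ⟨H, V, hH, hV, hd⟩ := ih
    obtain ⟨c, d⟩ := y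
    obtain ⟨c', d'⟩ := y'
    rcases em_step hstep with ⟨rfl, rfl, hm⟩ | ⟨rfl, rfl, hm⟩ | ⟨rfl, rfl, hm⟩ | ⟨rfl, rfl, hm⟩
    · refine ⟨fun a b => H a b + if a = c ∧ b = d' then 1 else 0, V, ?_, hV, ?_⟩
      · intro a b hab
        by_cases hc : a = c ∧ b = d'
        · rw [hc.1, hc.2]; exact hm
        · simp only at hab; rw [if_neg hc, add_zero] at hab; exact hH a b hab
      · intro a b
        have := hd a b
        simp only at this ⊢
        split_ifs at this ⊢ <;> omega
    · refine ⟨fun a b => H a b - if a = c' ∧ b = d' then 1 else 0, V, ?_, hV, ?_⟩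
      · intro a b hab
        by_cases hc : a = c' ∧ b = d'
        · rw [hc.1, hc.2]; exact hm
        · simp only at hab; rw [if_neg hc, sub_zero] at hab; exact hH a b hab
      · intro a b
        have := hd a b
        simp only at this ⊢
        split_ifs at this ⊢ <;> omega
    · refine ⟨H, fun a b => V a b + if a = c' ∧ b = d then 1 else 0, hH, ?_, ?_⟩
      · intro a b hab
        by_cases hc : a = c' ∧ b = d
        · rw [hc.1, hc.2]; exact hm
        · simp only at hab; rw [if_neg hc, add_zero] at hab; exact hV a b hab
      · intro a b
        have := hd a b
        simp only at this ⊢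
        split_ifs at this ⊢ <;> omega
    · refine ⟨H, fun a b => V a b - if a = c' ∧ b = d' then 1 else 0, hH, ?_, ?_⟩
      · intro a b hab
        by_cases hc : a = c' ∧ b = d'
        · rw [hc.1, hc.2]; exact hm
        · simp only at hab; rw [if_neg hc, sub_zero] at hab; exact hV a b hab
      · intro a b
        have := hd a b
        simp only at this ⊢
        split_ifs at this ⊢ <;> omega

/-- The duality involution on edge indices. -/
def sgf (n : ℤ) (e : (ℤ × ℤ) × Bool) : (ℤ × ℤ) × Bool :=
  if e.2 then
    (if -n + 1 ≤ e.1.1 ∧ e.1.1 ≤ n ∧ -n ≤ e.1.2 ∧ e.1.2 ≤ n - 1 then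
      ((e.1.2 + 1, e.1.1 - 1), true) else e)
  else ((e.1.2, e.1.1), false)

lemma sgf_invol (n : ℤ) : Function.Involutive (sgf n) := by
  rintro ⟨⟨a, b⟩, x⟩
  cases x
  · simp [sgf]
  · by_cases h : -n + 1 ≤ a ∧ a ≤ n ∧ -n ≤ b ∧ b ≤ n - 1
    · have h' : -n + 1 ≤ b + 1 ∧ b + 1 ≤ n ∧ -n ≤ a - 1 ∧ a - 1 ≤ n - 1 := by omega
      simp only [sgf, if_true, if_pos h, if_pos h']
      simp
    · simp only [sgf, if_true, if_neg h]

/-- The duality involution as an embedding. -/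
def sg (n : ℤ) : (ℤ × ℤ) × Bool ↪ (ℤ × ℤ) × Bool := ⟨sgf n, (sgf_invol n).injective⟩

lemma mem_map_sg {n : ℤ} {S : Finset ((ℤ × ℤ) × Bool)} {e : (ℤ × ℤ) × Bool} :
    e ∈ S.map (sg n) ↔ sgf n e ∈ S := by
  rw [Finset.mem_map]
  constructor
  · rintro ⟨a, ha, rfl⟩; change sgf n (sgf n a) ∈ S; rwa [sgf_invol n a]
  · intro h; exact ⟨_, h, sgf_invol n e⟩

lemma EI_map (n : ℤ) : (EI n).map (sg n) = EI n := by
  ext ⟨⟨a, b⟩, x⟩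
  rw [mem_map_sg]
  cases x
  · simp only [sgf, Bool.false_eq_true, if_false]
    rw [mem_EI_false, mem_EI_false]; omega
  · by_cases h : -n + 1 ≤ a ∧ a ≤ n ∧ -n ≤ b ∧ b ≤ n - 1
    · simp only [sgf, if_true, if_pos h]
      rw [mem_EI_true, mem_EI_true]; omega
    · simp only [sgf, if_true, if_neg h]

/-- Left-right crossing of `[-n,n+1] × [-n,n]`. -/
def LR (n : ℤ) (ω : Finset (Sym2 (ℤ × ℤ))) : Prop :=
  ∃ z ∈ RR n, ∃ z' ∈ RR n, z.1 = -n ∧ z'.1 = n + 1 ∧ Conn ω z z'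

lemma no_coexist {n : ℤ} (hn : 0 ≤ n) {ω η : Finset ((ℤ × ℤ) × Bool)} (hη : η ⊆ EI n)
    (hω : ω ⊆ EI n) (h : ∀ e ∈ η, sgf n e ∉ ω) (h1 : LR n (ω.map em)) (h2 : LR n (η.map em)) :
    False := by
  obtain ⟨z, hz, z', hz', hzl, hzr, hc⟩ := h2
  obtain ⟨H, V, hH, hV, hd⟩ := exists_flow hc
  rw [mem_rect] at hz hz'
  have hH0 : ∀ a b, ¬ (-n ≤ a ∧ a ≤ n ∧ -n ≤ b ∧ b ≤ n) → H a b = 0 := by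
    intro a b hab
    by_contra hne
    exact hab (mem_EI_false.1 (hη (hH a b hne)))
  have hV0 : ∀ a b, ¬ (-n ≤ a ∧ a ≤ n + 1 ∧ -n ≤ b ∧ b ≤ n - 1) → V a b = 0 := by
    intro a b hab
    by_contra hne
    exact hab (mem_EI_true.1 (hη (hV a b hne)))
  -- the potential, parametrised by natural numbers
  set w : ℕ → ℤ → ℤ := fun m b => ∑ i ∈ Finset.range m, H b (-n + i) with hw
  have hws : ∀ m b, w (m + 1) b = w m b + H b (-n + m) := fun m b => Finset.sum_range_succ _ _
  have hw0 : ∀ b, w 0 b = 0 := fun b => by simp [hw]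
  have hvert : ∀ (b : ℤ), -n ≤ b → b + 1 ≤ n → ∀ m : ℕ,
      w m (b + 1) - w m b = - V (b + 1) (-n + m - 1) := by
    intro b hb1 hb2 m
    induction m with
    | zero => rw [hw0, hw0, hV0 _ _ (by push_cast; omega)]; simp
    | succ m ih =>
      have := hd (b + 1) (-n + m)
      rw [if_neg (by omega), if_neg (by omega)] at this
      rw [hws, hws]
      have e1 : b + 1 - 1 = b := by ring
      have e2 : -n + ((m + 1 : ℕ) : ℤ) - 1 = -n + m := by push_cast; ring
      rw [e1] at this
      rw [e2]
      linarith
  have hright : ∀ m : ℕ, (m : ℤ) ≤ 2 * n → w (2 * n + 1).toNat (-n + m) = 1 := by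
    intro m
    induction m with
    | zero =>
      intro _
      have key : ∀ m : ℕ, w m (-n) = - V (-n) (-n + m - 1) +
          if z.2 < -n + m then 1 else 0 := by
        intro m
        induction m with
        | zero => rw [hw0, hV0 _ _ (by push_cast; omega), if_neg (by push_cast; omega)]; simp
        | succ m ih =>
          have := hd (-n) (-n + m)
          rw [if_neg (c := -n = z'.1 ∧ _) (by omega), hH0 (-n - 1) _ (by omega)] at this
          have e2 : -n + ((m + 1 : ℕ) : ℤ) - 1 = -n + m := by push_cast; ring
          rw [hws, ih, e2]
          push_cast
          split_ifs at this ⊢ <;> omega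
      have := key (2 * n + 1).toNat
      have e : (((2 * n + 1).toNat : ℕ) : ℤ) = 2 * n + 1 := Int.toNat_of_nonneg (by omega)
      rw [e, hV0 _ _ (by omega), if_pos (by omega)] at this
      simpa using this
    | succ m ih =>
      intro hm
      push_cast at hm
      have h3 := ih (by omega)
      have h4 := hvert (-n + m) (by omega) (by omega) (2 * n + 1).toNat
      have e : (((2 * n + 1).toNat : ℕ) : ℤ) = 2 * n + 1 := Int.toNat_of_nonneg (by omega)
      rw [e, hV0 _ _ (by omega)] at h4
      have e3 : -n + ((m + 1 : ℕ) : ℤ) = -n + m + 1 := by push_cast; ring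
      rw [e3]; linarith
  have hconst : ∀ u v : ℤ × ℤ, s(u, v) ∈ ω.map em → w (u.1 + n).toNat u.2 = w (v.1 + n).toNat v.2 := by
    rintro ⟨a, b⟩ ⟨c, d⟩ huv
    have hhor : ∀ a b, ((a, b), false) ∈ ω → w (a + n).toNat b = w (a + 1 + n).toNat b := by
      intro a b hab
      have hr := mem_EI_false.1 (hω hab)
      have e : (a + 1 + n).toNat = (a + n).toNat + 1 := by omega
      have e2 : (((a + n).toNat : ℕ) : ℤ) = a + n := Int.toNat_of_nonneg (by omega)
      rw [e, hws, e2]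
      have : H b (-n + (a + n)) = 0 := by
        by_contra hne
        have e3 : -n + (a + n) = a := by ring
        rw [e3] at hne
        exact h _ (hH _ _ hne) (by simpa [sgf] using hab)
      rw [this, add_zero]
    have hver : ∀ a b, ((a, b), true) ∈ ω → w (a + n).toNat b = w (a + n).toNat (b + 1) := by
      intro a b hab
      have hr := mem_EI_true.1 (hω hab)
      have h4 := hvert b (by omega) (by omega) (a + n).toNat
      have e2 : (((a + n).toNat : ℕ) : ℤ) = a + n := Int.toNat_of_nonneg (by omega)
      have e3 : -n + (a + n) - 1 = a - 1 := by ring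
      rw [e2, e3] at h4
      have : V (b + 1) (a - 1) = 0 := by
        by_contra hne
        have hm := hV _ _ hne
        have hm' := mem_EI_true.1 (hη hm)
        refine h _ hm ?_
        have hcond : -n + 1 ≤ b + 1 ∧ b + 1 ≤ n ∧ -n ≤ a - 1 ∧ a - 1 ≤ n - 1 := by omega
        simp only [sgf, if_true, if_pos hcond]
        simpa using hab
      rw [this] at h4
      linarith
    rcases em_step huv with ⟨rfl, rfl, hm⟩ | ⟨rfl, rfl, hm⟩ | ⟨rfl, rfl, hm⟩ | ⟨rfl, rfl, hm⟩
    · exact hhor _ _ hm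
    · exact (hhor _ _ hm).symm
    · exact hver _ _ hm
    · exact (hver _ _ hm).symm
  obtain ⟨y, hy, y', hy', hyl, hyr, hcy⟩ := h1
  have hcon : ∀ v, Conn (ω.map em) y v → w (y.1 + n).toNat y.2 = w (v.1 + n).toNat v.2 := by
    intro v hv
    induction hv with
    | refl => rfl
    | tail _ hbc ih => exact ih.trans (hconst _ _ hbc)
  have h5 := hcon y' hcy
  rw [mem_rect] at hy hy'
  have e1 : (y.1 + n).toNat = 0 := by omega
  have e2 : (y'.1 + n).toNat = (2 * n + 1).toNat := by omega
  have h6 := hright (y'.2 + n).toNat (by omega)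
  have e3 : -n + (((y'.2 + n).toNat : ℕ) : ℤ) = y'.2 := by omega
  rw [e3] at h6
  rw [e1, e2, hw0, h6] at h5
  omega

lemma LR_half {n : ℤ} (hn : 0 ≤ n) {p : ℝ} (hp0 : 0 ≤ p) (hp : p ≤ 1 / 2) :
    Ex (fun _ => p) (edges G2 (RR n)) (fun ω => ind (LR n ω)) ≤ 1 / 2 := by
  rw [edges_RR, Ex_map]
  set g : Finset ((ℤ × ℤ) × Bool) → ℝ := fun A => ind (LR n (A.map em)) with hg
  have hmono : Monotone g := by
    intro A B hAB
    refine ind_mono ?_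
    rintro ⟨z, hz, z', hz', h1, h2, hc⟩
    exact ⟨z, hz, z', hz', h1, h2, hc.mono (Finset.map_subset_map.2 hAB)⟩
  have h1 : Ex (fun _ => p) (EI n) g ≤ Ex (fun _ => 1 - p) (EI n) g :=
    Ex_mono_P (fun _ => ⟨hp0, by linarith⟩) (fun _ => ⟨by linarith, by linarith⟩)
      (fun _ => by linarith) _ hmono
  have h2 : Ex (fun _ => 1 - p) (EI n) g =
      Ex (fun _ => p) (EI n) (fun A => g ((EI n \ A).map (sg n))) := by
    rw [Ex_compl (fun _ => p) (EI n) (fun A => g (A.map (sg n)))]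
    conv_lhs => rw [← EI_map n, Ex_map]
  have h3 : Ex (fun _ => p) (EI n) g + Ex (fun _ => 1 - p) (EI n) g ≤ 1 := by
    rw [h2, ← Ex_add]
    refine le_trans (Ex_mono (g := fun _ => (1:ℝ)) (fun _ => ⟨hp0, by linarith⟩) fun A hA => ?_)
      (Ex_const _ _ _).le
    by_cases c1 : LR n (A.map em)
    · by_cases c2 : LR n (((EI n \ A).map (sg n)).map em)
      · exfalso
        refine no_coexist hn ?_ hA ?_ c1 c2
        · conv_rhs => rw [← EI_map n]
          exact Finset.map_subset_map.2 Finset.sdiff_subset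
        · intro e he
          rw [mem_map_sg, Finset.mem_sdiff] at he
          exact he.2
      · simp only [hg]; rw [ind_false c2, ind_true c1]; norm_num
    · simp only [hg]; rw [ind_false c1, zero_add]; exact ind_le_one _
  change Ex (fun _ => p) (EI n) g ≤ 1 / 2
  linarith


end PartDu

section PartFp

/-! ### Disjoint arms and the counting argument -/

/-- Reflection about the line `x = 1/2`. -/
def refQ : ℤ × ℤ ↪ ℤ × ℤ := ⟨fun x => (1 - x.1, x.2), fun x y h => by
  simp only [Prod.mk.injEq] at h; exact Prod.ext (by omega) (by omega)⟩

lemma refQ_apply (x : ℤ × ℤ) : refQ x = (1 - x.1, x.2) := rfl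

lemma refQ_adj (x y : ℤ × ℤ) : G2.Adj (refQ x) (refQ y) ↔ G2.Adj x y := by
  simp only [refQ_apply, G2_adj]; omega

/-- Two disjoint arms from a box to the left and right sides of the rectangle. -/
def UU (N n : ℤ) (ω : Finset (Sym2 (ℤ × ℤ))) : Prop :=
  ∃ a ∈ box (N + 1), ∃ b ∈ box (N + 1), ∃ z z' : ℤ × ℤ, z.1 ≤ -n ∧ n + 1 ≤ z'.1 ∧
    Conn ω a z ∧ Conn ω b z' ∧ ¬ Conn ω a b

lemma prob_UU {p : ℝ} (hp0 : 0 ≤ p) (hp : p ≤ 1 / 2) {N n : ℤ} (hN : 0 ≤ N) (hn : N < n)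
    (h : Ex (fun _ => p) (edges G2 (box n))
      (fun ω => ind (SideN (Function.Embedding.refl _) N n ω)) ≤ 1 / 8) :
    1 / 4 ≤ Ex (fun _ => p) (edges G2 (RR n)) (fun ω => ind (UU N n ω)) := by
  have hpI : p ∈ Icc (0:ℝ) 1 := ⟨hp0, by linarith⟩
  have s1 : box n ⊆ RR n := by intro v hv; rw [mem_rect] at hv ⊢; omega
  have s2 : (box n).map refQ ⊆ RR n := by
    intro v hv
    obtain ⟨a, ha, rfl⟩ := Finset.mem_map.1 hv
    rw [mem_rect] at ha ⊢; simp only [refQ_apply]; omega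
  have x1 : Ex (fun _ => p) (edges G2 (RR n))
      (fun ω => ind (SideN (Function.Embedding.refl _) N n (res ω (box n : Finset (ℤ × ℤ))))) ≤ 1 / 8 := by
    rw [Ex_res G2 (fun _ => p) s1 (fun ω => ind (SideN (Function.Embedding.refl _) N n ω))]
    exact h
  have x2 : Ex (fun _ => p) (edges G2 (RR n))
      (fun ω => ind (SideN refQ N n (res ω ((box n).map refQ : Finset (ℤ × ℤ))))) ≤ 1 / 8 := by
    rw [Ex_res G2 (fun _ => p) s2 (fun ω => ind (SideN refQ N n ω)),
      Ex_edges_map refQ refQ_adj]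
    refine le_trans (le_of_eq (Ex_congr _ fun ω _ => ind_congr ?_)) h
    simp only [SideN, Conn_map, Function.Embedding.refl_apply]
  have x3 := LR_half (n := n) (by omega) hp0 hp
  have key : Ex (fun _ => p) (edges G2 (RR n)) (fun ω =>
      ((1 - ind (SideN (Function.Embedding.refl _) N n (res ω (box n : Finset (ℤ × ℤ))))) -
      ind (SideN refQ N n (res ω ((box n).map refQ : Finset (ℤ × ℤ))))) - ind (LR n ω)) ≤
      Ex (fun _ => p) (edges G2 (RR n)) (fun ω => ind (UU N n ω)) := by
    refine Ex_mono (fun _ => hpI) fun ω hω => ?_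
    have n1 := ind_nonneg (SideN (Function.Embedding.refl _) N n (res ω (box n : Finset (ℤ × ℤ))))
    have n2 := ind_nonneg (SideN refQ N n (res ω ((box n).map refQ : Finset (ℤ × ℤ))))
    have n3 := ind_nonneg (LR n ω)
    have n4 := ind_nonneg (UU N n ω)
    by_cases c1 : SideN (Function.Embedding.refl _) N n (res ω (box n : Finset (ℤ × ℤ)))
    · rw [ind_true c1]; linarith
    by_cases c2 : SideN refQ N n (res ω ((box n).map refQ : Finset (ℤ × ℤ)))
    · rw [ind_true c2]; linarith
    by_cases c3 : LR n ω
    · rw [ind_true c3]; linarith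
    have hU : UU N n ω := by
      simp only [SideN, not_forall, not_not] at c1 c2
      obtain ⟨a, ha, z, hz, hc1⟩ := c1
      obtain ⟨b, hb, z', hz', hc2⟩ := c2
      have hc1' : Conn ω a z := hc1.mono (res_subset _ _)
      have hc2' : Conn ω (refQ b) (refQ z') := hc2.mono (res_subset _ _)
      rw [mem_rect] at ha hb
      refine ⟨a, mem_rect.2 (by omega), refQ b, mem_rect.2 (by simp only [refQ_apply]; omega),
        z, refQ z', hz, by simp only [refQ_apply]; omega, hc1', hc2', fun hab => c3 ?_⟩
      have m1 : z ∈ RR n := conn_mem_of_edges hω (mem_rect.2 (by omega)) hc1'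
      have m2 : refQ z' ∈ RR n := conn_mem_of_edges hω
        (mem_rect.2 (by simp only [refQ_apply]; omega)) hc2'
      refine ⟨z, m1, refQ z', m2, ?_, ?_, hc1'.symm.trans (hab.trans hc2')⟩
      · rw [mem_rect] at m1; omega
      · rw [mem_rect] at m2; simp only [refQ_apply] at m2 ⊢; omega
    rw [ind_true hU]; linarith
  rw [Ex_sub, Ex_sub, Ex_sub, Ex_const] at key
  linarith

/-- The inner boundary of the box. -/
noncomputable def bdL (L : ℤ) : Finset (ℤ × ℤ) := box L \ box (L - 1)

/-- Two disjoint arms from `x + box (N+1)` to the boundary of the box `L`. -/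
def UX (N L : ℤ) (x : ℤ × ℤ) (ω : Finset (Sym2 (ℤ × ℤ))) : Prop :=
  ∃ a ∈ (box (N + 1)).map (tr x), ∃ b ∈ (box (N + 1)).map (tr x), ∃ z ∈ bdL L, ∃ z' ∈ bdL L,
    Conn ω a z ∧ Conn ω b z' ∧ ¬ Conn ω a b

lemma box_tr0 (L : ℤ) : (box L).map (tr 0) = box L := by
  ext v; rw [mem_map_tr, sub_zero]

lemma prob_UX {p : ℝ} (hp : p ∈ Icc (0:ℝ) 1) {N L : ℤ} {x : ℤ × ℤ}
    (hx : (box (N + 1)).map (tr x) ⊆ box L) (hx1 : |x.1| ≤ L) (hx2 : |x.2| ≤ L)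
    (h : 1 / 4 ≤ Ex (fun _ => p) (edges G2 (RR (2 * L))) (fun ω => ind (UU N (2 * L) ω))) :
    1 / 4 ≤ Ex (fun _ => p) (edges G2 (box L)) (fun ω => ind (UX N L x ω)) := by
  rw [abs_le] at hx1 hx2
  have hsub : box L ⊆ (RR (2 * L)).map (tr x) := by
    intro v hv; rw [mem_map_tr]; rw [mem_rect] at hv ⊢
    simp only [Prod.fst_sub, Prod.snd_sub]; omega
  rw [← Ex_res G2 (fun _ => p) hsub, Ex_edges_map (tr x) (tr_adj x)]
  refine h.trans (Ex_mono (fun _ => hp) fun ω hω => ind_mono ?_)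
  rintro ⟨a, ha, b, hb, z, z', hz, hz', hc1, hc2, hc3⟩
  have hω' : ω.map (tr x).sym2Map ⊆ edges G2 ((RR (2 * L)).map (tr x)) := by
    rw [edges_map (tr x) (tr_adj x)]; exact Finset.map_subset_map.2 hω
  have hm : ∀ c ∈ box (N + 1), tr x c ∈ (box L).map (tr 0) := fun c hc => by
    rw [box_tr0]; exact hx (Finset.mem_map_of_mem _ hc)
  obtain ⟨y, hy, hy1, hyc⟩ := reach_local (x := 0) (n := L) hω' (hm a ha) (z := tr x z)
    (by rw [box_tr0, mem_rect, tr_apply]; simp only [Prod.fst_add, Prod.snd_add]; omega)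
    (Conn_map.2 hc1)
  obtain ⟨y', hy', hy1', hyc'⟩ := reach_local (x := 0) (n := L) hω' (hm b hb) (z := tr x z')
    (by rw [box_tr0, mem_rect, tr_apply]; simp only [Prod.fst_add, Prod.snd_add]; omega)
    (Conn_map.2 hc2)
  rw [box_tr0] at hy hy1 hy' hy1' hyc hyc'
  exact ⟨tr x a, Finset.mem_map_of_mem _ ha, tr x b, Finset.mem_map_of_mem _ hb, y,
    Finset.mem_sdiff.2 ⟨hy, hy1⟩, y', Finset.mem_sdiff.2 ⟨hy', hy1'⟩, hyc, hyc',
    fun hab => hc3 (Conn_map.1 (hab.mono (res_subset _ _)))⟩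

open Classical in
/-- Minimal representatives of boundary clusters. -/
noncomputable def reps (L : ℤ) (ω : Finset (Sym2 (ℤ × ℤ))) : Finset (ℤ × ℤ) :=
  (bdL L).filter (fun z => ∀ w ∈ bdL L, Conn ω z w → Encodable.encode z ≤ Encodable.encode w)

lemma reps_anti (L : ℤ) {ω ω' : Finset (Sym2 (ℤ × ℤ))} (h : ω ⊆ ω') : reps L ω' ⊆ reps L ω := by
  intro z hz
  simp only [reps, Finset.mem_filter] at hz ⊢
  exact ⟨hz.1, fun w hw hc => hz.2 w hw (hc.mono h)⟩

lemma exists_rep {L : ℤ} {ω : Finset (Sym2 (ℤ × ℤ))} {a : ℤ × ℤ} (ha : a ∈ bdL L) :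
    ∃ r ∈ reps L ω, Conn ω a r := by
  classical
  obtain ⟨r, hr, hmin⟩ := Finset.exists_min_image ((bdL L).filter (fun w => Conn ω a w))
    (fun w => Encodable.encode w) ⟨a, by simp [ha, Conn.refl]⟩
  rw [Finset.mem_filter] at hr
  refine ⟨r, ?_, hr.2⟩
  simp only [reps, Finset.mem_filter]
  exact ⟨hr.1, fun w hw hc => hmin w (Finset.mem_filter.2 ⟨hw, hr.2.trans hc⟩)⟩

lemma reps_strict {L : ℤ} {ω ω' : Finset (Sym2 (ℤ × ℤ))} (h : ω ⊆ ω') {a b : ℤ × ℤ}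
    (ha : a ∈ bdL L) (hb : b ∈ bdL L) (hab : ¬ Conn ω a b) (hab' : Conn ω' a b) :
    (reps L ω').card + 1 ≤ (reps L ω).card := by
  obtain ⟨r, hr, hr1⟩ := exists_rep (ω := ω) ha
  obtain ⟨s, hs, hs1⟩ := exists_rep (ω := ω) hb
  have hne : r ≠ s := fun e => hab (hr1.trans (e ▸ hs1.symm))
  have hrs : Conn ω' r s := (hr1.mono h).symm.trans (hab'.trans (hs1.mono h))
  refine Finset.card_lt_card ⟨reps_anti L h, fun hsub => ?_⟩
  have h1 := hsub hr
  have h2 := hsub hs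
  simp only [reps, Finset.mem_filter] at h1 h2
  exact hne (Encodable.encode_injective
    (le_antisymm (h1.2 s h2.1 hrs) (h2.2 r h1.1 hrs.symm)))

/-- Number of boundary clusters. -/
noncomputable def MM (L : ℤ) (ω : Finset (Sym2 (ℤ × ℤ))) : ℝ := (reps L ω).card

lemma MM_anti (L : ℤ) : Antitone (MM L) := fun _ _ h => by
  unfold MM; exact_mod_cast Finset.card_le_card (reps_anti L h)

lemma MM_le {L : ℤ} (hL : 1 ≤ L) (ω : Finset (Sym2 (ℤ × ℤ))) : MM L ω ≤ 8 * L := by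
  have h1 : (reps L ω).card ≤ (bdL L).card := Finset.card_le_card
    (fun z hz => by simp only [reps, Finset.mem_filter] at hz; exact hz.1)
  have hsub : box (L - 1) ⊆ box L := by intro v hv; rw [mem_rect] at hv ⊢; omega
  have h2 : (bdL L).card + (box (L - 1)).card = (box L).card :=
    Finset.card_sdiff_add_card_eq_card hsub
  have h3 : ∀ m : ℤ, 0 ≤ m → ((box m).card : ℤ) = (2 * m + 1) * (2 * m + 1) := by
    intro m hm
    simp only [box, rect, Finset.card_product, Int.card_Icc]
    push_cast
    rw [Int.toNat_of_nonneg (by omega)]; ring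
  have h4 := h3 L (by omega)
  have h5 := h3 (L - 1) (by omega)
  have h6 : ((bdL L).card : ℤ) = 8 * L := by
    have : ((bdL L).card : ℤ) + (box (L - 1)).card = (box L).card := by exact_mod_cast h2
    rw [h4, h5] at this; linarith
  unfold MM
  calc ((reps L ω).card : ℝ) ≤ ((bdL L).card : ℝ) := by exact_mod_cast h1
    _ = 8 * L := by exact_mod_cast h6

lemma conn_rect (a b c d : ℤ) {u v : ℤ × ℤ} (hu : u ∈ rect a b c d) (hv : v ∈ rect a b c d) :
    Conn (edges G2 (rect a b c d)) u v := by
  rw [mem_rect] at hu hv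
  have hor : ∀ (m : ℕ) (x y : ℤ), a ≤ x → x + m ≤ b → c ≤ y → y ≤ d →
      Conn (edges G2 (rect a b c d)) (x, y) (x + m, y) := by
    intro m
    induction m with
    | zero => intro x y _ _ _ _; simpa using Conn.refl _ _
    | succ m ih =>
      intro x y h1 h2 h3 h4
      push_cast at h2
      refine (ih x y h1 (by omega) h3 h4).trans (Conn.single ?_)
      rw [mk_mem_edges, mem_rect, mem_rect, G2_adj]; push_cast; simp; omega
  have ver : ∀ (m : ℕ) (x y : ℤ), a ≤ x → x ≤ b → c ≤ y → y + m ≤ d →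
      Conn (edges G2 (rect a b c d)) (x, y) (x, y + m) := by
    intro m
    induction m with
    | zero => intro x y _ _ _ _; simpa using Conn.refl _ _
    | succ m ih =>
      intro x y h1 h2 h3 h4
      push_cast at h4
      refine (ih x y h1 h2 h3 (by omega)).trans (Conn.single ?_)
      rw [mk_mem_edges, mem_rect, mem_rect, G2_adj]; push_cast; simp; omega
  have key : ∀ w : ℤ × ℤ, (a ≤ w.1 ∧ w.1 ≤ b) ∧ (c ≤ w.2 ∧ w.2 ≤ d) →
      Conn (edges G2 (rect a b c d)) (a, c) w := by
    rintro ⟨x, y⟩ ⟨⟨h1, h2⟩, h3, h4⟩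
    simp only at h1 h2 h3 h4
    have e1 := hor (x - a).toNat a c le_rfl (by omega) le_rfl (by omega)
    have e2 := ver (y - c).toNat x c h1 h2 le_rfl (by omega)
    rw [show a + ((x - a).toNat : ℤ) = x by omega] at e1
    rw [show c + ((y - c).toNat : ℤ) = y by omega] at e2
    exact e1.trans e2
  exact (key u hu).symm.trans (key v hv)

lemma conn_sbox (x : ℤ × ℤ) (m : ℤ) {u v : ℤ × ℤ} (hu : u ∈ (box m).map (tr x))
    (hv : v ∈ (box m).map (tr x)) : Conn (edges G2 ((box m).map (tr x))) u v := by
  rw [edges_map (tr x) (tr_adj x)]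
  obtain ⟨a, ha, rfl⟩ := Finset.mem_map.1 hu
  obtain ⟨b, hb, rfl⟩ := Finset.mem_map.1 hv
  exact Conn_map.2 (conn_rect _ _ _ _ ha hb)

lemma UX_drop {N L : ℤ} {x : ℤ × ℤ} {ω : Finset (Sym2 (ℤ × ℤ))} (h : UX N L x ω) :
    1 ≤ MM L ω - MM L (ω ∪ edges G2 ((box (N + 1)).map (tr x))) := by
  obtain ⟨a, ha, b, hb, z, hz, z', hz', h1, h2, h3⟩ := h
  have hs : ω ⊆ ω ∪ edges G2 ((box (N + 1)).map (tr x)) := Finset.subset_union_left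
  have := reps_strict hs hz hz' (fun hc => h3 (h1.trans (hc.trans h2.symm)))
    ((h1.mono hs).symm.trans (((conn_sbox x (N + 1) ha hb).mono Finset.subset_union_right).trans
      (h2.mono hs)))
  have h' : ((reps L (ω ∪ edges G2 ((box (N + 1)).map (tr x)))).card : ℝ) + 1 ≤ (reps L ω).card := by
    exact_mod_cast this
  unfold MM; linarith

lemma telescoping {α : Type*} [DecidableEq α] {p : ℝ} (hp : p ∈ Icc (0:ℝ) 1) {F : Finset α}
    {M : Finset α → ℝ} (hM : Antitone M) (D : Finset α) (hD : D ⊆ F) :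
    p ^ D.card * Ex (fun _ => p) F (fun ω => M ω - M (ω ∪ D)) ≤
      ∑ e ∈ D, Ex (fun _ => p) F (fun ω => M (ω.erase e) - M (insert e ω)) := by
  have hnn : ∀ e ω, 0 ≤ M (Finset.erase ω e) - M (insert e ω) := fun e ω =>
    sub_nonneg.2 (hM ((Finset.erase_subset _ _).trans (Finset.subset_insert _ _)))
  induction D using Finset.induction_on with
  | empty => simp [Ex_const]
  | insert a D ha ih =>
    have hD' := (Finset.subset_insert a D).trans hD
    have ih := ih hD'
    rw [Finset.sum_insert ha, Finset.card_insert_of_notMem ha]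
    have h1 : Ex (fun _ => p) F (fun ω => M ω - M (ω ∪ insert a D)) ≤
        Ex (fun _ => p) F (fun ω => (M ω - M (ω ∪ D)) +
          (M ((ω ∪ D).erase a) - M (insert a (ω ∪ D)))) := by
      refine Ex_mono (fun _ => hp) fun ω _ => ?_
      rw [Finset.union_insert]
      have := hM (Finset.erase_subset a (ω ∪ D))
      linarith
    rw [Ex_add] at h1
    have h2 := Ex_union_tol hp D hD' (f := fun ω => M (ω.erase a) - M (insert a ω)) (hnn a)
    have h3 : 0 ≤ Ex (fun _ => p) F (fun ω => M ω - M (ω ∪ D)) :=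
      Ex_nonneg (fun _ => hp) fun ω _ => sub_nonneg.2 (hM Finset.subset_union_left)
    have h4 : 0 ≤ Ex (fun _ => p) F (fun ω => M ((ω ∪ D).erase a) - M (insert a (ω ∪ D))) :=
      Ex_nonneg (fun _ => hp) fun ω _ => hnn _ _
    have h5 : 0 ≤ p ^ D.card := pow_nonneg hp.1 _
    have h6 : p ^ (D.card + 1) ≤ p ^ D.card := pow_le_pow_of_le_one hp.1 hp.2 (Nat.le_succ _)
    have h7 : 0 ≤ p ^ (D.card + 1) := pow_nonneg hp.1 _
    calc _ ≤ p ^ (D.card + 1) * _ := mul_le_mul_of_nonneg_left h1 h7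
      _ ≤ p ^ D.card * _ := mul_le_mul_of_nonneg_right h6 (by linarith)
      _ ≤ _ := by rw [mul_add]; linarith

lemma slope_bound {p p1 : ℝ} (h1 : 0 ≤ p1) (hpp : p1 ≤ p) (hp : p ≤ 1 / 2) {N : ℤ} (hN : 0 ≤ N)
    (hU : ∀ n, N < n →
      1 / 4 ≤ Ex (fun _ => p) (edges G2 (RR n)) (fun ω => ind (UU N n ω))) (J : ℕ) :
    ∑ e ∈ edges G2 (box ((2 * N + 3) * (J + 1))),
      Ex (fun _ => p) (edges G2 (box ((2 * N + 3) * (J + 1))))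
        (fun ω => MM ((2 * N + 3) * (J + 1)) (insert e ω) -
          MM ((2 * N + 3) * (J + 1)) (ω.erase e)) ≤
      - ((J : ℝ) ^ 2 * (p1 ^ (edges G2 (box (N + 1))).card / 4)) := by
  set h : ℤ := 2 * N + 3 with hh
  set L : ℤ := h * (J + 1) with hL
  set F := edges G2 (box L) with hF
  have hpI : p ∈ Icc (0:ℝ) 1 := ⟨by linarith, by linarith⟩
  set X : ℕ × ℕ → ℤ × ℤ := fun i => (h * i.1, h * i.2) with hX
  set D : ℕ × ℕ → Finset (Sym2 (ℤ × ℤ)) := fun i => edges G2 ((box (N + 1)).map (tr (X i))) with hD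
  set g : Sym2 (ℤ × ℤ) → ℝ := fun e => Ex (fun _ => p) F
    (fun ω => MM L (ω.erase e) - MM L (insert e ω)) with hg
  have hneg : ∑ e ∈ F, Ex (fun _ => p) F (fun ω => MM L (insert e ω) - MM L (ω.erase e)) =
      - ∑ e ∈ F, g e := by
    rw [← Finset.sum_neg_distrib]
    refine Finset.sum_congr rfl fun e _ => ?_
    rw [hg]
    simp only [Ex_sub]
    ring
  rw [hneg, neg_le_neg_iff]
  set I := Finset.range J ×ˢ Finset.range J with hI
  have hbd : ∀ i ∈ I, (0 ≤ (X i).1 ∧ (X i).1 ≤ h * J - h) ∧ (0 ≤ (X i).2 ∧ (X i).2 ≤ h * J - h) := by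
    intro i hi
    rw [hI, Finset.mem_product, Finset.mem_range, Finset.mem_range] at hi
    have a1 : (i.1 : ℤ) + 1 ≤ J := by exact_mod_cast hi.1
    have a2 : (i.2 : ℤ) + 1 ≤ J := by exact_mod_cast hi.2
    have a3 : (0:ℤ) ≤ i.1 := by positivity
    have a4 : (0:ℤ) ≤ i.2 := by positivity
    have a5 : 0 < h := by omega
    simp only [hX]
    refine ⟨⟨by positivity, ?_⟩, by positivity, ?_⟩ <;> nlinarith
  have hLe : L = h * J + h := by rw [hL]; ring
  have hhJ : 0 ≤ h * J := by positivity
  have hsubV : ∀ i ∈ I, (box (N + 1)).map (tr (X i)) ⊆ box L := by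
    intro i hi v hv
    have := hbd i hi
    rw [mem_sbox] at hv
    rw [mem_rect]
    omega
  have hsub : ∀ i ∈ I, D i ⊆ F := fun i hi => edges_mono G2 (hsubV i hi)
  have hgn : ∀ e, 0 ≤ g e := fun e => Ex_nonneg (fun _ => hpI) fun ω _ =>
    sub_nonneg.2 (MM_anti L ((Finset.erase_subset _ _).trans (Finset.subset_insert _ _)))
  have hdisj : Set.PairwiseDisjoint (I : Set (ℕ × ℕ)) D := by
    intro i _ j _ hij
    refine Finset.disjoint_left.2 fun e => ?_
    refine Sym2.inductionOn e fun u v => ?_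
    intro he1 he2
    have b1 := (mk_mem_edges.1 he1).1.1
    have b2 := (mk_mem_edges.1 he2).1.1
    rw [mem_sbox] at b1 b2
    simp only [hX] at b1 b2
    apply hij
    have aux : ∀ s t : ℤ, h * s - h * t ≤ 2 * N + 2 → s ≤ t := by
      intro s t hst
      by_contra hlt
      push Not at hlt
      have : t + 1 ≤ s := hlt
      have : h * (t + 1) ≤ h * s := mul_le_mul_of_nonneg_left this (by omega)
      have e : h * (t + 1) = h * t + h := by ring
      omega
    have c1 := aux i.1 j.1 (by omega)
    have c2 := aux j.1 i.1 (by omega)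
    have c3 := aux i.2 j.2 (by omega)
    have c4 := aux j.2 i.2 (by omega)
    exact Prod.ext (by omega) (by omega)
  calc (J : ℝ) ^ 2 * (p1 ^ (edges G2 (box (N + 1))).card / 4)
      = ∑ i ∈ I, p1 ^ (edges G2 (box (N + 1))).card / 4 := by
        rw [Finset.sum_const, hI, Finset.card_product, Finset.card_range, nsmul_eq_mul]
        push_cast; ring
    _ ≤ ∑ i ∈ I, ∑ e ∈ D i, g e := by
        refine Finset.sum_le_sum fun i hi => ?_
        have b := hbd i hi
        have t1 := telescoping hpI (MM_anti L) (D i) (hsub i hi)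
        have t2 := prob_UX hpI (hsubV i hi) (by rw [abs_le]; omega) (by rw [abs_le]; omega)
          (hU (2 * L) (by omega))
        have t3 : Ex (fun _ => p) F (fun ω => ind (UX N L (X i) ω)) ≤
            Ex (fun _ => p) F (fun ω => MM L ω - MM L (ω ∪ D i)) := by
          refine Ex_mono (fun _ => hpI) fun ω _ => ?_
          by_cases c : UX N L (X i) ω
          · rw [ind_true c]; exact UX_drop c
          · rw [ind_false c]; exact sub_nonneg.2 (MM_anti L Finset.subset_union_left)
        have t4 : (D i).card = (edges G2 (box (N + 1))).card := by
          simp only [hD]; rw [edges_map (tr (X i)) (tr_adj (X i)), Finset.card_map]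
        rw [t4] at t1
        have t5 : p1 ^ (edges G2 (box (N + 1))).card ≤ p ^ (edges G2 (box (N + 1))).card :=
          pow_le_pow_left₀ h1 hpp _
        have t6 : 0 ≤ p1 ^ (edges G2 (box (N + 1))).card := pow_nonneg h1 _
        refine le_trans ?_ t1
        have t7 := t2.trans t3
        calc _ = p1 ^ (edges G2 (box (N + 1))).card * (1 / 4) := by ring
          _ ≤ _ := mul_le_mul t5 t7 (by norm_num) (by linarith)
    _ = ∑ e ∈ I.biUnion D, g e := (Finset.sum_biUnion hdisj).symm
    _ ≤ ∑ e ∈ F, g e := Finset.sum_le_sum_of_subset_of_nonneg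
        (Finset.biUnion_subset.2 hsub) fun e _ _ => hgn e

theorem planar_main {p0 : ℝ} (hp0 : 0 ≤ p0) (hp : p0 < 1 / 2) :
    ∃ S : Finset (ℤ × ℤ), 0 ∈ S ∧ phi G2 nb2 (fun _ => p0) S 0 < 1 := by
  by_contra hcon
  push Not at hcon
  have hpos : 0 < p0 := by
    rcases hp0.eq_or_lt with h | h
    · exfalso
      have := hcon {0} (by simp)
      rw [← h] at this
      simp [phi] at this
      linarith
    · exact h
  set p1 : ℝ := (p0 + 1 / 2) / 2 with hp1
  have h01 : p0 < p1 := by rw [hp1]; linarith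
  have h1h : p1 < 1 / 2 := by rw [hp1]; linarith
  have hI1 : p1 ∈ Icc (0:ℝ) 1 := ⟨by linarith, by linarith⟩
  have hc : 0 < 1 - Real.exp (-(p1 - p0)) := by
    have : Real.exp (-(p1 - p0)) < 1 := by rw [Real.exp_lt_one_iff]; linarith
    linarith
  have harm : ∀ n : ℤ, 1 ≤ n → dd p1 {0} n ≤ 1 - (1 - Real.exp (-(p1 - p0))) := by
    intro n hn
    have h := dct_planar hpos h01.le (by linarith) hcon n hn
    have e : dd p1 {0} n = 1 - Ex (fun _ => p1) (edges G2 (box n))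
        (fun ω => ind (Reach ω (Tn n) 0)) := by
      rw [← Ex_ind_not]
      exact Ex_congr _ fun ω _ => ind_congr (by simp)
    rw [e]; linarith
  obtain ⟨N, hN, hwhp⟩ := whp hI1 hc harm (ε := 1 / 4096) (by norm_num)
  have hU : ∀ p, p1 ≤ p → p ≤ 1 / 2 → ∀ n, N < n →
      1 / 4 ≤ Ex (fun _ => p) (edges G2 (RR n)) (fun ω => ind (UU N n ω)) := by
    intro p h1 h2 n hn
    have hI : p ∈ Icc (0:ℝ) 1 := ⟨by linarith, by linarith⟩
    exact prob_UU hI.1 h2 (by omega) hn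
      (sqrt_trick hI ((dd_anti_p hI1 hI h1 _ _).trans (hwhp n hn)))
  set κ : ℝ := p1 ^ (edges G2 (box (N + 1))).card / 4 with hκ
  have hκ0 : 0 < κ := by
    have : 0 < p1 := by linarith
    positivity
  have hfin : ∀ J : ℕ, (1 / 2 - p1) * ((J : ℝ) ^ 2 * κ) ≤ 8 * ((2 * N + 3) * (J + 1)) := by
    intro J
    set L : ℤ := (2 * N + 3) * (J + 1) with hL
    have hL1 : 1 ≤ L := by rw [hL]; nlinarith [Int.natCast_nonneg J]
    set f : ℝ → ℝ := fun p => Ex (fun _ => p) (edges G2 (box L)) (MM L) with hf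
    have hder := fun p => Ex_russo p (edges G2 (box L)) (MM L)
    have hmv := Convex.image_sub_le_mul_sub_of_deriv_le (f := f) (D := Icc p1 (1 / 2))
      (convex_Icc _ _) (fun p _ => (hder p).continuousAt.continuousWithinAt)
      (fun p _ => (hder p).differentiableAt.differentiableWithinAt)
      (C := -((J : ℝ) ^ 2 * κ)) (fun p hp => by
        rw [interior_Icc] at hp
        rw [(hder p).deriv]
        exact slope_bound hI1.1 hp.1.le hp.2.le (by omega) (hU p hp.1.le hp.2.le) J)
      p1 ⟨le_rfl, h1h.le⟩ (1 / 2) ⟨h1h.le, le_rfl⟩ h1h.le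
    have b1 : f p1 ≤ 8 * L := by
      have : f p1 ≤ Ex (fun _ => p1) (edges G2 (box L)) (fun _ => (8 * L : ℝ)) :=
        Ex_mono (fun _ => hI1) fun ω _ => MM_le hL1 ω
      rwa [Ex_const] at this
    have b2 : 0 ≤ f (1 / 2) := Ex_nonneg (fun _ => ⟨by norm_num, by norm_num⟩) fun ω _ => by
      unfold MM; positivity
    have b3 : (L : ℝ) = (2 * N + 3) * (J + 1) := by rw [hL]; push_cast; ring
    rw [← b3]
    linarith
  have hδ : 0 < (1 / 2 - p1) * κ := mul_pos (by linarith) hκ0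
  have hNr : (1:ℝ) ≤ N := by exact_mod_cast hN
  obtain ⟨J, hJ⟩ := exists_nat_gt (16 * (2 * N + 3) / ((1 / 2 - p1) * κ) + 1)
  have hJ1 : (1:ℝ) < J := by
    have : 0 ≤ 16 * (2 * (N:ℝ) + 3) / ((1 / 2 - p1) * κ) := by positivity
    linarith
  have hJ2 : 16 * (2 * (N:ℝ) + 3) < J * ((1 / 2 - p1) * κ) := by
    rw [← div_lt_iff₀ hδ]; linarith
  have := hfin J
  have h3 : 8 * ((2 * (N:ℝ) + 3) * (J + 1)) ≤ 16 * (2 * (N:ℝ) + 3) * J := by nlinarith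
  have h4 : 16 * (2 * (N:ℝ) + 3) * J < (J * ((1 / 2 - p1) * κ)) * J := by
    exact mul_lt_mul_of_pos_right hJ2 (by linarith)
  nlinarith


end PartFp

section PartSl

/-! ### The slab -/

lemma phi_map {V : Type*} [DecidableEq V] {G : SimpleGraph V} {nb : V → Finset V}
    (hnb : ∀ x y, G.Adj x y → y ∈ nb x) {P : Sym2 V → ℝ} (ψ : V ↪ V) (hs : Function.Surjective ψ)
    (hψ : ∀ x y, G.Adj (ψ x) (ψ y) ↔ G.Adj x y) (hP : ∀ e, P (ψ.sym2Map e) = P e)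
    (S : Finset V) (o : V) : phi G nb P (S.map ψ) (ψ o) = phi G nb P S o := by
  have hbd : bd G nb (S.map ψ) = (bd G nb S).map (ψ.prodMap ψ) := by
    ext ⟨a, b⟩
    obtain ⟨a, rfl⟩ := hs a
    obtain ⟨b, rfl⟩ := hs b
    rw [mem_bd hnb]
    have : ((ψ a, ψ b) : V × V) = (ψ.prodMap ψ) (a, b) := rfl
    rw [this, Finset.mem_map', mem_bd hnb]
    change ψ a ∈ _ ∧ ψ b ∉ _ ∧ G.Adj (ψ a) (ψ b) ↔ _
    rw [Finset.mem_map', Finset.mem_map', hψ]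
  unfold phi
  rw [hbd, Finset.sum_map]
  refine Finset.sum_congr rfl fun z _ => ?_
  change P (ψ.sym2Map s(z.1, z.2)) * Ex P (edges G (S.map ψ)) (fun ω => ind (Conn ω (ψ o) (ψ z.1))) = _
  rw [hP, Ex_edges_map ψ hψ]
  simp only [hP, Conn_map]

/-- The slab graph. -/
def G3 (k : ℕ) : SimpleGraph Vtx where
  Adj x y := (0 ≤ x.2.2 ∧ x.2.2 ≤ k) ∧ (0 ≤ y.2.2 ∧ y.2.2 ≤ k) ∧
    ((x.2.1 = y.2.1 ∧ x.2.2 = y.2.2 ∧ (y.1 = x.1 + 1 ∨ x.1 = y.1 + 1)) ∨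
     (x.1 = y.1 ∧ x.2.2 = y.2.2 ∧ (y.2.1 = x.2.1 + 1 ∨ x.2.1 = y.2.1 + 1)) ∨
     (x.1 = y.1 ∧ x.2.1 = y.2.1 ∧ (y.2.2 = x.2.2 + 1 ∨ x.2.2 = y.2.2 + 1)))
  symm := ⟨by intro x y h; omega⟩
  loopless := ⟨by intro x h; omega⟩

lemma G3_adj (k : ℕ) (x y : Vtx) : (G3 k).Adj x y ↔
    (0 ≤ x.2.2 ∧ x.2.2 ≤ k) ∧ (0 ≤ y.2.2 ∧ y.2.2 ≤ k) ∧
    ((x.2.1 = y.2.1 ∧ x.2.2 = y.2.2 ∧ (y.1 = x.1 + 1 ∨ x.1 = y.1 + 1)) ∨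
     (x.1 = y.1 ∧ x.2.2 = y.2.2 ∧ (y.2.1 = x.2.1 + 1 ∨ x.2.1 = y.2.1 + 1)) ∨
     (x.1 = y.1 ∧ x.2.1 = y.2.1 ∧ (y.2.2 = x.2.2 + 1 ∨ x.2.2 = y.2.2 + 1))) := Iff.rfl

/-- A finite superset of the neighbours of a vertex. -/
noncomputable def nb3 (x : Vtx) : Finset Vtx :=
  Finset.Icc (x.1 - 1) (x.1 + 1) ×ˢ Finset.Icc (x.2.1 - 1) (x.2.1 + 1) ×ˢ
    Finset.Icc (x.2.2 - 1) (x.2.2 + 1)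

lemma nb3_spec (k : ℕ) (x y : Vtx) (h : (G3 k).Adj x y) : y ∈ nb3 x := by
  rw [G3_adj] at h
  simp only [nb3, Finset.mem_product, Finset.mem_Icc]
  omega

open Classical in
/-- Edge probabilities on the slab. -/
noncomputable def Pv (p q : ℝ) : Sym2 Vtx → ℝ :=
  Sym2.lift ⟨fun x y => if x.1 = y.1 ∧ x.2.1 = y.2.1 then q else p, fun x y => by
    simp only [eq_comm]⟩

lemma Pv_vert {p q : ℝ} {x y : Vtx} (h : x.1 = y.1 ∧ x.2.1 = y.2.1) : Pv p q s(x, y) = q := by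
  simp [Pv, h]
lemma Pv_hor {p q : ℝ} {x y : Vtx} (h : ¬ (x.1 = y.1 ∧ x.2.1 = y.2.1)) :
    Pv p q s(x, y) = p := by
  simp only [Pv, Sym2.lift_mk]; exact if_neg h

lemma Pv_mem {p q : ℝ} (hp : p ∈ Icc (0:ℝ) 1) (hq : q ∈ Icc (0:ℝ) 1) (e : Sym2 Vtx) :
    Pv p q e ∈ Icc (0:ℝ) 1 := by
  refine Sym2.inductionOn e fun x y => ?_
  by_cases h : x.1 = y.1 ∧ x.2.1 = y.2.1
  · rw [Pv_vert h]; exact hq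
  · rw [Pv_hor h]; exact hp

lemma Pv_cont (p : ℝ) (e : Sym2 Vtx) : Continuous fun q => Pv p q e := by
  refine Sym2.inductionOn e fun x y => ?_
  by_cases h : x.1 = y.1 ∧ x.2.1 = y.2.1
  · simp only [Pv_vert h]; exact continuous_id
  · simp only [Pv_hor h]; exact continuous_const

/-- The vertex `(x, j)`. -/
def lay (j : ℤ) : ℤ × ℤ ↪ Vtx := ⟨fun x => (x.1, x.2, j), fun x y h => by
  simp only [Prod.mk.injEq] at h; exact Prod.ext h.1 h.2.1⟩

lemma lay_apply (j : ℤ) (x : ℤ × ℤ) : lay j x = (x.1, x.2, j) := rfl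

/-- The cylinder over `S`. -/
noncomputable def St (k : ℕ) (S : Finset (ℤ × ℤ)) : Finset Vtx :=
  (S ×ˢ Finset.Icc (0:ℤ) k).map (Equiv.prodAssoc ℤ ℤ ℤ).toEmbedding

lemma mem_St {k : ℕ} {S : Finset (ℤ × ℤ)} {v : Vtx} :
    v ∈ St k S ↔ (v.1, v.2.1) ∈ S ∧ 0 ≤ v.2.2 ∧ v.2.2 ≤ k := by
  obtain ⟨a, b, c⟩ := v
  simp only [St, Finset.mem_map, Finset.mem_product, Finset.mem_Icc]
  constructor
  · rintro ⟨⟨⟨x, y⟩, z⟩, ⟨h1, h2⟩, h3⟩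
    simp only [Equiv.coe_toEmbedding, Equiv.prodAssoc_apply, Prod.mk.injEq] at h3
    obtain ⟨rfl, rfl, rfl⟩ := h3
    exact ⟨h1, h2⟩
  · rintro ⟨h1, h2⟩
    exact ⟨((a, b), c), ⟨h1, h2⟩, rfl⟩

lemma lay_adj {k : ℕ} {j : ℤ} (hj : 0 ≤ j ∧ j ≤ k) (x y : ℤ × ℤ) :
    (G3 k).Adj (lay j x) (lay j y) ↔ G2.Adj x y := by
  rw [G3_adj, G2_adj]
  obtain ⟨a, b⟩ := x
  obtain ⟨c, d⟩ := y
  constructor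
  · intro h
    simp only [lay_apply] at h ⊢
    omega
  · rintro (h | h)
    · exact ⟨hj, hj, Or.inr (Or.inl ⟨h.1, rfl, h.2⟩)⟩
    · exact ⟨hj, hj, Or.inl ⟨h.1, rfl, h.2⟩⟩

lemma mem_lay {j : ℤ} {S : Finset (ℤ × ℤ)} {v : Vtx} :
    v ∈ S.map (lay j) ↔ (v.1, v.2.1) ∈ S ∧ v.2.2 = j := by
  obtain ⟨a, b, c⟩ := v
  rw [Finset.mem_map]
  constructor
  · rintro ⟨⟨x, y⟩, h1, h2⟩
    simp only [lay_apply, Prod.mk.injEq] at h2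
    obtain ⟨rfl, rfl, rfl⟩ := h2
    exact ⟨h1, rfl⟩
  · rintro ⟨h1, h2⟩
    exact ⟨(a, b), h1, by simp only at h2; rw [lay_apply, h2]⟩

/-- At `q = 0` the slab decouples. -/
lemma Ex_q0 {p : ℝ} (hp : p ∈ Icc (0:ℝ) 1) {k : ℕ} {S : Finset (ℤ × ℤ)} (hS : 0 ∈ S) {j : ℤ}
    (hj : 0 ≤ j ∧ j ≤ k) (y : Vtx) :
    Ex (Pv p 0) (edges (G3 k) (St k S)) (fun ω => ind (Conn ω (lay j 0) y)) ≤
    Ex (fun _ => p) (edges G2 S) (fun ω => ind (Conn (ω.map (lay j).sym2Map) (lay j 0) y)) := by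
  classical
  have hPI : ∀ e, Pv p 0 e ∈ Icc (0:ℝ) 1 := Pv_mem hp ⟨le_rfl, zero_le_one⟩
  set F := edges (G3 k) (St k S) with hF
  set Fh := F.filter (fun e => Pv p 0 e ≠ 0 ∨ ∀ x y : Vtx, e = s(x, y) → x.2.2 = y.2.2) with hFh
  have hsub : Fh ⊆ F := Finset.filter_subset _ _
  have h0 : ∀ e ∈ F \ Fh, Pv p 0 e = 0 := by
    intro e he
    rw [Finset.mem_sdiff, hFh, Finset.mem_filter] at he
    by_contra hne
    exact he.2 ⟨he.1, Or.inl hne⟩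
  have hlay : ∀ x y, s(x, y) ∈ Fh → x.2.2 = y.2.2 := by
    intro x y h
    rw [hFh, Finset.mem_filter, hF, mk_mem_edges, G3_adj] at h
    rcases h.2 with h' | h'
    · by_contra hne
      exact h' (Pv_vert (by omega))
    · exact h' x y rfl
  have hsub2 : S.map (lay j) ⊆ St k S := by
    intro v hv; rw [mem_lay] at hv; rw [mem_St]; exact ⟨hv.1, by omega⟩
  rw [Ex_zero hsub h0]
  have h1 : Ex (Pv p 0) Fh (fun ω => ind (Conn ω (lay j 0) y)) ≤
      Ex (Pv p 0) Fh (fun ω => ind (Conn (res ω (S.map (lay j) : Finset Vtx)) (lay j 0) y)) := by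
    refine Ex_mono hPI fun ω hω => ind_mono fun hc => ?_
    have key : ∀ v, Conn ω (lay j 0) v → v ∈ S.map (lay j) ∧
        Conn (res ω (S.map (lay j) : Finset Vtx)) (lay j 0) v := by
      intro v hv
      induction hv with
      | refl => exact ⟨Finset.mem_map_of_mem _ hS, Conn.refl _ _⟩
      | @tail b c _ hbc ih =>
        have e1 := hω hbc
        have e2 := hlay _ _ e1
        have e3 := (mk_mem_edges.1 (hsub e1)).1.2
        rw [mem_St] at e3
        have e4 := mem_lay.1 ih.1
        have e5 : c ∈ S.map (lay j) := mem_lay.2 ⟨e3.1, by omega⟩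
        exact ⟨e5, ih.2.trans (Conn.single
          (mk_mem_res.2 ⟨hbc, by exact_mod_cast ih.1, by exact_mod_cast e5⟩))⟩
    exact (key y hc).2
  refine h1.trans ?_
  rw [← Ex_zero hsub h0, Ex_res (G3 k) (Pv p 0) hsub2 (fun ω => ind (Conn ω (lay j 0) y)),
    Ex_edges_map (lay j) (lay_adj hj)]
  refine le_of_eq (Ex_congr_P _ fun e he => ?_)
  revert he
  refine Sym2.inductionOn e fun a b => ?_
  intro he
  rw [mk_mem_edges, G2_adj] at he
  change Pv p 0 s(lay j a, lay j b) = p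
  refine Pv_hor ?_
  simp only [lay_apply]; omega

lemma phi_q0 {p : ℝ} (hp : p ∈ Icc (0:ℝ) 1) {k : ℕ} {S : Finset (ℤ × ℤ)} (hS : 0 ∈ S) {j : ℤ}
    (hj : 0 ≤ j ∧ j ≤ k) :
    phi (G3 k) nb3 (Pv p 0) (St k S) (lay j 0) ≤ phi G2 nb2 (fun _ => p) S 0 := by
  have hPI : ∀ e, Pv p 0 e ∈ Icc (0:ℝ) 1 := Pv_mem hp ⟨le_rfl, zero_le_one⟩
  unfold phi
  have hsub : (bd G2 nb2 S).map ((lay j).prodMap (lay j)) ⊆ bd (G3 k) nb3 (St k S) := by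
    intro z hz
    obtain ⟨⟨a, b⟩, hab, rfl⟩ := Finset.mem_map.1 hz
    rw [mem_bd nb2_spec] at hab
    rw [mem_bd (nb3_spec k)]
    change lay j a ∈ _ ∧ lay j b ∉ _ ∧ (G3 k).Adj (lay j a) (lay j b)
    rw [mem_St, mem_St, lay_adj hj]
    refine ⟨⟨hab.1, hj⟩, fun h => hab.2.1 h.1, hab.2.2⟩
  rw [← Finset.sum_subset hsub, Finset.sum_map]
  · refine Finset.sum_le_sum fun z hz => ?_
    rw [mem_bd nb2_spec, G2_adj] at hz
    change Pv p 0 s(lay j z.1, lay j z.2) * Ex (Pv p 0) (edges (G3 k) (St k S))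
      (fun ω => ind (Conn ω (lay j 0) (lay j z.1))) ≤ _
    rw [Pv_hor (by simp only [lay_apply]; omega)]
    refine mul_le_mul_of_nonneg_left ((Ex_q0 hp hS hj _).trans (le_of_eq ?_)) hp.1
    simp only [Conn_map]
  · intro z hz hz'
    have hb := (Ex_q0 (k := k) hp hS hj z.1)
    have hz0 : Ex (fun _ => p) (edges G2 S)
        (fun ω => ind (Conn (ω.map (lay j).sym2Map) (lay j 0) z.1)) = 0 := by
      rw [← Ex_const (fun _ => p) (edges G2 S) 0]
      refine Ex_congr _ fun ω hω => ind_false fun hc => ?_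
      have hm : z.1 ∈ S.map (lay j) := conn_mem_of_edges (G := G3 k)
        (by rw [edges_map (lay j) (lay_adj hj)]; exact Finset.map_subset_map.2 hω)
        (Finset.mem_map_of_mem _ hS) hc
      rw [mem_bd (nb3_spec k), mem_St, mem_St] at hz
      have hm' := mem_lay.1 hm
      have hadj := (G3_adj k _ _).1 hz.2.2
      have hne : ¬ (z.1.1 = z.2.1 ∧ z.1.2.1 = z.2.2.1) := by
        rintro ⟨e1, e2⟩
        refine hz.2.1 ⟨?_, hadj.2.1⟩
        rw [← e1, ← e2]; exact hz.1.1
      apply hz'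
      refine Finset.mem_map.2 ⟨((z.1.1, z.1.2.1), (z.2.1, z.2.2.1)), ?_, ?_⟩
      · rw [mem_bd nb2_spec, G2_adj]
        refine ⟨hz.1.1, fun h => hz.2.1 ⟨h, hadj.2.1⟩, ?_⟩
        simp only; omega
      · change ((z.1.1, z.1.2.1, j), (z.2.1, z.2.2.1, j)) = z
        have hc : j = z.1.2.2 := hm'.2.symm
        have hf : j = z.2.2.2 := by omega
        exact Prod.ext (Prod.ext rfl (Prod.ext rfl hc)) (Prod.ext rfl (Prod.ext rfl hf))
    have hnn : 0 ≤ Ex (Pv p 0) (edges (G3 k) (St k S)) (fun ω => ind (Conn ω (lay j 0) z.1)) :=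
      Ex_ind_nonneg hPI _ _
    have : Ex (Pv p 0) (edges (G3 k) (St k S)) (fun ω => ind (Conn ω (lay j 0) z.1)) = 0 := by
      linarith
    rw [this, mul_zero]

lemma phi_cont (p : ℝ) (k : ℕ) (S : Finset Vtx) (o : Vtx) :
    Continuous fun q => phi (G3 k) nb3 (Pv p q) S o := by
  unfold phi
  exact continuous_finsetSum _ fun z _ => (Pv_cont p _).mul (Ex_continuous (Pv_cont p) _ _)

lemma exists_q {p : ℝ} (hp0 : 0 ≤ p) (hp : p < 1 / 2) (k : ℕ) :
    ∃ S : Finset (ℤ × ℤ), 0 ∈ S ∧ ∃ c : ℝ, 0 ≤ c ∧ c < 1 ∧ ∃ q : ℝ, 0 < q ∧ q ≤ 1 ∧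
      ∀ j : ℤ, 0 ≤ j ∧ j ≤ k → phi (G3 k) nb3 (Pv p q) (St k S) (lay j 0) ≤ c := by
  obtain ⟨S, hS, hlt⟩ := planar_main hp0 hp
  have hpI : p ∈ Icc (0:ℝ) 1 := ⟨hp0, by linarith⟩
  obtain ⟨c, hc1, hc2⟩ := exists_between hlt
  have hc0 : 0 ≤ c := by
    refine le_trans ?_ hc1.le
    exact Finset.sum_nonneg fun z _ => mul_nonneg hp0 (Ex_ind_nonneg (fun _ => hpI) _ _)
  refine ⟨S, hS, c, hc0, hc2, ?_⟩
  have hev : ∀ j ∈ Finset.Icc (0:ℤ) k, ∀ᶠ q in nhds (0:ℝ),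
      phi (G3 k) nb3 (Pv p q) (St k S) (lay j 0) < c := by
    intro j hj
    rw [Finset.mem_Icc] at hj
    exact (phi_cont p k (St k S) (lay j 0)).continuousAt.eventually
      (gt_mem_nhds ((phi_q0 hpI hS hj).trans_lt hc1))
  have hall := (Finset.eventually_all (Finset.Icc (0:ℤ) k)).2 hev
  obtain ⟨ε, hε, hball⟩ := Metric.eventually_nhds_iff.1 hall
  refine ⟨min (ε / 2) 1, by positivity, min_le_right _ _, fun j hj => ?_⟩
  refine (hball ?_ j (Finset.mem_Icc.2 hj)).le
  rw [Real.dist_eq, sub_zero, abs_of_pos (by positivity)]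
  exact (min_le_left _ _).trans_lt (by linarith)

/-- Horizontal translation in the slab. -/
def tr3 (x : ℤ × ℤ) : Vtx ↪ Vtx := ⟨fun v => (x.1 + v.1, x.2 + v.2.1, v.2.2), fun u v h => by
  simp only [Prod.mk.injEq] at h
  exact Prod.ext (by omega) (Prod.ext (by omega) (by omega))⟩

lemma tr3_apply (x : ℤ × ℤ) (v : Vtx) : tr3 x v = (x.1 + v.1, x.2 + v.2.1, v.2.2) := rfl

/-- Vertices at horizontal distance at least `M`. -/
def T3 (M : ℤ) : Set Vtx := {v | (v.1, v.2.1) ∈ Tn M}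

lemma phi_tr3 {p q : ℝ} {k : ℕ} (x : ℤ × ℤ) (S : Finset Vtx) (o : Vtx) :
    phi (G3 k) nb3 (Pv p q) (S.map (tr3 x)) (tr3 x o) = phi (G3 k) nb3 (Pv p q) S o := by
  refine phi_map (nb3_spec k) (tr3 x) ?_ ?_ ?_ S o
  · rintro ⟨a, b, c⟩
    exact ⟨(a - x.1, b - x.2, c), by simp [tr3_apply]⟩
  · intro u v
    simp only [tr3_apply, G3_adj]; omega
  · intro e
    refine Sym2.inductionOn e fun u v => ?_
    change Pv p q s(tr3 x u, tr3 x v) = _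
    by_cases h : u.1 = v.1 ∧ u.2.1 = v.2.1
    · rw [Pv_vert h, Pv_vert]; simp only [tr3_apply]; omega
    · rw [Pv_hor h, Pv_hor]; simp only [tr3_apply]; omega

lemma slab_iter {p q c : ℝ} (hp : p ∈ Icc (0:ℝ) 1) (hq : q ∈ Icc (0:ℝ) 1) {k : ℕ}
    {S : Finset (ℤ × ℤ)} (hS : 0 ∈ S) {r : ℤ} (hr : S ⊆ box r) (hr0 : 0 ≤ r)
    (hc0 : 0 ≤ c)
    (hφ : ∀ j : ℤ, 0 ≤ j ∧ j ≤ k → phi (G3 k) nb3 (Pv p q) (St k S) (lay j 0) ≤ c)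
    (M : ℤ) (m : ℕ) : ∀ v : Vtx, (v.1, v.2.1) ∈ box (M - 1 - m * (r + 1)) →
      0 ≤ v.2.2 ∧ v.2.2 ≤ k →
      Ex (Pv p q) (edges (G3 k) (St k (box M))) (fun ω => ind (Reach ω (T3 M) v)) ≤ c ^ m := by
  have hPI : ∀ e, Pv p q e ∈ Icc (0:ℝ) 1 := Pv_mem hp hq
  induction m with
  | zero => intro v _ _; rw [pow_zero]; exact Ex_ind_le_one hPI _ _
  | succ m ih =>
    intro v hv hvk
    set x : ℤ × ℤ := (v.1, v.2.1) with hx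
    set S' := (St k S).map (tr3 x) with hS'
    have hmem : ∀ u, u ∈ S' → (v.1 - r ≤ u.1 ∧ u.1 ≤ v.1 + r) ∧ (v.2.1 - r ≤ u.2.1 ∧ u.2.1 ≤ v.2.1 + r) ∧
        0 ≤ u.2.2 ∧ u.2.2 ≤ k := by
      intro u hu
      obtain ⟨w, hw, rfl⟩ := Finset.mem_map.1 hu
      rw [mem_St] at hw
      have := mem_rect.1 (hr hw.1)
      simp only [tr3_apply, hx]
      simp only at this
      omega
    have ho : v = tr3 x (lay v.2.2 0) := by
      simp [tr3_apply, lay_apply, hx]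
    have hvS : v ∈ S' := by
      rw [ho]
      exact Finset.mem_map_of_mem _ (mem_St.2 ⟨by exact hS, hvk⟩)
    have hv' := mem_rect.1 hv
    simp only [hx] at hv'
    have hm1 : ((m + 1 : ℕ) : ℤ) * (r + 1) = m * (r + 1) + (r + 1) := by push_cast; ring
    have hm2 : 0 ≤ (m : ℤ) * (r + 1) := by positivity
    rw [hm1] at hv'
    have hSM : S' ⊆ St k (box M) := by
      intro u hu
      have := hmem u hu
      rw [mem_St, mem_rect]; simp only; omega
    have hsl := simon_lieb hPI (edges (G3 k) (St k (box M))) S' v hvS (T3 M) ?_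
      (bd (G3 k) nb3 S') ?_ ?_
    · refine hsl.trans ?_
      calc _ ≤ ∑ z ∈ bd (G3 k) nb3 S', Pv p q s(z.1, z.2) *
            Ex (Pv p q) (edges (G3 k) S') (fun ω => ind (Conn ω v z.1)) * c ^ m := by
            refine Finset.sum_le_sum fun z hz => ?_
            rw [Ex_res (G3 k) (Pv p q) hSM (fun ω => ind (Conn ω v z.1))]
            refine mul_le_mul_of_nonneg_left ?_
              (mul_nonneg (hPI _).1 (Ex_ind_nonneg hPI _ _))
            rw [mem_bd (nb3_spec k), G3_adj] at hz
            have h1 := hmem _ hz.1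
            refine ih z.2 ?_ hz.2.2.2.1
            rw [mem_rect]; simp only; omega
        _ = phi (G3 k) nb3 (Pv p q) S' v * c ^ m := by rw [phi, Finset.sum_mul]
        _ ≤ c * c ^ m := by
            refine mul_le_mul_of_nonneg_right ?_ (pow_nonneg hc0 _)
            conv_lhs => rw [ho]
            rw [hS', phi_tr3]
            exact hφ _ hvk
        _ = c ^ (m + 1) := by ring
    · intro t ht hts
      have h1 := hmem t hts
      have h2 : (t.1, t.2.1) ∈ Tn M := ht
      rw [mem_Tn] at h2
      simp only at h2
      omega
    · intro a ha b hb hab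
      rw [mem_bd (nb3_spec k)]
      exact ⟨ha, hb, (mk_mem_edges.1 hab).2⟩
    · intro z hz
      rw [mem_bd (nb3_spec k)] at hz
      exact ⟨hz.1, hz.2.1⟩

theorem slab_decay {p : ℝ} (hp0 : 0 ≤ p) (hp : p < 1 / 2) (k : ℕ) :
    ∃ q : ℝ, 0 < q ∧ q ≤ 1 ∧ ∀ ε : ℝ, 0 < ε → ∃ M : ℤ, 1 ≤ M ∧
      Ex (Pv p q) (edges (G3 k) (St k (box M))) (fun ω => ind (Reach ω (T3 M) 0)) ≤ ε := by
  obtain ⟨S, hS, c, hc0, hc1, q, hq0, hq1, hφ⟩ := exists_q hp0 hp k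
  obtain ⟨r, hr0, hr⟩ := exists_radius S
  refine ⟨q, hq0, hq1, fun ε hε => ?_⟩
  obtain ⟨m, hm⟩ := exists_pow_lt_of_lt_one hε hc1
  refine ⟨1 + m * (r + 1), by nlinarith [Int.natCast_nonneg m], ?_⟩
  refine le_trans (slab_iter ⟨hp0, by linarith⟩ ⟨hq0.le, hq1⟩ hS hr hr0 hc0 hφ _ m 0 ?_ ?_) hm.le
  · rw [mem_rect]; simp
  · simp


end PartSl


/-! ### Finite marginals of the product measure -/

/-- Lebesgue measure on the unit interval. -/
noncomputable def leb : Measure ℝ := volume.restrict (Set.Ico (0 : ℝ) 1)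

instance : IsProbabilityMeasure leb := ⟨by simp [leb]⟩

/-- The fair coin. -/
noncomputable def fair : Measure Bool :=
  (2⁻¹ : ℝ≥0∞) • Measure.dirac false + (2⁻¹ : ℝ≥0∞) • Measure.dirac true

instance : IsProbabilityMeasure fair := ⟨by simp [fair, ENNReal.inv_two_add_inv_two]⟩

lemma measurable_binDigit (n : ℕ) : Measurable (binDigit n) := by
  have h1 : Measurable fun x : ℝ => ⌊x * 2 ^ (n + 1)⌋ := by fun_prop
  have h2 : Measurable fun z : ℤ => decide (z % 2 = 1) := measurable_from_top
  exact h2.comp h1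

/-- All binary digits. -/
noncomputable def digs (x : ℝ) (n : ℕ) : Bool := binDigit n x

lemma measurable_digs : Measurable digs := measurable_pi_lambda _ measurable_binDigit

lemma leb_split {E : Set ℝ} (hE : MeasurableSet E) :
    leb E = 2⁻¹ * leb {x | x / 2 ∈ E} + 2⁻¹ * leb {x | (x + 1) / 2 ∈ E} := by
  have m1 : MeasurableSet {x : ℝ | x / 2 ∈ E} := by
    have : Measurable fun x : ℝ => x / 2 := by fun_prop
    exact this hE
  have m2 : MeasurableSet {x : ℝ | (x + 1) / 2 ∈ E} := by
    have : Measurable fun x : ℝ => (x + 1) / 2 := by fun_prop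
    exact this hE
  unfold leb
  rw [Measure.restrict_apply hE, Measure.restrict_apply m1, Measure.restrict_apply m2]
  have e1 : {x : ℝ | x / 2 ∈ E} ∩ Ico 0 1 = ((2⁻¹ : ℝ) * ·) ⁻¹' (E ∩ Ico 0 (1 / 2)) := by
    ext x
    simp only [mem_inter_iff, mem_ofPred_eq, mem_preimage, mem_Ico]
    rw [show (2⁻¹ : ℝ) * x = x / 2 by ring]
    constructor
    · rintro ⟨h, h1, h2⟩; exact ⟨h, by linarith, by linarith⟩
    · rintro ⟨h, h1, h2⟩; exact ⟨h, by linarith, by linarith⟩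
  have e2 : {x : ℝ | (x + 1) / 2 ∈ E} ∩ Ico 0 1 =
      (· + (1 : ℝ)) ⁻¹' (((2⁻¹ : ℝ) * ·) ⁻¹' (E ∩ Ico (1 / 2) 1)) := by
    ext x
    simp only [mem_inter_iff, mem_ofPred_eq, mem_preimage, mem_Ico]
    rw [show (2⁻¹ : ℝ) * (x + 1) = (x + 1) / 2 by ring]
    constructor
    · rintro ⟨h, h1, h2⟩; exact ⟨h, by linarith, by linarith⟩
    · rintro ⟨h, h1, h2⟩; exact ⟨h, by linarith, by linarith⟩
  have e3 : E ∩ Ico 0 1 = (E ∩ Ico 0 (1 / 2)) ∪ (E ∩ Ico (1 / 2) 1) := by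
    rw [← Set.inter_union_distrib_left, Ico_union_Ico_eq_Ico (by norm_num) (by norm_num)]
  have hd : Disjoint (E ∩ Ico 0 (1 / 2)) (E ∩ Ico (1 / 2 : ℝ) 1) := by
    rw [Set.disjoint_left]
    rintro x ⟨_, _, h1⟩ ⟨_, h2, _⟩
    linarith
  rw [e1, e2, measure_preimage_add_right, Real.volume_preimage_mul_left (by norm_num),
    Real.volume_preimage_mul_left (by norm_num), e3,
    measure_union hd (hE.inter measurableSet_Ico)]
  have h2 : ENNReal.ofReal |(2⁻¹ : ℝ)⁻¹| = 2 := by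
    rw [inv_inv, abs_of_pos (by norm_num)]; simp
  rw [h2, ← mul_assoc, ← mul_assoc, ENNReal.inv_mul_cancel (by simp) (by simp), one_mul, one_mul]

lemma binDigit_half_succ (n : ℕ) (x : ℝ) : binDigit (n + 1) (x / 2) = binDigit n x := by
  unfold binDigit
  rw [show x / 2 * 2 ^ (n + 1 + 1) = x * 2 ^ (n + 1) by ring]

lemma binDigit_half_succ' (n : ℕ) (x : ℝ) : binDigit (n + 1) ((x + 1) / 2) = binDigit n x := by
  unfold binDigit
  rw [show (x + 1) / 2 * 2 ^ (n + 1 + 1) = x * 2 ^ (n + 1) + ((2 ^ (n + 1) : ℤ) : ℝ) by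
    push_cast; ring, Int.floor_add_intCast]
  congr 2
  rw [pow_succ]; omega

lemma binDigit_half_zero {x : ℝ} (hx : x ∈ Ico (0 : ℝ) 1) : binDigit 0 (x / 2) = false := by
  unfold binDigit
  have : ⌊x / 2 * 2 ^ (0 + 1)⌋ = 0 := by
    rw [Int.floor_eq_iff]; push_cast; constructor <;> linarith [hx.1, hx.2]
  rw [this]; rfl

lemma binDigit_half_zero' {x : ℝ} (hx : x ∈ Ico (0 : ℝ) 1) :
    binDigit 0 ((x + 1) / 2) = true := by
  unfold binDigit
  have : ⌊(x + 1) / 2 * 2 ^ (0 + 1)⌋ = 1 := by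
    rw [Int.floor_eq_iff]; push_cast; constructor <;> linarith [hx.1, hx.2]
  rw [this]; rfl

lemma meas_cyl (N : ℕ) (t : ℕ → Set Bool) :
    MeasurableSet {x : ℝ | ∀ i < N, binDigit i x ∈ t i} := by
  have : {x : ℝ | ∀ i < N, binDigit i x ∈ t i} = ⋂ i, ⋂ (_ : i < N), binDigit i ⁻¹' t i := by
    ext x; simp
  rw [this]
  exact MeasurableSet.iInter fun i => MeasurableSet.iInter fun _ =>
    measurable_binDigit i (MeasurableSet.of_discrete)

open Classical in
lemma leb_cyl (N : ℕ) : ∀ t : ℕ → Set Bool,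
    leb {x | ∀ i < N, binDigit i x ∈ t i} = ∏ i ∈ Finset.range N, fair (t i) := by
  induction N with
  | zero => intro t; simp
  | succ N ih =>
    intro t
    rw [leb_split (meas_cyl _ _), Finset.prod_range_succ', ← ih (fun i => t (i + 1))]
    have key : ∀ (g : ℝ → ℝ) (b : Bool), (∀ x ∈ Ico (0:ℝ) 1, binDigit 0 (g x) = b) →
        (∀ n x, binDigit (n + 1) (g x) = binDigit n x) →
        leb {x | g x ∈ {x | ∀ i < N + 1, binDigit i x ∈ t i}} =
          leb {x | ∀ i < N, binDigit i x ∈ t (i + 1)} * (if b ∈ t 0 then 1 else 0) := by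
      intro g b h0 h1
      split_ifs with hb
      · rw [mul_one]
        refine measure_congr ?_
        refine (ae_restrict_iff' measurableSet_Ico).2 (Filter.Eventually.of_forall fun x hx => ?_)
        refine propext ?_
        change (∀ i < N + 1, binDigit i (g x) ∈ t i) ↔ ∀ i < N, binDigit i x ∈ t (i + 1)
        constructor
        · intro h i hi
          have := h (i + 1) (by omega)
          rwa [h1] at this
        · intro h i hi
          cases i with
          | zero => rw [h0 x hx]; exact hb
          | succ i => rw [h1]; exact h i (by omega)
      · rw [mul_zero]
        refine measure_eq_zero_iff_ae_notMem.2 ?_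
        refine (ae_restrict_iff' measurableSet_Ico).2 (Filter.Eventually.of_forall fun x hx h => ?_)
        have := h 0 (by omega)
        rw [h0 x hx] at this
        exact hb this
    rw [key (fun x => x / 2) false (fun x hx => binDigit_half_zero hx) binDigit_half_succ,
      key (fun x => (x + 1) / 2) true (fun x hx => binDigit_half_zero' hx) binDigit_half_succ']
    have hf : fair (t 0) = 2⁻¹ * (if false ∈ t 0 then 1 else 0) +
        2⁻¹ * (if true ∈ t 0 then 1 else 0) := by
      simp [fair, Set.indicator_apply]
    rw [hf]; ring

lemma leb_map_digs : leb.map digs = Measure.infinitePi (fun _ : ℕ => fair) := by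
  classical
  refine Measure.eq_infinitePi _ fun s t ht => ?_
  rw [Measure.map_apply measurable_digs (.pi s.countable_toSet fun i _ => ht i)]
  obtain ⟨N, hN⟩ := s.exists_nat_subset_range
  have := leb_cyl N (fun i => if i ∈ s then t i else univ)
  have e : digs ⁻¹' (Set.pi s t) = {x | ∀ i < N, binDigit i x ∈ if i ∈ s then t i else univ} := by
    ext x
    simp only [mem_preimage, Set.mem_pi, mem_ofPred_eq, Finset.mem_coe]
    constructor
    · intro h i _
      split_ifs with hi
      · exact h i hi
      · trivial
    · intro h i hi
      have := h i (Finset.mem_range.1 (hN hi))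
      rwa [if_pos hi] at this
  rw [e, this, ← Finset.prod_subset hN]
  · exact Finset.prod_congr rfl fun i hi => by rw [if_pos hi]
  · intro i _ hi
    rw [if_neg hi, measure_univ]

/-- The real number with given binary digits. -/
noncomputable def undig (b : ℕ → Bool) : ℝ := ∑' n : ℕ, if b n then ((2 : ℝ) ^ (n + 1))⁻¹ else 0

lemma measurable_undig : Measurable undig := by
  unfold undig
  have hs : Summable fun n : ℕ => ((2 : ℝ) ^ (n + 1))⁻¹ := by
    have := summable_geometric_two
    refine ((summable_nat_add_iff 1).2 this).congr fun n => ?_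
    simp
  refine Continuous.measurable ?_
  refine continuous_tsum (u := fun n => ((2 : ℝ) ^ (n + 1))⁻¹) (fun n => ?_) hs fun n b => ?_
  · have : Continuous fun c : Bool => if c then ((2 : ℝ) ^ (n + 1))⁻¹ else 0 :=
      continuous_of_discreteTopology
    exact this.comp (continuous_apply n)
  · split_ifs
    · rw [Real.norm_of_nonneg (by positivity)]
    · simp

lemma undig_digs {x : ℝ} (hx : x ∈ Ico (0 : ℝ) 1) : undig (digs x) = x := by
  have hsum : ∀ N : ℕ, ∑ n ∈ Finset.range N, (if digs x n then ((2 : ℝ) ^ (n + 1))⁻¹ else 0) =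
      (⌊x * 2 ^ N⌋ : ℝ) / 2 ^ N := by
    intro N
    induction N with
    | zero =>
      have : ⌊x * 2 ^ 0⌋ = 0 := by rw [pow_zero, mul_one, Int.floor_eq_zero_iff]; exact hx
      rw [this]; simp
    | succ N ih =>
      rw [Finset.sum_range_succ, ih]
      have hfl : ⌊x * 2 ^ (N + 1)⌋ / 2 = ⌊x * 2 ^ N⌋ := by
        have h2 : x * 2 ^ (N + 1) = x * 2 ^ N * 2 := by ring
        have a1 := Int.floor_le (x * 2 ^ N)
        have a2 := Int.lt_floor_add_one (x * 2 ^ N)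
        have b1 : 2 * ⌊x * 2 ^ N⌋ ≤ ⌊x * 2 ^ (N + 1)⌋ := by
          rw [Int.le_floor]; push_cast; linarith
        have b2 : ⌊x * 2 ^ (N + 1)⌋ < 2 * ⌊x * 2 ^ N⌋ + 2 := by
          rw [Int.floor_lt]; push_cast; linarith
        omega
      have hdm := Int.mul_ediv_add_emod ⌊x * 2 ^ (N + 1)⌋ 2
      rw [hfl] at hdm
      have hpos : (2 : ℝ) ^ N ≠ 0 := by positivity
      unfold digs binDigit
      by_cases hd : ⌊x * 2 ^ (N + 1)⌋ % 2 = 1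
      · rw [hd] at hdm
        simp only [hd, decide_true, if_true]
        rw [← hdm]; push_cast; field_simp; ring
      · have hd0 : ⌊x * 2 ^ (N + 1)⌋ % 2 = 0 := by omega
        rw [hd0] at hdm
        simp only [hd0]
        rw [← hdm]; push_cast; field_simp; simp; ring
  have hs : HasSum (fun n => if digs x n then ((2 : ℝ) ^ (n + 1))⁻¹ else 0) x := by
    rw [hasSum_iff_tendsto_nat_of_nonneg (fun n => by split_ifs <;> positivity)]
    simp only [hsum]
    have hz : Filter.Tendsto (fun N : ℕ => x - (1 / 2 : ℝ) ^ N) Filter.atTop (nhds x) := by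
      have := (tendsto_pow_atTop_nhds_zero_of_lt_one (r := (1 / 2 : ℝ))
        (by norm_num) (by norm_num)).const_sub x
      simpa using this
    refine tendsto_of_tendsto_of_tendsto_of_le_of_le hz tendsto_const_nhds (fun N => ?_) fun N => ?_
    · have a2 := Int.lt_floor_add_one (x * 2 ^ N)
      have hpos : (0 : ℝ) < 2 ^ N := by positivity
      change x - (1 / 2 : ℝ) ^ N ≤ _
      rw [le_div_iff₀ hpos, sub_mul, one_div, inv_pow, inv_mul_cancel₀ hpos.ne']
      linarith
    · have a1 := Int.floor_le (x * 2 ^ N)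
      have hpos : (0 : ℝ) < 2 ^ N := by positivity
      change _ ≤ x
      rw [div_le_iff₀ hpos]
      exact a1
  exact hs.tsum_eq

lemma map_undig : (Measure.infinitePi (fun _ : ℕ => fair)).map undig = leb := by
  rw [← leb_map_digs, Measure.map_map measurable_undig measurable_digs]
  conv_rhs => rw [← Measure.map_id (μ := leb)]
  refine Measure.map_congr ?_
  exact (ae_restrict_iff' measurableSet_Ico).2 (Filter.Eventually.of_forall fun x hx => undig_digs hx)

lemma bernoulliProduct_eq {ι : Type*} [Encodable ι] (P : ι → ℝ) :
    bernoulliProduct P = Measure.infinitePi (fun i =>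
      (Measure.infinitePi (fun _ : ℕ => fair)).map (fun b => decide (undig b < P i))) := by
  have hm : ∀ i, Measurable fun b : ℕ → Bool => decide (undig b < P i) := by
    intro i
    have h : Measurable fun x : ℝ => decide (x < P i) := by
      refine measurable_to_bool ?_
      have : (fun x : ℝ => decide (x < P i)) ⁻¹' {true} = Iio (P i) := by ext; simp
      rw [this]; exact measurableSet_Iio
    exact h.comp measurable_undig
  rw [← Measure.infinitePi_map_pi _ hm,
    ← Measure.infinitePi_map_curry (fun (_ : ι) (_ : ℕ) => fair)]
  have hinj : Function.Injective fun z : ι × ℕ => Nat.pair (Encodable.encode z.1) z.2 := by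
    rintro ⟨i, n⟩ ⟨j, m⟩ h
    have := Nat.pair_eq_pair.1 h
    exact Prod.ext (Encodable.encode_injective this.1) this.2
  have hr := Measure.map_infinitePi_infinitePi_of_inj (P := fun _ : ℕ => fair) hinj
  have hM1 : Measurable fun (x : ι → ℕ → Bool) i => decide (undig (x i) < P i) :=
    measurable_pi_lambda _ fun i => (hm i).comp (measurable_pi_apply i)
  have hM2 : Measurable fun (ω : ℕ → Bool) (i : ι × ℕ) =>
      ω (Nat.pair (Encodable.encode i.1) i.2) := by fun_prop
  have hM3 := (MeasurableEquiv.curry ι ℕ Bool).measurable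
  rw [← hr, ← leb_map_digs, Measure.map_map hM2 measurable_digs,
    Measure.map_map hM3 (hM2.comp measurable_digs),
    Measure.map_map hM1 (hM3.comp (hM2.comp measurable_digs))]
  rfl

lemma bern_true {r : ℝ} (hr : r ∈ Icc (0:ℝ) 1) :
    (Measure.infinitePi (fun _ : ℕ => fair)) {b | undig b < r} = ENNReal.ofReal r := by
  have h := Measure.map_apply (μ := Measure.infinitePi (fun _ : ℕ => fair)) measurable_undig
    (measurableSet_Iio (a := r))
  rw [map_undig] at h
  change _ = (Measure.infinitePi (fun _ : ℕ => fair)) {b | undig b < r} at h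
  rw [← h, leb, Measure.restrict_apply measurableSet_Iio]
  have : Iio r ∩ Ico 0 1 = Ico 0 r := by
    ext x; simp only [mem_inter_iff, mem_Iio, mem_Ico]
    constructor
    · rintro ⟨h1, h2, h3⟩; exact ⟨h2, h1⟩
    · rintro ⟨h1, h2⟩; exact ⟨h2, h1, lt_of_lt_of_le h2 hr.2⟩
  rw [this, Real.volume_Ico, sub_zero]

lemma measurable_lt_dec (r : ℝ) : Measurable fun b : ℕ → Bool => decide (undig b < r) := by
  have h : Measurable fun x : ℝ => decide (x < r) := by
    refine measurable_to_bool ?_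
    have : (fun x : ℝ => decide (x < r)) ⁻¹' {true} = Iio r := by ext; simp
    rw [this]; exact measurableSet_Iio
  exact h.comp measurable_undig

open Classical in
lemma bern_cyl {ι : Type*} [Encodable ι] {P : ι → ℝ} (hP : ∀ e, P e ∈ Icc (0:ℝ) 1)
    {F A : Finset ι} (hA : A ⊆ F) :
    bernoulliProduct P {ω | ∀ e ∈ F, ω e = true ↔ e ∈ A} =
      ENNReal.ofReal ((∏ e ∈ A, P e) * ∏ e ∈ F \ A, (1 - P e)) := by
  have e1 : {ω : ι → Bool | ∀ e ∈ F, ω e = true ↔ e ∈ A} =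
      Set.pi F (fun e => if e ∈ A then {true} else {false}) := by
    ext ω
    simp only [mem_ofPred_eq, Set.mem_pi, Finset.mem_coe]
    refine forall₂_congr fun e _ => ?_
    by_cases h : e ∈ A <;> simp [h]
  have hpr : ∀ i, IsProbabilityMeasure
      ((Measure.infinitePi (fun _ : ℕ => fair)).map (fun b => decide (undig b < P i))) :=
    fun i => Measure.isProbabilityMeasure_map (measurable_lt_dec _).aemeasurable
  rw [e1, bernoulliProduct_eq, Measure.infinitePi_pi _ (fun i _ => MeasurableSet.of_discrete)]
  have ht : ∀ e, ((Measure.infinitePi (fun _ : ℕ => fair)).map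
      (fun b => decide (undig b < P e))) {true} = ENNReal.ofReal (P e) := by
    intro e
    rw [Measure.map_apply (measurable_lt_dec _) (MeasurableSet.of_discrete), ← bern_true (hP e)]
    congr 1
    ext b; simp
  have hf : ∀ e, ((Measure.infinitePi (fun _ : ℕ => fair)).map
      (fun b => decide (undig b < P e))) {false} = ENNReal.ofReal (1 - P e) := by
    intro e
    have : ({false} : Set Bool) = {true}ᶜ := by ext b; cases b <;> simp
    rw [this, prob_compl_eq_one_sub MeasurableSet.of_discrete, ht,
      ENNReal.ofReal_sub _ (hP e).1, ENNReal.ofReal_one]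
  rw [ENNReal.ofReal_mul (Finset.prod_nonneg fun e _ => (hP e).1),
    ENNReal.ofReal_prod_of_nonneg (fun e _ => (hP e).1),
    ENNReal.ofReal_prod_of_nonneg (fun e _ => sub_nonneg.2 (hP e).2),
    ← Finset.prod_sdiff hA, mul_comm]
  congr 1
  · exact Finset.prod_congr rfl fun e he => by rw [if_pos he, ht]
  · exact Finset.prod_congr rfl fun e he => by rw [if_neg (Finset.mem_sdiff.1 he).2, hf]

lemma bern_event {ι : Type*} [Encodable ι] [DecidableEq ι] {P : ι → ℝ}
    (hP : ∀ e, P e ∈ Icc (0:ℝ) 1) (F : Finset ι) (Q : Finset ι → Prop) :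
    bernoulliProduct P {ω | Q (F.filter fun e => ω e = true)} ≤
      ENNReal.ofReal (Ex P F (fun A => ind (Q A))) := by
  classical
  have hsub : {ω : ι → Bool | Q (F.filter fun e => ω e = true)} ⊆
      ⋃ A ∈ F.powerset.filter Q, {ω | ∀ e ∈ F, ω e = true ↔ e ∈ A} := by
    intro ω hω
    simp only [mem_iUnion]
    refine ⟨F.filter fun e => ω e = true, ?_, ?_⟩
    · rw [Finset.mem_filter, Finset.mem_powerset]
      exact ⟨Finset.filter_subset _ _, hω⟩
    · intro e he
      simp [he]
  refine (measure_mono hsub).trans ((measure_biUnion_finset_le _ _).trans (le_of_eq ?_))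
  have hnn : ∀ A, 0 ≤ (∏ e ∈ A, P e) * ∏ e ∈ F \ A, (1 - P e) := fun A =>
    mul_nonneg (Finset.prod_nonneg fun e _ => (hP e).1)
      (Finset.prod_nonneg fun e _ => sub_nonneg.2 (hP e).2)
  unfold Ex
  rw [ENNReal.ofReal_sum_of_nonneg (fun A _ => mul_nonneg (hnn A) (ind_nonneg _)),
    Finset.sum_filter]
  refine Finset.sum_congr rfl fun A hA => ?_
  split_ifs with hQ
  · rw [bern_cyl hP (Finset.mem_powerset.1 hA), ind_true hQ, mul_one]
    congr!
  · rw [ind_false hQ, mul_zero, ENNReal.ofReal_zero]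

/-! ### Transfer to the slab measure -/

lemma dvec_ne (i j : Fin 3) (v w : Vtx) (h1 : v = w + dvec j) (h2 : v + dvec i = w) : False := by
  have a1 := congrArg Prod.fst h1
  have a2 := congrArg (fun z : Vtx => z.2.1) h1
  have a3 := congrArg (fun z : Vtx => z.2.2) h1
  have b1 := congrArg Prod.fst h2
  have b2 := congrArg (fun z : Vtx => z.2.1) h2
  have b3 := congrArg (fun z : Vtx => z.2.2) h2
  fin_cases i <;> fin_cases j <;> simp [dvec] at * <;> omega

/-- The undirected edge of an edge index. -/
def sig : EdgeIdx ↪ Sym2 Vtx := ⟨fun e => s(e.1, e.1 + dvec e.2), by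
  rintro ⟨v, i⟩ ⟨w, j⟩ h
  rcases Sym2.eq_iff.1 h with ⟨h1, h2⟩ | ⟨h1, h2⟩
  · simp only at h1 h2
    subst h1
    have h3 : dvec i = dvec j := add_left_cancel h2
    have : i = j := by
      fin_cases i <;> fin_cases j <;> simp_all [dvec]
    rw [this]
  · exact (dvec_ne i j v w h1 h2).elim⟩

lemma sig_apply (e : EdgeIdx) : sig e = s(e.1, e.1 + dvec e.2) := rfl

lemma Pv_sig (p q : ℝ) (e : EdgeIdx) : Pv p q (sig e) = if e.2 = 2 then q else p := by
  obtain ⟨⟨a, b, c⟩, i⟩ := e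
  rw [sig_apply]
  split_ifs with h
  · refine Pv_vert ?_
    simp only at h
    subst h
    simp [dvec]
  · refine Pv_hor ?_
    fin_cases i <;> simp [dvec] at *

/-- Edge indices inside a finite set. -/
noncomputable def eIdx (S : Finset Vtx) : Finset EdgeIdx :=
  (S ×ˢ (Finset.univ : Finset (Fin 3))).filter (fun e => e.1 + dvec e.2 ∈ S)

lemma mem_eIdx {S : Finset Vtx} {e : EdgeIdx} : e ∈ eIdx S ↔ e.1 ∈ S ∧ e.1 + dvec e.2 ∈ S := by
  simp [eIdx]

lemma adj_dvec {k : ℕ} {v : Vtx} {i : Fin 3} (h1 : 0 ≤ v.2.2 ∧ v.2.2 ≤ k)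
    (h2 : 0 ≤ (v + dvec i).2.2 ∧ (v + dvec i).2.2 ≤ k) : (G3 k).Adj v (v + dvec i) := by
  rw [G3_adj]
  refine ⟨h1, h2, ?_⟩
  fin_cases i <;> simp [dvec]

lemma exists_dvec {k : ℕ} {v w : Vtx} (h : (G3 k).Adj v w) :
    ∃ i, w = v + dvec i ∨ v = w + dvec i := by
  rw [G3_adj] at h
  obtain ⟨a, b, c⟩ := v
  obtain ⟨a', b', c'⟩ := w
  obtain ⟨-, -, h⟩ := h
  simp only at h
  rcases h with ⟨h1, h2, h3⟩ | ⟨h1, h2, h3⟩ | ⟨h1, h2, h3⟩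
  · exact ⟨0, by simp [dvec, h1, h2]; omega⟩
  · exact ⟨1, by simp [dvec, h1, h2]; omega⟩
  · exact ⟨2, by simp [dvec, h1, h2]; omega⟩

lemma edges_eq_map (k : ℕ) (B : Finset (ℤ × ℤ)) :
    edges (G3 k) (St k B) = (eIdx (St k B)).map sig := by
  ext z
  refine Sym2.inductionOn z fun x y => ?_
  rw [mk_mem_edges, Finset.mem_map]
  constructor
  · rintro ⟨⟨hx, hy⟩, hadj⟩
    obtain ⟨i, rfl | rfl⟩ := exists_dvec hadj
    · exact ⟨(x, i), mem_eIdx.2 ⟨hx, hy⟩, rfl⟩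
    · exact ⟨(y, i), mem_eIdx.2 ⟨hy, hx⟩, Sym2.eq_swap⟩
  · rintro ⟨⟨v, i⟩, he, h⟩
    rw [mem_eIdx] at he
    have hadj : (G3 k).Adj v (v + dvec i) := adj_dvec (mem_St.1 he.1).2 (mem_St.1 he.2).2
    rw [sig_apply] at h
    rcases Sym2.eq_iff.1 h with ⟨h1, h2⟩ | ⟨h1, h2⟩
    · simp only at h1 h2
      subst h1; subst h2
      exact ⟨he, hadj⟩
    · simp only at h1 h2
      subst h1; subst h2
      exact ⟨he.symm, hadj.symm⟩

lemma infinite_reach {k : ℕ} {ω : Config} {M : ℤ} (hM : 1 ≤ M) (h : (cluster k ω 0).Infinite) :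
    Reach (((eIdx (St k (box M))).filter fun e => ω e = true).map sig) (T3 M) 0 := by
  set η := ((eIdx (St k (box M))).filter fun e => ω e = true).map sig with hη
  obtain ⟨y, hy, hyS⟩ := h.exists_notMem_finset (St k (box (M - 1)))
  have key : ∀ y, Relation.ReflTransGen (OpenAdj k ω) 0 y →
      Reach η (T3 M) 0 ∨ (Conn η 0 y ∧ y ∈ St k (box (M - 1))) := by
    intro y hy
    induction hy with
    | refl =>
      refine Or.inr ⟨Conn.refl _ _, ?_⟩
      rw [mem_St, mem_rect]
      simp only [Prod.fst_zero, Prod.snd_zero]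
      omega
    | @tail b c _ hbc ih =>
      rcases ih with h | ⟨hc, hb⟩
      · exact Or.inl h
      have hbS : b ∈ St k (box M) := by
        rw [mem_St, mem_rect] at hb ⊢
        simp only at hb ⊢
        omega
      have step : c ∈ St k (box M) ∧ s(b, c) ∈ η := by
        have hnear : (G3 k).Adj b c → c ∈ St k (box M) := by
          intro hadj
          rw [G3_adj] at hadj
          rw [mem_St, mem_rect] at hb ⊢
          simp only at hb ⊢
          omega
        obtain ⟨i, ⟨rfl, he, ho⟩ | ⟨rfl, he, ho⟩⟩ := hbc
        · have hcS := hnear (adj_dvec he.1 he.2)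
          refine ⟨hcS, Finset.mem_map.2 ⟨(b, i), Finset.mem_filter.2 ⟨?_, ho⟩, rfl⟩⟩
          exact mem_eIdx.2 ⟨hbS, hcS⟩
        · have hcS := hnear (adj_dvec he.1 he.2).symm
          refine ⟨hcS, Finset.mem_map.2 ⟨(c, i), Finset.mem_filter.2 ⟨?_, ho⟩, Sym2.eq_swap⟩⟩
          exact mem_eIdx.2 ⟨hcS, hbS⟩
      have hcc : Conn η 0 c := hc.trans (Conn.single step.2)
      by_cases hcM : (c.1, c.2.1) ∈ Tn M
      · exact Or.inl ⟨c, hcM, hcc⟩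
      · refine Or.inr ⟨hcc, ?_⟩
        have h1 := mem_St.1 step.1
        exact mem_St.2 ⟨not_not.1 hcM, h1.2⟩
  rcases key y hy with h | h
  · exact h
  · exact (hyS h.2).elim

lemma theta_le {k : ℕ} {p q : ℝ} (hp : p ∈ Icc (0:ℝ) 1) (hq : q ∈ Icc (0:ℝ) 1) {M : ℤ}
    (hM : 1 ≤ M) : theta k p q ≤
      ENNReal.ofReal (Ex (Pv p q) (edges (G3 k) (St k (box M))) (fun ω => ind (Reach ω (T3 M) 0))) := by
  rw [edges_eq_map, Ex_map]
  have hP : ∀ e : EdgeIdx, (if e.2 = 2 then q else p) ∈ Icc (0:ℝ) 1 := by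
    intro e; split_ifs <;> assumption
  have h := bern_event hP (eIdx (St k (box M))) (fun A => Reach (A.map sig) (T3 M) 0)
  simp only [Pv_sig]
  refine le_trans (measure_mono ?_) h
  intro ω hω
  exact infinite_reach hM hω

theorem qc_pos (k : ℕ) (p : ℝ) (hp : p ∈ Set.Ico (pCrit k) (1 / 2)) : 0 < qc k p := by
  have hc : 0 ≤ pCrit k := by
    unfold pCrit
    have := Real.rpow_le_one (x := (1 / 2 : ℝ)) (z := (1 : ℝ) / (k + 1)) (by norm_num)
      (by norm_num) (by positivity)
    linarith
  have hp0 : 0 ≤ p := hc.trans hp.1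
  obtain ⟨q, hq0, hq1, hdec⟩ := slab_decay hp0 hp.2 k
  have hth : theta k p q = 0 := by
    refine le_antisymm (ENNReal.le_of_forall_pos_le_add fun ε hε _ => ?_) zero_le
    obtain ⟨M, hM, hE⟩ := hdec ε (by exact_mod_cast hε)
    refine (theta_le ⟨hp0, by linarith [hp.2]⟩ ⟨hq0.le, hq1⟩ hM).trans ?_
    rw [zero_add]
    exact (ENNReal.ofReal_le_ofReal hE).trans (by rw [ENNReal.ofReal_coe_nnreal])
  refine lt_of_lt_of_le hq0 (le_csSup ⟨1, fun x hx => hx.1.2⟩ ⟨⟨hq0.le, hq1⟩, hth⟩)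

end AnisoSlab
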